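/- arXiv:2407.13634 — 10 statements merged into one kernel-verified Lean document; each statement's English description precedes it below -/
import Mathlib

section
/- If an allocation (A_1,…,A_n) of indivisible items to n agents with additive valuations is EF^{+0}_{-v}, then for every integer w with 0 ≤ w ≤ v the allocation is EF^{+w}_{-(v-w)}. -/
open Finset

/-- `A` is an ordered partition of the item set `M` into `n` bundles. -/
def IsPartition {ι : Type*} [DecidableEq ι] {n : ℕ} (M : Finset ι)
    (A : Fin n → Finset ι) : Prop :=
  (∀ i, A i ⊆ M) ∧ (∀ i j, i ≠ j → Disjoint (A i) (A j)) ∧ (∀ g ∈ M, ∃ i, g ∈ A i)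

/-- The allocation `A` of the items `M` is EF^{+u}_{-w} for the additive valuations `v`:
for every pair of agents `i`, `j` there are `Si ⊆ M` disjoint from `A i` with `|Si| ≤ u`
and `Sj ⊆ A j` with `|Sj| ≤ w` such that `vᵢ(A i ∪ Si) ≥ vᵢ(A j \ Sj)`. -/
def EFpm {ι : Type*} [DecidableEq ι] {n : ℕ} (M : Finset ι) (v : Fin n → ι → ℝ)
    (A : Fin n → Finset ι) (u w : ℕ) : Prop :=
  ∀ i j : Fin n, ∃ Si Sj : Finset ι,
    Si ⊆ M ∧ Disjoint Si (A i) ∧ Si.card ≤ u ∧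
    Sj ⊆ A j ∧ Sj.card ≤ w ∧
    ∑ g ∈ A j \ Sj, v i g ≤ ∑ g ∈ A i ∪ Si, v i g

/-- If an allocation is EF^{+0}_{-v} then for every `0 ≤ w ≤ v` it is EF^{+w}_{-(v-w)}. -/
theorem EFpm_zero_sub_implies_add_sub {ι : Type*} [DecidableEq ι] {n : ℕ}
    (M : Finset ι) (v : Fin n → ι → ℝ) (hv : ∀ i g, 0 ≤ v i g)
    (A : Fin n → Finset ι) (hA : IsPartition M A)
    (vv w : ℕ) (hw : w ≤ vv)
    (h : EFpm M v A 0 vv) : EFpm M v A w (vv - w) := by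
  intro i j
  by_cases hij : i = j
  · subst hij
    exact ⟨∅, ∅, by simp, by simp, by simp, by simp, by simp, by simp⟩
  obtain ⟨S0, S, -, -, hS0, hS, hSc, hle⟩ := h i j
  have hS0' : S0 = ∅ := by
    rw [← Finset.card_eq_zero]
    omega
  subst hS0'
  rw [Finset.union_empty] at hle
  obtain ⟨T, hTS, hTc⟩ := Finset.exists_subset_card_eq (s := S) (n := min w S.card)
    (min_le_right _ _)
  have hdis : Disjoint T (A i) :=
    Finset.disjoint_of_subset_left (hTS.trans hS) (hA.2.1 j i (Ne.symm hij))
  refine ⟨T, S \ T, (hTS.trans hS).trans (hA.1 j), hdis, ?_, Finset.sdiff_subset.trans hS, ?_, ?_⟩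
  · omega
  · rw [Finset.card_sdiff_of_subset hTS]
    omega
  · rw [Finset.sum_union hdis.symm]
    have hsub : A j \ (S \ T) ⊆ (A j \ S) ∪ T := by
      intro x hx
      simp only [Finset.mem_sdiff, Finset.mem_union] at hx ⊢
      tauto
    have hd : Disjoint (A j \ S) T :=
      Finset.disjoint_of_subset_right hTS Finset.sdiff_disjoint
    have h1 := Finset.sum_le_sum_of_subset_of_nonneg (f := v i) hsub (fun g _ _ => hv i g)
    rw [Finset.sum_union hd] at h1
    linarith
end

section
/- For any two additive valuations v_1, v_2 over a finite set M of indivisible items, there exists a partition (X,Y) of M such that both allocations (A_1,A_2) = (X,Y) and (A_1,A_2) = (Y,X) are EF1. -/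
open Finset

theorem color_free {α : Type*} (σ τ : Equiv.Perm α) (hσ : ∀ x, σ (σ x) = x)
    (hτ : ∀ x, τ (τ x) = x) (fσ : ∀ x, σ x ≠ x) (fτ : ∀ x, τ x ≠ x) :
    ∃ f : α → Bool, (∀ x, f (σ x) ≠ f x) ∧ (∀ x, f (τ x) ≠ f x) := by
  classical
  set ρ : Equiv.Perm α := σ * τ with hρ
  have hσσ : σ * σ = 1 := Equiv.ext hσ
  have hττ : τ * τ = 1 := Equiv.ext hτ
  have hσi : σ⁻¹ = σ := inv_eq_of_mul_eq_one_left hσσ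
  have hτi : τ⁻¹ = τ := inv_eq_of_mul_eq_one_left hττ
  have conj1 : σ * ρ * σ⁻¹ = ρ⁻¹ := by
    rw [hρ, mul_inv_rev, hτi, hσi, ← mul_assoc, hσσ, one_mul]
  have conj : ∀ k : ℤ, ∀ x, σ ((ρ ^ k) x) = (ρ ^ (-k)) (σ x) := by
    intro k x
    have h : σ * ρ ^ k * σ⁻¹ = ρ ^ (-k) := by
      rw [← conj_zpow, conj1, inv_zpow, zpow_neg]
    rw [← h]
    simp
  have key : ∀ x, ¬ ρ.SameCycle x (σ x) := by
    rintro x ⟨k, hk⟩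
    rcases Int.even_or_odd' k with ⟨m, rfl | rfl⟩
    · apply fσ ((ρ ^ m) x)
      rw [conj, ← hk, ← Equiv.Perm.mul_apply, ← zpow_add]
      congr 2
      ring
    · apply fτ ((ρ ^ m) x)
      apply σ.injective
      rw [conj, ← hk, ← Equiv.Perm.mul_apply (ρ ^ (-m)), ← zpow_add]
      have : -m + (2 * m + 1) = 1 + m := by ring
      rw [this, zpow_add, zpow_one]
      rfl
  have comp : ∀ x y, ρ.SameCycle x y → ρ.SameCycle (σ x) (σ y) := by
    rintro x y ⟨k, rfl⟩
    exact ⟨-k, (conj k x).symm⟩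
  let s := Equiv.Perm.SameCycle.setoid ρ
  let q : α → Quotient s := Quotient.mk s
  letI : LinearOrder (Quotient s) := linearOrderOfSTO WellOrderingRel
  have hne : ∀ x, q x ≠ q (σ x) := fun x h => key x (Quotient.exact h)
  have hcol : ∀ x, decide (q (σ x) < q (σ (σ x))) ≠ decide (q x < q (σ x)) := by
    intro x
    rw [hσ]
    rcases lt_or_gt_of_ne (hne x) with h | h <;> simp [h, h.le, h.not_gt]
  refine ⟨fun x => decide (q x < q (σ x)), hcol, ?_⟩
  intro x
  have e1 : q (σ (τ x)) = q x := Quotient.sound (Equiv.Perm.SameCycle.symm ⟨1, by simp [hρ]⟩)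
  have e2 : q (τ x) = q (σ x) := by
    apply Quotient.sound
    have := comp x (σ (τ x)) ⟨1, by simp [hρ]⟩
    rw [hσ] at this
    exact this.symm
  have := hcol x
  rw [hσ] at this
  simpa only [e1, e2] using this

theorem color {α : Type*} (σ τ : α → α) (hσ : ∀ x, σ (σ x) = x)
    (hτ : ∀ x, τ (τ x) = x) :
    ∃ f : α → Bool, (∀ x, σ x ≠ x → f (σ x) ≠ f x) ∧ (∀ x, τ x ≠ x → f (τ x) ≠ f x) := by
  classical
  have ext : ∀ σ : α → α, (∀ x, σ (σ x) = x) → ∃ σ' : Equiv.Perm (α × Bool),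
      (∀ x, σ' (σ' x) = x) ∧ (∀ x, σ' x ≠ x) ∧
      ∀ x, σ x ≠ x → σ' (x, false) = (σ x, false) := by
    intro σ hσ
    let g : α × Bool → α × Bool := fun p => if σ p.1 = p.1 then (p.1, !p.2) else (σ p.1, p.2)
    have hg : ∀ p, g (g p) = p := by
      rintro ⟨x, b⟩
      by_cases h : σ x = x
      · simp [g, h]
      · simp [g, h, hσ, Ne.symm h]
    refine ⟨⟨g, g, hg, hg⟩, hg, ?_, ?_⟩
    · rintro ⟨x, b⟩
      by_cases h : σ x = x
      · simp [g, h]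
      · simp [g, h]
    · intro x h
      simp [g, h]
  obtain ⟨s, hs, fs, es⟩ := ext σ hσ
  obtain ⟨t, ht, ft, et⟩ := ext τ hτ
  obtain ⟨f, h1, h2⟩ := color_free s t hs ht fs ft
  refine ⟨fun x => f (x, false), fun x hx => ?_, fun x hx => ?_⟩
  · have := h1 (x, false)
    rwa [es x hx] at this
  · have := h2 (x, false)
    rwa [et x hx] at this

theorem exists_pairing {ι : Type*} [Fintype ι] [DecidableEq ι] (w : ι → ℝ)
    (hw : ∀ g, 0 ≤ w g) :
    ∃ σ : ι → ι, (∀ x, σ (σ x) = x) ∧ ∀ f : ι → Bool, (∀ x, σ x ≠ x → f (σ x) ≠ f x) →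
      ∀ b, ∃ S : Finset ι, S ⊆ univ.filter (fun x => f x = b) ∧ S.card ≤ 1 ∧
        ∑ g ∈ univ.filter (fun x => f x = b) \ S, w g ≤
          ∑ g ∈ univ.filter (fun x => f x = !b), w g := by
  obtain ⟨n, r, hr⟩ : ∃ n : ℕ, ∃ r : ι ≃ Fin n, ∀ i j, i ≤ j → w (r.symm j) ≤ w (r.symm i) := by
    let e := Fintype.equivFin ι
    let u : Fin (Fintype.card ι) → ℝ := fun i => - w (e.symm i)
    refine ⟨_, e.trans (Tuple.sort u).symm, fun i j hij => ?_⟩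
    have := Tuple.monotone_sort u hij
    simpa [u] using this
  let p : Fin n → Fin n := fun i =>
    if i.1 % 2 = 0 then (if h : i.1 + 1 < n then ⟨i.1 + 1, h⟩ else i)
    else ⟨i.1 - 1, by omega⟩
  have hp : ∀ i, p (p i) = i := by
    intro i
    have := i.2
    ext
    simp only [p]
    grind
  have hp1 : ∀ i : Fin n, i.1 % 2 = 0 → i.1 + 1 < n → (p i).1 = i.1 + 1 := by
    intro i h h'
    simp [p, h, h']
  refine ⟨fun x => r.symm (p (r x)), fun x => by simp [hp], fun f hf b => ?_⟩
  have hf' : ∀ i j : Fin n, i.1 % 2 = 0 → j.1 = i.1 + 1 → f (r.symm j) ≠ f (r.symm i) := by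
    intro i j h hj
    have e : p i = j := Fin.ext (by rw [hp1 i h (by omega), hj])
    have := hf (r.symm i)
    simp only [Equiv.apply_symm_apply, e] at this
    apply this
    intro h
    have := r.symm.injective h
    rw [this] at hj
    omega
  -- the chosen partner in the previous pair
  have hφ : ∀ x : ι, ∃ y : ι, 2 ≤ (r x).1 → (r y).1 / 2 + 1 = (r x).1 / 2 ∧ f y = !b := by
    intro x
    by_cases h : 2 ≤ (r x).1
    · have hx := (r x).2
      let i : Fin n := ⟨2 * ((r x).1 / 2) - 2, by omega⟩
      let j : Fin n := ⟨2 * ((r x).1 / 2) - 2 + 1, by omega⟩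
      have hij := hf' i j (by simp only [i]; omega) rfl
      by_cases hi : f (r.symm i) = !b
      · exact ⟨r.symm i, fun _ => ⟨by simp only [Equiv.apply_symm_apply, i]; omega, hi⟩⟩
      · refine ⟨r.symm j, fun _ => ⟨by simp only [Equiv.apply_symm_apply, j]; omega, ?_⟩⟩
        revert hij hi
        cases f (r.symm i) <;> cases f (r.symm j) <;> cases b <;> simp
    · exact ⟨x, fun h' => absurd h' h⟩
  choose φ hφ using hφ
  have same : ∀ x y, f x = f y → (r x).1 / 2 = (r y).1 / 2 → x = y := by
    intro x y hxy h
    by_contra hne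
    have hne' : (r x).1 ≠ (r y).1 := fun h => hne (r.injective (Fin.ext h))
    rcases Nat.lt_or_gt_of_ne hne' with h' | h'
    · have := hf' (r x) (r y) (by omega) (by omega)
      simp [hxy] at this
    · have := hf' (r y) (r x) (by omega) (by omega)
      simp [hxy] at this
  refine ⟨univ.filter (fun x => f x = b ∧ (r x).1 < 2), ?_, ?_, ?_⟩
  · intro x
    simp +contextual
  · rw [Finset.card_le_one]
    intro x hx y hy
    simp only [mem_filter, mem_univ, true_and] at hx hy
    exact same x y (hx.1.trans hy.1.symm) (by omega)
  · have hmem : ∀ x ∈ univ.filter (fun x => f x = b) \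
        univ.filter (fun x => f x = b ∧ (r x).1 < 2), f x = b ∧ 2 ≤ (r x).1 := by
      intro x hx
      simp only [mem_sdiff, mem_filter, mem_univ, true_and, not_and, not_lt] at hx
      exact ⟨hx.1, hx.2 hx.1⟩
    have hinj : Set.InjOn φ (univ.filter (fun x => f x = b) \
        univ.filter (fun x => f x = b ∧ (r x).1 < 2) : Finset ι) := by
      intro x hx y hy hxy
      have hx := hmem x hx
      have hy := hmem y hy
      have h1 := (hφ x hx.2).1
      have h2 := (hφ y hy.2).1
      rw [hxy] at h1
      exact same x y (hx.1.trans hy.1.symm) (by omega)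
    calc _ ≤ ∑ g ∈ univ.filter (fun x => f x = b) \
        univ.filter (fun x => f x = b ∧ (r x).1 < 2), w (φ g) := by
          apply Finset.sum_le_sum
          intro x hx
          have h := (hφ x (hmem x hx).2).1
          have := hr (r (φ x)) (r x) (by rw [Fin.le_def]; omega)
          simpa using this
      _ = ∑ g ∈ (univ.filter (fun x => f x = b) \
        univ.filter (fun x => f x = b ∧ (r x).1 < 2)).image φ, w g :=
          (Finset.sum_image hinj).symm
      _ ≤ _ := by
          apply Finset.sum_le_sum_of_subset_of_nonneg
          · intro y hy
            obtain ⟨x, hx, rfl⟩ := Finset.mem_image.1 hy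
            simpa using (hφ x (hmem x hx).2).2
          · intro i _ _
            exact hw i

/-- For any two additive valuations over a finite item set there is a partition `(X, Xᶜ)`
such that both `(X, Xᶜ)` and `(Xᶜ, X)` are EF1 (= EF^{+0}_{-1}) allocations. -/
theorem exists_partition_both_orders_EF1 {ι : Type*} [Fintype ι] [DecidableEq ι]
    (v : Fin 2 → ι → ℝ) (hv : ∀ i g, 0 ≤ v i g) :
    ∃ X : Finset ι,
      EFpm Finset.univ v ![X, Xᶜ] 0 1 ∧ EFpm Finset.univ v ![Xᶜ, X] 0 1 := by
  obtain ⟨σ, hσ, h0⟩ := exists_pairing (v 0) (hv 0)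
  obtain ⟨τ, hτ, h1⟩ := exists_pairing (v 1) (hv 1)
  obtain ⟨f, fσ, fτ⟩ := color σ τ hσ hτ
  have H : ∀ i : Fin 2, ∀ b, ∃ S : Finset ι, S ⊆ univ.filter (fun x => f x = b) ∧ S.card ≤ 1 ∧
        ∑ g ∈ univ.filter (fun x => f x = b) \ S, v i g ≤
          ∑ g ∈ univ.filter (fun x => f x = !b), v i g := by
    intro i
    fin_cases i
    · exact h0 f fσ
    · exact h1 f fτ
  have hc : (univ.filter (fun x => f x = true))ᶜ = univ.filter (fun x => f x = false) := by
    ext x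
    simp
  have main : ∀ b, EFpm Finset.univ v
      ![univ.filter (fun x => f x = b), univ.filter (fun x => f x = !b)] 0 1 := by
    intro b i j
    by_cases hij : i = j
    · subst hij
      exact ⟨∅, ∅, by simp, by simp, by simp, by simp, by simp, by simp⟩
    · fin_cases i <;> fin_cases j
      · exact absurd rfl hij
      · obtain ⟨S, hS, hS1, hS2⟩ := H 0 (!b)
        exact ⟨∅, S, by simp, by simp, by simp, hS, hS1, by simpa using hS2⟩
      · obtain ⟨S, hS, hS1, hS2⟩ := H 1 b
        exact ⟨∅, S, by simp, by simp, by simp, hS, hS1, by simpa using hS2⟩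
      · exact absurd rfl hij
  refine ⟨univ.filter (fun x => f x = true), ?_, ?_⟩
  · rw [hc]
    exact main true
  · rw [hc]
    exact main false
end

section
/- For any two agents with additive valuations over a finite set M of indivisible items, there exists a finite probability distribution over allocations, each of which is EF1, under which every item is allocated to agent 1 with probability exactly 1/2 and to agent 2 with probability exactly 1/2; that is, the equal-division fractional allocation for two agents is EF1-realizable. -/
open Finset

/-- Two fixed-point-free involutions admit a common alternating two-colouring. -/
lemma exists_common_coloring {ι : Type*} [Finite ι] (s t : Equiv.Perm ι)
    (hs : s * s = 1) (ht : t * t = 1) (hsf : ∀ x, s x ≠ x) (htf : ∀ x, t x ≠ x) :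
    ∃ c : ι → Bool, (∀ x, c (s x) = !c x) ∧ (∀ x, c (t x) = !c x) := by
  have hsi : s⁻¹ = s := inv_eq_of_mul_eq_one_left hs
  have hti : t⁻¹ = t := inv_eq_of_mul_eq_one_left ht
  have hss : ∀ x, s (s x) = x := fun x => by rw [← Equiv.Perm.mul_apply, hs]; rfl
  have hconj1 : s * (s * t) * s⁻¹ = (s * t)⁻¹ := by
    rw [mul_inv_rev, hsi, hti, ← mul_assoc, hs, one_mul]
  have hconj : ∀ k : ℤ, s * (s * t) ^ k = (s * t) ^ (-k) * s := by
    intro k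
    have : s * (s * t) ^ k * s⁻¹ = (s * t) ^ (-k) := by
      rw [← conj_zpow, hconj1, inv_zpow, zpow_neg]
    rw [← this]; group
  have hne : ∀ x, ¬ (s * t).SameCycle x (s x) := by
    rintro x ⟨k, hk⟩
    rcases Int.even_or_odd' k with ⟨j, rfl | rfl⟩
    · apply hsf (((s * t) ^ j) x)
      rw [← Equiv.Perm.mul_apply, hconj, Equiv.Perm.mul_apply, ← hk, ← Equiv.Perm.mul_apply,
        ← zpow_add]
      congr 2; ring
    · apply htf (((s * t) ^ j) x)
      apply s.injective
      have h1 : s (((s * t) ^ j) x) = ((s * t) ^ (1 + j)) x := by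
        rw [← Equiv.Perm.mul_apply, hconj, Equiv.Perm.mul_apply, ← hk, ← Equiv.Perm.mul_apply,
          ← zpow_add]
        congr 2; ring
      rw [h1, zpow_add, zpow_one]; rfl
  let S := Equiv.Perm.SameCycle.setoid (s * t)
  let q : ι → Fin (Nat.card (Quotient S)) := fun x => Finite.equivFin (Quotient S) (Quotient.mk S x)
  have hq : ∀ x y, q x = q y ↔ (s * t).SameCycle x y := by
    intro x y
    simp only [q, EmbeddingLike.apply_eq_iff_eq]
    exact Quotient.eq
  have hst : ∀ x, q (t x) = q (s x) := by
    intro x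
    rw [hq]
    refine ⟨1, ?_⟩
    rw [zpow_one, Equiv.Perm.mul_apply, ← Equiv.Perm.mul_apply t t, ht]; rfl
  have hsq : ∀ x, q (s (t x)) = q x := by
    intro x
    rw [hq]
    refine ⟨-1, ?_⟩
    rw [zpow_neg_one, Equiv.Perm.inv_eq_iff_eq]; rfl
  have hqne : ∀ x, q x ≠ q (s x) := fun x h => hne x ((hq _ _).1 h)
  refine ⟨fun x => decide (q x < q (s x)), fun x => ?_, fun x => ?_⟩
  · have := hqne x
    simp only [hss]
    rw [Bool.eq_iff_iff]; simp; omega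
  · have := hqne x
    simp only [hst, hsq]
    rw [Bool.eq_iff_iff]; simp; omega

lemma class_bound {ι : Type*} [Fintype ι] {n : ℕ} (f : ι → ℝ) (hf : ∀ x, 0 ≤ f x)
    (e : Fin (n + 1) × Fin 2 ≃ ι)
    (hanti : ∀ (k : Fin n) (b b' : Fin 2), f (e (k.succ, b)) ≤ f (e (k.castSucc, b')))
    (c : ι → Bool) (hc : ∀ k, c (e (k, 1)) = !c (e (k, 0))) (b : Bool) :
    ∃ g, c g = b ∧
      ∑ x, (if c x = b then f x else 0) ≤ f g + ∑ x, (if c x = b then 0 else f x) := by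
  have key : ∀ k, ∃ r r' : Fin 2, c (e (k, r)) = b ∧
      (∑ a, (if c (e (k, a)) = b then f (e (k, a)) else 0) = f (e (k, r))) ∧
      (∑ a, (if c (e (k, a)) = b then 0 else f (e (k, a))) = f (e (k, r'))) := by
    intro k
    have := hc k
    by_cases h : c (e (k, 0)) = b
    · refine ⟨0, 1, h, ?_, ?_⟩ <;> simp [Fin.sum_univ_two, this, h]
    · have h' : (!c (e (k, 0))) = b := by
        revert h; cases c (e (k, 0)) <;> cases b <;> simp
      refine ⟨1, 0, by rw [this, h'], ?_, ?_⟩ <;> simp [Fin.sum_univ_two, this, h, h']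
  choose r r' h1 h2 h3 using key
  refine ⟨e (0, r 0), h1 0, ?_⟩
  rw [← e.sum_comp, ← e.sum_comp, Fintype.sum_prod_type, Fintype.sum_prod_type]
  simp only [h2, h3]
  rw [Fin.sum_univ_succ, Fin.sum_univ_castSucc (fun k => f (e (k, r' k)))]
  have := Finset.sum_le_sum (s := univ) (fun (k : Fin n) _ => hanti k (r k.succ) (r' k.castSucc))
  have := hf (e (Fin.last n, r' (Fin.last n)))
  linarith

lemma exists_sorted {ι : Type*} [Fintype ι] {n : ℕ} (f : ι → ℝ)
    (hcard : Fintype.card ι = (n + 1) * 2) :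
    ∃ e : Fin (n + 1) × Fin 2 ≃ ι,
      ∀ (k : Fin n) (b b' : Fin 2), f (e (k.succ, b)) ≤ f (e (k.castSucc, b')) := by
  let e0 := (Fintype.equivFinOfCardEq hcard).symm
  let g : Fin ((n + 1) * 2) → ℝ := fun k => - f (e0 k)
  have hm := Tuple.monotone_sort g
  refine ⟨finProdFinEquiv.trans ((Tuple.sort g).trans e0), fun k b b' => ?_⟩
  have := hm (a := finProdFinEquiv (k.castSucc, b')) (b := finProdFinEquiv (k.succ, b)) (by
    rw [Fin.le_def]; simp [finProdFinEquiv]; omega)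
  simpa [g] using this

/-- The involution swapping the members of each pair. -/
def pairSwap {ι : Type*} {n : ℕ} (e : Fin n × Fin 2 ≃ ι) : Equiv.Perm ι :=
  e.symm.trans (((Equiv.refl (Fin n)).prodCongr (Equiv.swap (0 : Fin 2) 1)).trans e)

lemma pairSwap_sq {ι : Type*} {n : ℕ} (e : Fin n × Fin 2 ≃ ι) :
    pairSwap e * pairSwap e = 1 := by
  ext x
  obtain ⟨⟨k, a⟩, rfl⟩ := e.surjective x
  simp [pairSwap]

lemma pairSwap_ne {ι : Type*} {n : ℕ} (e : Fin n × Fin 2 ≃ ι) (x : ι) :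
    pairSwap e x ≠ x := by
  obtain ⟨⟨k, a⟩, rfl⟩ := e.surjective x
  fin_cases a <;> simp [pairSwap]

lemma pairSwap_apply {ι : Type*} {n : ℕ} (e : Fin n × Fin 2 ≃ ι) (k : Fin n) :
    pairSwap e (e (k, 0)) = e (k, 1) := by
  simp [pairSwap]

lemma exists_balanced {ι : Type*} [Fintype ι] {n : ℕ} (f : Fin 2 → ι → ℝ)
    (hf : ∀ i x, 0 ≤ f i x) (hcard : Fintype.card ι = (n + 1) * 2) :
    ∃ c : ι → Bool, ∀ i b, ∃ g, c g = b ∧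
      ∑ x, (if c x = b then f i x else 0) ≤ f i g + ∑ x, (if c x = b then 0 else f i x) := by
  choose e he using fun i => exists_sorted (f i) hcard
  obtain ⟨c, h0, h1⟩ := exists_common_coloring (pairSwap (e 0)) (pairSwap (e 1))
    (pairSwap_sq _) (pairSwap_sq _) (pairSwap_ne _) (pairSwap_ne _)
  refine ⟨c, fun i b => class_bound (f i) (hf i) (e i) (he i) c (fun k => ?_) b⟩
  fin_cases i
  · exact (congrArg c (pairSwap_apply (e 0) k)).symm.trans (h0 _)
  · exact (congrArg c (pairSwap_apply (e 1) k)).symm.trans (h1 _)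

lemma exists_split {m : ℕ} (v : Fin 2 → Fin m → ℝ) (hv : ∀ i g, 0 ≤ v i g) :
    ∃ c : Fin m → Bool, ∀ i b, ∃ S : Finset (Fin m),
      S ⊆ univ.filter (fun x => c x = b) ∧ S.card ≤ 1 ∧
      ∑ x ∈ univ.filter (fun x => c x = b) \ S, v i x
        ≤ ∑ x ∈ univ.filter (fun x => ¬ c x = b), v i x := by
  rcases m with _ | n
  · exact ⟨fun _ => true, fun i b => ⟨∅, by simp, by simp, by simp⟩⟩
  obtain ⟨c, hc⟩ := exists_balanced (ι := Fin (n + 1) ⊕ Fin (n + 1)) (n := n)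
    (fun i => Sum.elim (v i) 0) (by rintro i (x | x) <;> simp [hv]) (by simp; ring)
  refine ⟨fun x => c (Sum.inl x), fun i b => ?_⟩
  obtain ⟨g, hg, h⟩ := hc i b
  simp only [Fintype.sum_sum_type, Sum.elim_inl, Sum.elim_inr, Pi.zero_apply, ite_self,
    Finset.sum_const_zero, add_zero] at h
  rw [← Finset.sum_filter] at h
  have h' : ∑ x : Fin (n + 1), (if c (Sum.inl x) = b then 0 else v i x)
      = ∑ x ∈ univ.filter (fun x => ¬ c (Sum.inl x) = b), v i x := by
    rw [Finset.sum_filter]; simp only [ite_not]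
  rw [h'] at h
  rcases g with g | g
  · have hsub : ({g} : Finset _) ⊆ univ.filter (fun x => c (Sum.inl x) = b) := by
      simpa using hg
    refine ⟨{g}, hsub, by simp, ?_⟩
    have := Finset.sum_sdiff (f := v i) hsub
    simp only [Finset.sum_singleton, Sum.elim_inl] at this h
    linarith
  · refine ⟨∅, by simp, by simp, ?_⟩
    simpa using h

/-- For two agents with additive valuations, the equal-division fractional allocation is
EF1-realizable: there is a finite probability distribution over EF1 allocations under which
every item goes to each agent with probability exactly 1/2. -/
theorem equal_division_EF1_realizable_two_agents {m : ℕ}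
    (v : Fin 2 → Fin m → ℝ) (hv : ∀ i g, 0 ≤ v i g) :
    ∃ (K : ℕ) (p : Fin K → ℝ) (A : Fin K → Fin 2 → Finset (Fin m)),
      (∀ k, 0 ≤ p k) ∧ (∑ k, p k = 1) ∧
      (∀ k, IsPartition Finset.univ (A k)) ∧
      (∀ k, EFpm Finset.univ v (A k) 0 1) ∧
      (∀ i g, ∑ k, (if g ∈ A k i then p k else 0) = 1 / 2) := by
  obtain ⟨c, hc⟩ := exists_split v hv
  refine ⟨2, fun _ => 1 / 2, fun k i => univ.filter (fun x => c x = decide (k = i)),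
    fun _ => by norm_num, by simp, fun k => ⟨fun i => by simp, ?_, ?_⟩, fun k i j => ?_, ?_⟩
  · intro i j hij
    rw [Finset.disjoint_left]
    intro x hx hy
    simp only [Finset.mem_filter, Finset.mem_univ, true_and] at hx hy
    rw [hx, decide_eq_decide] at hy
    omega
  · intro g _
    simp only [Finset.mem_filter, Finset.mem_univ, true_and]
    cases h : c g
    · exact ⟨k + 1, by fin_cases k <;> simp⟩
    · exact ⟨k, by simp⟩
  · by_cases hij : i = j
    · subst hij
      exact ⟨∅, ∅, by simp, by simp, by simp, by simp, by simp, by simp⟩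
    · obtain ⟨S, h1, h2, h3⟩ := hc i (decide (k = j))
      refine ⟨∅, S, by simp, by simp, by simp, h1, h2, ?_⟩
      have hb : decide (k = i) = !decide (k = j) := by
        rw [Bool.eq_iff_iff]; simp; omega
      simpa [hb, Bool.eq_not] using h3
  · intro i g
    rw [Fin.sum_univ_two]
    cases h : c g <;> fin_cases i <;> simp [h]
end

section
/- For three agents and any number m of items, there exists a fractional allocation rule F, mapping each profile (v_1,v_2,v_3) of additive valuations over the m items to a fractional allocation (x_{ig}) with x_{ig} ≥ 0 and ∑_{i=1}^3 x_{ig} = 1 for every item g, such that: (i) F is truthful, i.e., for every profile, every agent i, and every alternative valuation v'_i, agent i's expected utility ∑_g v_i(g)·x_{ig} under F applied to the true profile is at least her expected utility under F applied to the profile with v_i replaced by v'_i; and (ii) for every profile, the fractional allocation F(v_1,v_2,v_3) is EF^{+1}_{-1}-realizable. -/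
open Finset

/-- The fractional allocation `x` is EF^{+u}_{-w}-realizable for the valuations `v`:
it is the marginal of a finite probability distribution over EF^{+u}_{-w} allocations. -/
def Realizable {n m : ℕ} (v : Fin n → Fin m → ℝ) (u w : ℕ)
    (x : Fin n → Fin m → ℝ) : Prop :=
  ∃ (K : ℕ) (p : Fin K → ℝ) (A : Fin K → Fin n → Finset (Fin m)),
    (∀ k, 0 ≤ p k) ∧ (∑ k, p k = 1) ∧
    (∀ k, IsPartition Finset.univ (A k)) ∧
    (∀ k, EFpm Finset.univ v (A k) u w) ∧
    (∀ i g, ∑ k, (if g ∈ A k i then p k else 0) = x i g)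


noncomputable def mx {ι : Type*} (v : ι → ℝ) (S : Finset ι) : ℝ :=
  ((S.sup fun g => (v g).toNNReal : NNReal) : ℝ)

lemma mx_nonneg {ι : Type*} (v : ι → ℝ) (S : Finset ι) : 0 ≤ mx v S := NNReal.coe_nonneg _

lemma le_mx {ι : Type*} (v : ι → ℝ) {S : Finset ι} {g : ι} (hg : g ∈ S) : v g ≤ mx v S := by
  have h : (v g).toNNReal ≤ S.sup fun g => (v g).toNNReal :=
    Finset.le_sup (f := fun g => (v g).toNNReal) hg
  exact (Real.le_coe_toNNReal _).trans (NNReal.coe_le_coe.2 h)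

lemma mx_mono {ι : Type*} (v : ι → ℝ) {S T : Finset ι} (h : S ⊆ T) : mx v S ≤ mx v T :=
  NNReal.coe_le_coe.2 (Finset.sup_mono h)

lemma mx_exists {ι : Type*} (v : ι → ℝ) (hv : ∀ g, 0 ≤ v g) {S : Finset ι} (h : S.Nonempty) :
    ∃ g ∈ S, mx v S = v g := by
  obtain ⟨g, hg, h⟩ := Finset.exists_mem_eq_sup S h (fun g => (v g).toNNReal)
  exact ⟨g, hg, by rw [mx, h, Real.coe_toNNReal _ (hv g)]⟩

lemma mx_le {ι : Type*} (v : ι → ℝ) (hv : ∀ g, 0 ≤ v g) {S : Finset ι} {M : ℝ} (hM : 0 ≤ M)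
    (h : ∀ g ∈ S, v g ≤ M) : mx v S ≤ M := by
  rcases S.eq_empty_or_nonempty with rfl | hS
  · simpa [mx] using hM
  · obtain ⟨g, hg, e⟩ := mx_exists v hv hS
    rw [e]; exact h g hg

lemma sum_le_mx {ι : Type*} (v : ι → ℝ) {S T : Finset ι} (h : S ⊆ T) (hc : S.card ≤ 1) :
    ∑ g ∈ S, v g ≤ mx v T := by
  rcases S.eq_empty_or_nonempty with rfl | ⟨a, ha⟩
  · simpa using mx_nonneg v T
  · have : S = {a} := by
      apply Finset.eq_singleton_iff_unique_mem.2
      exact ⟨ha, fun b hb => Finset.card_le_one.1 hc b hb a ha⟩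
    rw [this, Finset.sum_singleton]
    exact le_mx v (h ha)

/-- One step of moving to a vertex. -/
lemma lp_step {κ : Type*} [Fintype κ] [DecidableEq κ] (x c : κ → ℝ)
    (hx : ∀ k, 0 ≤ x k ∧ x k ≤ 1) (hc : ∀ k, (x k = 0 ∨ x k = 1) → c k = 0)
    (hne : ∃ k, c k ≠ 0) :
    ∃ s : ℝ, (∀ k, 0 ≤ x k + s * c k ∧ x k + s * c k ≤ 1) ∧
      ∃ k, c k ≠ 0 ∧ (x k + s * c k = 0 ∨ x k + s * c k = 1) := by
  classical
  let ρ : κ → ℝ := fun k => if 0 < c k then (1 - x k) / c k else x k / (- c k)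
  obtain ⟨k0, hk0⟩ := hne
  obtain ⟨k, hk, hmin⟩ := Finset.exists_min_image (univ.filter fun k => c k ≠ 0) ρ ⟨k0, by simp [hk0]⟩
  simp only [mem_filter, mem_univ, true_and] at hk hmin
  have hρ : 0 ≤ ρ k := by
    simp only [ρ]; split_ifs with h
    · exact div_nonneg (by linarith [(hx k).2]) h.le
    · exact div_nonneg (hx k).1 (by linarith)
  refine ⟨ρ k, fun l => ?_, k, hk, ?_⟩
  · by_cases hl : c l = 0
    · simpa [hl] using hx l
    · have h1 := hmin l hl
      rcases lt_or_gt_of_ne hl with h | h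
      · have h2 : ρ l = x l / (- c l) := by simp [ρ, not_lt.2 h.le]
        rw [h2, le_div_iff₀ (by linarith)] at h1
        constructor
        · linarith
        · nlinarith [(hx l).2]
      · have h2 : ρ l = (1 - x l) / c l := by simp [ρ, h]
        rw [h2, le_div_iff₀ h] at h1
        constructor
        · nlinarith [(hx l).1]
        · linarith
  · rcases lt_or_gt_of_ne hk with h | h
    · left
      have h2 : ρ k = x k / (- c k) := by simp [ρ, not_lt.2 h.le]
      rw [h2]; field_simp; ring
    · right
      have h2 : ρ k = (1 - x k) / c k := by simp [ρ, h]
      rw [h2]; field_simp; ring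

lemma lp_aux {κ : Type*} [Fintype κ] [DecidableEq κ] (r : ℕ) (w : κ → Fin r → ℝ) (N : ℕ) :
    ∀ x : κ → ℝ, (∀ k, 0 ≤ x k ∧ x k ≤ 1) →
    (univ.filter fun k => x k ≠ 0 ∧ x k ≠ 1).card ≤ N →
    ∃ x' : κ → ℝ, (∀ k, 0 ≤ x' k ∧ x' k ≤ 1) ∧
      (∀ j, ∑ k, x' k * w k j = ∑ k, x k * w k j) ∧
      (univ.filter fun k => x' k ≠ 0 ∧ x' k ≠ 1).card ≤ r := by
  induction N with
  | zero => intro x hx hN; exact ⟨x, hx, fun _ => rfl, by omega⟩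
  | succ N ih =>
    intro x hx hN
    set S := univ.filter fun k => x k ≠ 0 ∧ x k ≠ 1 with hS
    by_cases hr : S.card ≤ r
    · exact ⟨x, hx, fun _ => rfl, hr⟩
    let f : (S → ℝ) →ₗ[ℝ] (Fin r → ℝ) :=
      { toFun := fun c j => ∑ k : S, c k * w k j
        map_add' := by
          intro a b; ext j; simp [add_mul, Finset.sum_add_distrib]
        map_smul' := by
          intro a b; ext j; simp [Finset.mul_sum, mul_assoc] }
    have hker : LinearMap.ker f ≠ ⊥ := by
      apply LinearMap.ker_ne_bot_of_finrank_lt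
      simp; omega
    obtain ⟨c, hc, hc0⟩ := (Submodule.ne_bot_iff _).1 hker
    let c' : κ → ℝ := fun k => if h : k ∈ S then c ⟨k, h⟩ else 0
    have hsum : ∀ j, ∑ k, c' k * w k j = 0 := by
      intro j
      have h1 : f c j = 0 := by rw [LinearMap.mem_ker.1 hc]; rfl
      have h2 : f c j = ∑ k : S, c k * w k j := rfl
      rw [← h1, h2, ← Finset.sum_subset (Finset.subset_univ S)]
      · rw [← Finset.sum_coe_sort S]
        apply Finset.sum_congr rfl
        intro k _; simp [c']
      · intro k _ hk; simp [c', hk]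
    obtain ⟨s, hs, k, hk, hk'⟩ := lp_step x c' hx (by
        intro k hk; simp only [c']; rw [dif_neg]; simp [hS]; tauto) (by
        obtain ⟨k, hk⟩ := Function.ne_iff.1 hc0
        exact ⟨k, by simpa [c'] using hk⟩)
    have hkS : k ∈ S := by by_contra h; simp [c', h] at hk
    obtain ⟨x', h1, h2, h3⟩ := ih (fun k => x k + s * c' k) hs (by
      have : (univ.filter fun k => x k + s * c' k ≠ 0 ∧ x k + s * c' k ≠ 1) ⊂ S := by
        rw [Finset.ssubset_iff_of_subset]
        · exact ⟨k, hkS, by simp; tauto⟩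
        · intro l hl
          by_contra h
          have hl0 : c' l = 0 := by simp [c', h]
          simp [hl0, hS] at hl h
          tauto
      have := Finset.card_lt_card this
      omega)
    refine ⟨x', h1, fun j => ?_, h3⟩
    rw [h2 j]
    simp only [add_mul, Finset.sum_add_distrib, mul_assoc, ← Finset.mul_sum, hsum j]
    simp

lemma lp_vertex {κ : Type*} [Fintype κ] [DecidableEq κ] (r : ℕ) (w : κ → Fin r → ℝ) (x : κ → ℝ)
    (hx : ∀ k, 0 ≤ x k ∧ x k ≤ 1) :
    ∃ x' : κ → ℝ, (∀ k, 0 ≤ x' k ∧ x' k ≤ 1) ∧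
      (∀ j, ∑ k, x' k * w k j = ∑ k, x k * w k j) ∧
      (univ.filter fun k => x' k ≠ 0 ∧ x' k ≠ 1).card ≤ r :=
  lp_aux r w _ x hx le_rfl

/-- Rounding up exactly the item `x` among the three fractional ones is good. -/
def Good1 (tx ty tz x y z : ℝ) : Prop :=
  3 * ((1 - tx) * x - ty * y - tz * z) ≤ 2 * x ∧
  -(3 * ((1 - tx) * x - ty * y - tz * z)) ≤ 2 * max y z

lemma D1 {tx ty tz x y z : ℝ} (hx : 0 ≤ x) (hy : 0 ≤ y) (hz : 0 ≤ z)
    (htx : 0 ≤ tx) (hty : 0 ≤ ty) (htz : 0 ≤ tz)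
    (ux : tx ≤ 2/3) (uy : ty ≤ 2/3) (uz : tz ≤ 2/3)
    (hxy : tx + ty ≤ 1) (hxz : tx + tz ≤ 1) (hyz : ty + tz ≤ 1) (hl : 1/3 ≤ tx + ty) :
    Good1 tx ty tz x y z ∨ Good1 ty tx tz y x z := by
  by_contra hcon
  simp only [Good1, not_or, not_and_or, not_le] at hcon
  have m1 := le_max_left y z
  have m2 := le_max_right y z
  have m3 := le_max_left x z
  have m4 := le_max_right x z
  have pxx := mul_nonneg htx hx
  have pxy := mul_nonneg htx hy
  have pyx := mul_nonneg hty hx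
  have pyy := mul_nonneg hty hy
  have pzz := mul_nonneg htz hz
  rcases hcon with ⟨h1 | h1, h2 | h2⟩
  · -- both positive
    have a1 : (1/3 - tx) * x > ty * y := by nlinarith
    have a2 : (1/3 - ty) * y > tx * x := by nlinarith
    rcases le_total x y with h | h
    · nlinarith [mul_nonneg (show 0 ≤ tx + ty - 1/3 by linarith) hy, mul_nonneg htx (sub_nonneg.2 h), mul_nonneg hty (sub_nonneg.2 h), mul_nonneg (show 0 ≤ tx + ty - 1/3 by linarith) hx]
    · nlinarith [mul_nonneg (show 0 ≤ tx + ty - 1/3 by linarith) hy, mul_nonneg htx (sub_nonneg.2 h), mul_nonneg hty (sub_nonneg.2 h), mul_nonneg (show 0 ≤ tx + ty - 1/3 by linarith) hx]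
  · nlinarith [mul_nonneg (show 0 ≤ 1 - ty by linarith) hy]
  · nlinarith [mul_nonneg (show 0 ≤ 1 - tx by linarith) hx]
  · have q1 := mul_nonneg (show 0 ≤ 2/3 - tz by linarith) hz
    rcases le_total tx (1/2) with h | h
    · rcases le_total ty (1/2) with h' | h'
      · nlinarith [mul_nonneg (show 0 ≤ 1/2 - tx by linarith) hx, mul_nonneg (show 0 ≤ 1/2 - ty by linarith) hy]
      · have q2 := mul_nonneg (show 0 ≤ 1/2 - tx by linarith) hx
        have q3 := mul_nonneg (show 0 ≤ 2/3 - ty by linarith) hy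
        have q4 := mul_nonneg (show 0 ≤ 1/2 - tz by linarith) hz
        nlinarith
    · have q2 := mul_nonneg (show 0 ≤ 1/2 - ty by linarith) hy
      have q3 := mul_nonneg (show 0 ≤ 2/3 - tx by linarith) hx
      have q4 := mul_nonneg (show 0 ≤ 1/2 - tz by linarith) hz
      nlinarith

/-- A rounding with exactly one item up is acceptable for a special agent. -/
lemma AB1 {tx ty tz x y z : ℝ} (hx : 0 ≤ x) (hy : 0 ≤ y) (hz : 0 ≤ z)
    (htx : 0 ≤ tx) (hty : 0 ≤ ty) (htz : 0 ≤ tz) (uy : ty ≤ 2/3) (uz : tz ≤ 2/3)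
    (hyz : ty + tz ≤ 1) (hx1 : tx ≤ 1) :
    ((1 - tx) * x - ty * y - tz * z ≤ x ∧
      -(3 * ((1 - tx) * x - ty * y - tz * z)) ≤ 2 * max y z) ∨
    ((1 - tx) * x - ty * y - tz * z ≤ 0 ∧ 
      -(3 * ((1 - tx) * x - ty * y - tz * z)) ≤ 2 * max y z + min y z) := by
  have pyy := mul_nonneg hty hy
  have pzz := mul_nonneg htz hz
  have pxx := mul_nonneg htx hx
  have pxx' := mul_nonneg (sub_nonneg.2 hx1) hx
  by_cases h : -(3 * ((1 - tx) * x - ty * y - tz * z)) ≤ 2 * max y z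
  · left; refine ⟨by nlinarith, h⟩
  · right
    push Not at h
    have m1 := le_max_left y z
    refine ⟨by linarith, ?_⟩
    rcases le_total y z with h | h
    · rw [max_eq_right h, min_eq_left h]
      nlinarith [mul_nonneg (show 0 ≤ 1 - ty - tz by linarith) hy, mul_nonneg (show 0 ≤ 2/3 - tz by linarith) (sub_nonneg.2 h)]
    · rw [max_eq_left h, min_eq_right h]
      nlinarith [mul_nonneg (show 0 ≤ 1 - ty - tz by linarith) hz, mul_nonneg (show 0 ≤ 2/3 - ty by linarith) (sub_nonneg.2 h)]

/-- A rounding with exactly one item (`z`) down, seen through `1 - t`. -/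
lemma A2 {tx ty tz x y z : ℝ} (hx : 0 ≤ x) (hy : 0 ≤ y) (hz : 0 ≤ z)
    (htz : 0 ≤ tz) (hx1 : tx ≤ 1) (hy1 : ty ≤ 1) (hxy : 1 ≤ tx + ty) :
    (1 - tx) * x + (1 - ty) * y - tz * z ≤ max x y := by
  have m1 := le_max_left x y
  have m2 := le_max_right x y
  have pzz := mul_nonneg htz hz
  have := mul_le_mul_of_nonneg_left m1 (sub_nonneg.2 hx1)
  have := mul_le_mul_of_nonneg_left m2 (sub_nonneg.2 hy1)
  nlinarith [mul_nonneg (show 0 ≤ tx + ty - 1 by linarith) (hx.trans m1)]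

lemma D2 {ta tb tc a b c : ℝ} (ha : 0 ≤ a) (hb : 0 ≤ b) (hc : 0 ≤ c)
    (hta : 0 ≤ ta) (htb : 0 ≤ tb) (htc : 0 ≤ tc) (ua : ta ≤ 1) (ub : tb ≤ 1)
    (h1 : 1/3 ≤ ta) (h2 : tc ≤ 2/3) :
    Good1 ta tb tc a b c ∨ Good1 (1 - tc) (1 - ta) (1 - tb) c a b := by
  by_contra hcon
  simp only [Good1, not_or, not_and_or, not_le] at hcon
  have m1 := le_max_left b c
  have m2 := le_max_right b c
  have m3 := le_max_left a b
  have m4 := le_max_right a b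
  have p1 := mul_nonneg htb hb
  have p2 := mul_nonneg htc hc
  have p3 := mul_nonneg (sub_nonneg.2 ua) ha
  have p4 := mul_nonneg (sub_nonneg.2 ub) hb
  have p5 := mul_nonneg (sub_nonneg.2 h1) ha
  have p6 := mul_nonneg (sub_nonneg.2 h2) hc
  rcases hcon with ⟨h1 | h1, h2 | h2⟩ <;> nlinarith

/-- The acceptable outcome of rounding for the special agent: `e` is the error, `mU` bounds
the items rounded up, `y,z` are two items rounded down. -/
lemma good1_of_sum {tx ty tz x y z : ℝ} (hx : 0 ≤ x) (hy : 0 ≤ y) (hz : 0 ≤ z)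
    (hty : 0 ≤ ty) (htz : 0 ≤ tz) (hx1 : tx ≤ 1) (h1 : 1/3 ≤ tx) (h2 : ty + tz ≤ 2/3) :
    Good1 tx ty tz x y z := by
  have m1 := le_max_left y z
  have m2 := le_max_right y z
  have p1 := mul_nonneg hty hy
  have p2 := mul_nonneg htz hz
  have p3 := mul_nonneg (sub_nonneg.2 hx1) hx
  have p4 := mul_nonneg (sub_nonneg.2 h1) hx
  have := mul_le_mul_of_nonneg_left m1 hty
  have := mul_le_mul_of_nonneg_left m2 htz
  constructor
  · nlinarith
  · nlinarith [mul_nonneg (show 0 ≤ 2/3 - ty - tz by linarith) (hy.trans m1)]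

lemma sum_le_max3 {tx ty tz x y z : ℝ} (hx : 0 ≤ x)
    (htx : 0 ≤ tx) (hty : 0 ≤ ty) (htz : 0 ≤ tz) (h : tx + ty + tz ≤ 2/3) :
    3 * (tx * x + ty * y + tz * z) ≤ 2 * max x (max y z) := by
  have m1 := le_max_left x (max y z)
  have m2 := (le_max_left y z).trans (le_max_right x _)
  have m3 := (le_max_right y z).trans (le_max_right x _)
  have := mul_le_mul_of_nonneg_left m1 htx
  have := mul_le_mul_of_nonneg_left m2 hty
  have := mul_le_mul_of_nonneg_left m3 htz
  nlinarith [mul_nonneg (show 0 ≤ 2/3 - tx - ty - tz by linarith) (hx.trans m1)]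

/-- If an agent dislikes rounding down only `z`, she likes rounding everything up. -/
lemma all_of_neg {tx ty tz x y z : ℝ} (hz : 0 ≤ z)
    (h : 2 * z < -(3 * ((1 - tx) * x + (1 - ty) * y - tz * z))) :
    3 * ((1 - tx) * x + (1 - ty) * y + (1 - tz) * z) ≤ 2 * max x (max y z) := by
  have m3 := (le_max_right y z).trans (le_max_right x _)
  nlinarith

/-- Error of rounding `U` up and `D` down. -/
noncomputable def Err {ι : Type*} (v t : ι → ℝ) (U D : Finset ι) : ℝ :=
  ∑ g ∈ U, (1 - t g) * v g - ∑ g ∈ D, t g * v g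

def GoodE {ι : Type*} (v : ι → ℝ) (e : ℝ) (U D : Finset ι) : Prop :=
  3 * e ≤ 2 * mx v U ∧ -(3 * e) ≤ 2 * mx v D

def SpecE {ι : Type*} (v : ι → ℝ) (e : ℝ) (U D : Finset ι) : Prop :=
  (e ≤ mx v U ∧ -(3 * e) ≤ 2 * mx v D) ∨
  (e ≤ 0 ∧ ∃ y z, y ∈ D ∧ z ∈ D ∧ y ≠ z ∧ v z ≤ v y ∧ -(3 * e) ≤ 2 * v y + v z)

lemma spec_of_good {ι : Type*} {v : ι → ℝ} {e : ℝ} {U D : Finset ι} (h : GoodE v e U D) :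
    SpecE v e U D := by
  left; exact ⟨by linarith [h.1, mx_nonneg v U], h.2⟩

lemma GoodE.mono {ι : Type*} {v : ι → ℝ} {e : ℝ} {U D U' D' : Finset ι} (h : GoodE v e U D)
    (hU : U ⊆ U') (hD : D ⊆ D') : GoodE v e U' D' :=
  ⟨by linarith [h.1, mx_mono v hU], by linarith [h.2, mx_mono v hD]⟩

lemma SpecE.mono {ι : Type*} {v : ι → ℝ} {e : ℝ} {U D U' D' : Finset ι} (h : SpecE v e U D)
    (hU : U ⊆ U') (hD : D ⊆ D') : SpecE v e U' D' := by
  rcases h with h | ⟨h, y, z, hy, hz, h'⟩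
  · left; exact ⟨by linarith [h.1, mx_mono v hU], by linarith [h.2, mx_mono v hD]⟩
  · right; exact ⟨h, y, z, hD hy, hD hz, h'⟩

section Step1
variable {ι : Type*} [DecidableEq ι] {v t : ι → ℝ} {x y z : ι}

lemma err_single (hyz : y ≠ z) : Err v t {x} {y, z} =
    (1 - t x) * v x - t y * v y - t z * v z := by
  simp [Err, Finset.sum_pair hyz]; ring

lemma err_double (hxy : x ≠ y) : Err v t {x, y} {z} =
    (1 - t x) * v x + (1 - t y) * v y - t z * v z := by
  simp [Err, Finset.sum_pair hxy]

lemma max_le_mx_pair : max (v x) (v y) ≤ mx v {x, y} :=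
  max_le (le_mx v (by simp)) (le_mx v (by simp))

lemma max3_le_mx : max (v x) (max (v y) (v z)) ≤ mx v {x, y, z} :=
  max_le (le_mx v (by simp)) (max_le (le_mx v (by simp)) (le_mx v (by simp)))

lemma le_mx_single : v x ≤ mx v {x} := le_mx v (by simp)

lemma good_single (hyz : y ≠ z) (h : Good1 (t x) (t y) (t z) (v x) (v y) (v z)) :
    GoodE v (Err v t {x} {y, z}) {x} {y, z} := by
  rw [err_single hyz]
  exact ⟨by linarith [h.1, le_mx_single (v := v) (x := x)],
    by linarith [h.2, max_le_mx_pair (v := v) (x := y) (y := z)]⟩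

lemma good_double (hxy : x ≠ y)
    (h : Good1 (1 - t z) (1 - t x) (1 - t y) (v z) (v x) (v y)) :
    GoodE v (Err v t {x, y} {z}) {x, y} {z} := by
  rw [err_double hxy]
  exact ⟨by linarith [h.2, max_le_mx_pair (v := v) (x := x) (y := y)],
    by linarith [h.1, le_mx_single (v := v) (x := z)]⟩

lemma spec_single (hv : ∀ g, 0 ≤ v g) (ht : ∀ g, 0 ≤ t g ∧ t g ≤ 1) (hyz : y ≠ z)
    (uy : t y ≤ 2/3) (uz : t z ≤ 2/3) (h : t y + t z ≤ 1) :
    SpecE v (Err v t {x} {y, z}) {x} {y, z} := by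
  rw [err_single hyz]
  rcases AB1 (hv x) (hv y) (hv z) (ht x).1 (ht y).1 (ht z).1 uy uz h (ht x).2 with h | h
  · left
    exact ⟨h.1.trans le_mx_single, by linarith [h.2, max_le_mx_pair (v := v) (x := y) (y := z)]⟩
  · right
    refine ⟨h.1, ?_⟩
    rcases le_total (v y) (v z) with h' | h'
    · refine ⟨z, y, by simp, by simp, hyz.symm, h', ?_⟩
      have := h.2; rwa [max_eq_right h', min_eq_left h'] at this
    · refine ⟨y, z, by simp, by simp, hyz, h', ?_⟩
      have := h.2; rwa [max_eq_left h', min_eq_right h'] at this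

lemma spec_double (hv : ∀ g, 0 ≤ v g) (ht : ∀ g, 0 ≤ t g ∧ t g ≤ 1) (hxy : x ≠ y)
    (h : 1 ≤ t x + t y)
    (hN : ¬ 2 * v z < -(3 * ((1 - t x) * v x + (1 - t y) * v y - t z * v z))) :
    SpecE v (Err v t {x, y} {z}) {x, y} {z} := by
  rw [err_double hxy]
  left
  exact ⟨(A2 (hv x) (hv y) (hv z) (ht z).1 (ht x).2 (ht y).2 h).trans max_le_mx_pair,
    by linarith [le_mx_single (v := v) (x := z)]⟩

lemma good_all (hv : ∀ g, 0 ≤ v g) (ht : ∀ g, 0 ≤ t g ∧ t g ≤ 1) (hxy : x ≠ y) (hxz : x ≠ z)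
    (hyz : y ≠ z)
    (h : 3 * ((1 - t x) * v x + (1 - t y) * v y + (1 - t z) * v z) ≤
      2 * max (v x) (max (v y) (v z))) :
    GoodE v (Err v t {x, y, z} ∅) {x, y, z} ∅ := by
  have : Err v t {x, y, z} ∅ = (1 - t x) * v x + (1 - t y) * v y + (1 - t z) * v z := by
    rw [Err, Finset.sum_insert (by simp [hxy, hxz]), Finset.sum_pair hyz]; simp; ring
  rw [this]
  have p : ∀ g, 0 ≤ (1 - t g) * v g := fun g => mul_nonneg (sub_nonneg.2 (ht g).2) (hv g)
  exact ⟨by linarith [max3_le_mx (v := v) (x := x) (y := y) (z := z)],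
    by linarith [p x, p y, p z, mx_nonneg v ∅]⟩

lemma good_none (hv : ∀ g, 0 ≤ v g) (ht : ∀ g, 0 ≤ t g ∧ t g ≤ 1) (hxy : x ≠ y) (hxz : x ≠ z)
    (hyz : y ≠ z)
    (h : 3 * (t x * v x + t y * v y + t z * v z) ≤ 2 * max (v x) (max (v y) (v z))) :
    GoodE v (Err v t ∅ {x, y, z}) ∅ {x, y, z} := by
  have : Err v t ∅ {x, y, z} = -(t x * v x + t y * v y + t z * v z) := by
    rw [Err, Finset.sum_insert (by simp [hxy, hxz]), Finset.sum_pair hyz]; simp; ring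
  rw [this]
  have p : ∀ g, 0 ≤ t g * v g := fun g => mul_nonneg (ht g).1 (hv g)
  exact ⟨by linarith [p x, p y, p z, mx_nonneg v ∅],
    by linarith [max3_le_mx (v := v) (x := x) (y := y) (z := z)]⟩

lemma good_double_swap (h : GoodE v (Err v t {x, y} {z}) {x, y} {z}) :
    GoodE v (Err v t {y, x} {z}) {y, x} {z} := by
  rwa [Finset.pair_comm y x]

lemma Good1.swap {tx ty tz x y z : ℝ} (h : Good1 tx ty tz x y z) : Good1 tx tz ty x z y := by
  have h1 := h.1
  have h2 := h.2
  rw [max_comm] at h2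
  exact ⟨by linarith, by linarith⟩

lemma fin3_other (i j : Fin 3) (h : j ≠ i) : j = i + 1 ∨ j = i + 2 := by
  revert i j; decide

end Step1

lemma pigeon {p q r p' q' r' : Prop} (h : (p ∨ q) ∧ (p ∨ r) ∧ (q ∨ r))
    (h' : (p' ∨ q') ∧ (p' ∨ r') ∧ (q' ∨ r')) : (p ∧ p') ∨ (q ∧ q') ∨ (r ∧ r') := by
  tauto

set_option maxHeartbeats 1000000 in
lemma step1_core {ι : Type*} [DecidableEq ι] (v : Fin 3 → ι → ℝ) (hv : ∀ j g, 0 ≤ v j g)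
    (t : ι → ℝ) (ht : ∀ g, 0 ≤ t g ∧ t g ≤ 1) (a b c : ι) (hab : a ≠ b) (hac : a ≠ c)
    (hbc : b ≠ c) (h1 : t b ≤ t a) (h2 : t c ≤ t b) :
    ∃ (U D : Finset ι) (i : Fin 3), Disjoint U D ∧ U ∪ D = {a, b, c} ∧
      (∀ j, j ≠ i → GoodE (v j) (Err (v j) t U D) U D) ∧ SpecE (v i) (Err (v i) t U D) U D := by
  have sa : Disjoint ({a} : Finset ι) {b, c} ∧ ({a} : Finset ι) ∪ {b, c} = {a, b, c} := by
    constructor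
    · simp [hab, hac]
    · ext g; simp only [mem_union, mem_singleton, mem_insert]
  have sb : Disjoint ({b} : Finset ι) {a, c} ∧ ({b} : Finset ι) ∪ {a, c} = {a, b, c} := by
    constructor
    · simp [hab.symm, hbc]
    · ext g; simp only [mem_union, mem_singleton, mem_insert]; exact or_left_comm
  have sc : Disjoint ({c} : Finset ι) {a, b} ∧ ({c} : Finset ι) ∪ {a, b} = {a, b, c} := by
    constructor
    · simp [hac.symm, hbc.symm]
    · ext g; simp only [mem_union, mem_singleton, mem_insert]; tauto
  have da : Disjoint ({b, c} : Finset ι) {a} ∧ ({b, c} : Finset ι) ∪ {a} = {a, b, c} :=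
    ⟨sa.1.symm, by rw [union_comm, sa.2]⟩
  have db : Disjoint ({a, c} : Finset ι) {b} ∧ ({a, c} : Finset ι) ∪ {b} = {a, b, c} :=
    ⟨sb.1.symm, by rw [union_comm, sb.2]⟩
  have dc : Disjoint ({a, b} : Finset ι) {c} ∧ ({a, b} : Finset ι) ∪ {c} = {a, b, c} :=
    ⟨sc.1.symm, by rw [union_comm, sc.2]⟩
  have fin : ∀ U D : Finset ι, Disjoint U D ∧ U ∪ D = {a, b, c} →
      (∀ j, GoodE (v j) (Err (v j) t U D) U D) → 
      ∃ (U D : Finset ι) (i : Fin 3), Disjoint U D ∧ U ∪ D = {a, b, c} ∧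
      (∀ j, j ≠ i → GoodE (v j) (Err (v j) t U D) U D) ∧
        SpecE (v i) (Err (v i) t U D) U D :=
    fun U D h hg => ⟨U, D, 0, h.1, h.2, fun j _ => hg j, spec_of_good (hg 0)⟩
  have fin2 : ∀ U D : Finset ι, ∀ i : Fin 3, Disjoint U D ∧ U ∪ D = {a, b, c} →
      GoodE (v (i+1)) (Err (v (i+1)) t U D) U D → 
      GoodE (v (i+2)) (Err (v (i+2)) t U D) U D → SpecE (v i) (Err (v i) t U D) U D →
      ∃ (U D : Finset ι) (i : Fin 3), Disjoint U D ∧ U ∪ D = {a, b, c} ∧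
      (∀ j, j ≠ i → GoodE (v j) (Err (v j) t U D) U D) ∧
        SpecE (v i) (Err (v i) t U D) U D := by
    intro U D i h g1 g2 hs
    refine ⟨U, D, i, h.1, h.2, fun j hj => ?_, hs⟩
    rcases fin3_other i j hj with rfl | rfl
    · exact g1
    · exact g2
  obtain ⟨ta0, ta1⟩ := ht a
  obtain ⟨tb0, tb1⟩ := ht b
  obtain ⟨tc0, tc1⟩ := ht c
  by_cases c1 : t a + t b + t c ≤ 2/3
  · exact fin ∅ {a, b, c} (by simp) fun j => good_none (hv j) ht hab hac hbc
      (sum_le_max3 (hv j a) ta0 tb0 tc0 c1)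
  by_cases c2 : 7/3 ≤ t a + t b + t c
  · exact fin {a, b, c} ∅ (by simp) fun j => good_all (hv j) ht hab hac hbc
      (sum_le_max3 (hv j a) (by linarith) (by linarith) (by linarith) (by linarith))
  by_cases c3 : 1/3 ≤ t a ∧ t b + t c ≤ 2/3
  · exact fin {a} {b, c} sa fun j => good_single hbc
      (good1_of_sum (hv j a) (hv j b) (hv j c) tb0 tc0 ta1 c3.1 c3.2)
  by_cases c4 : t c ≤ 2/3 ∧ 4/3 ≤ t a + t b
  · exact fin {a, b} {c} dc fun j => good_double hab
      (good1_of_sum (hv j c) (hv j a) (hv j b) (by linarith) (by linarith) (by linarith)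
        (by linarith [c4.1]) (by linarith [c4.2]))
  push Not at c1 c2 c3 c4
  by_cases c5 : t a + t b ≤ 1
  · have ha1 : t a ≤ 2/3 ∧ 1/3 ≤ t b + t c := by
      rcases le_or_gt (1/3) (t a) with h | h
      · have c3' := c3 h
        constructor <;> linarith
      · constructor <;> linarith
    obtain ⟨ua, ul⟩ := ha1
    have G : ∀ j : Fin 3,
      (Good1 (t a) (t b) (t c) (v j a) (v j b) (v j c) ∨
        Good1 (t b) (t a) (t c) (v j b) (v j a) (v j c)) ∧
      (Good1 (t a) (t c) (t b) (v j a) (v j c) (v j b) ∨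
        Good1 (t c) (t a) (t b) (v j c) (v j a) (v j b)) ∧
      (Good1 (t b) (t c) (t a) (v j b) (v j c) (v j a) ∨
        Good1 (t c) (t b) (t a) (v j c) (v j b) (v j a)) := fun j =>
      ⟨D1 (hv j a) (hv j b) (hv j c) ta0 tb0 tc0 (by linarith) (by linarith) (by linarith)
        (by linarith) (by linarith) (by linarith) (by linarith),
       D1 (hv j a) (hv j c) (hv j b) ta0 tc0 tb0 (by linarith) (by linarith) (by linarith)
        (by linarith) (by linarith) (by linarith) (by linarith),
       D1 (hv j b) (hv j c) (hv j a) tb0 tc0 ta0 (by linarith) (by linarith) (by linarith)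
        (by linarith) (by linarith) (by linarith) (by linarith)⟩
    have G' : ∀ j : Fin 3,
      (GoodE (v j) (Err (v j) t {a} {b, c}) {a} {b, c} ∨
        GoodE (v j) (Err (v j) t {b} {a, c}) {b} {a, c}) ∧
      (GoodE (v j) (Err (v j) t {a} {b, c}) {a} {b, c} ∨
        GoodE (v j) (Err (v j) t {c} {a, b}) {c} {a, b}) ∧
      (GoodE (v j) (Err (v j) t {b} {a, c}) {b} {a, c} ∨
        GoodE (v j) (Err (v j) t {c} {a, b}) {c} {a, b}) := fun j =>
      ⟨(G j).1.imp (good_single hbc) (good_single hac),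
       (G j).2.1.imp (fun h => good_single hbc h.swap) (good_single hab),
       (G j).2.2.imp (fun h => good_single hac h.swap) (fun h => good_single hab h.swap)⟩
    have K : 
      (GoodE (v (0+1)) (Err (v (0+1)) t {a} {b, c}) {a} {b, c} ∧
        GoodE (v (0+2)) (Err (v (0+2)) t {a} {b, c}) {a} {b, c}) ∨
      (GoodE (v (0+1)) (Err (v (0+1)) t {b} {a, c}) {b} {a, c} ∧
        GoodE (v (0+2)) (Err (v (0+2)) t {b} {a, c}) {b} {a, c}) ∨
      (GoodE (v (0+1)) (Err (v (0+1)) t {c} {a, b}) {c} {a, b} ∧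
        GoodE (v (0+2)) (Err (v (0+2)) t {c} {a, b}) {c} {a, b}) := by
      exact pigeon (G' (0+1)) (G' (0+2))
    rcases K with K | K | K
    · exact fin2 _ _ 0 sa K.1 K.2 (spec_single (hv 0) ht hbc (by linarith) (by linarith)
        (by linarith))
    · exact fin2 _ _ 0 sb K.1 K.2 (spec_single (hv 0) ht hac (by linarith) (by linarith)
        (by linarith))
    · exact fin2 _ _ 0 sc K.1 K.2 (spec_single (hv 0) ht hab (by linarith) (by linarith)
        (by linarith))
  by_cases c6 : 1 ≤ t b + t c
  · have hc1 : 1/3 ≤ t c ∧ t a + t b ≤ 5/3 := by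
      rcases le_or_gt (t c) (2/3) with h | h
      · have c4' := c4 h
        constructor <;> linarith
      · constructor <;> linarith
    obtain ⟨uc, ul⟩ := hc1
    have G' : ∀ j : Fin 3,
      (GoodE (v j) (Err (v j) t {b, c} {a}) {b, c} {a} ∨
        GoodE (v j) (Err (v j) t {a, c} {b}) {a, c} {b}) ∧
      (GoodE (v j) (Err (v j) t {b, c} {a}) {b, c} {a} ∨
        GoodE (v j) (Err (v j) t {a, b} {c}) {a, b} {c}) ∧
      (GoodE (v j) (Err (v j) t {a, c} {b}) {a, c} {b} ∨
        GoodE (v j) (Err (v j) t {a, b} {c}) {a, b} {c}) := fun j =>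
      ⟨(D1 (tx := 1 - t a) (ty := 1 - t b) (tz := 1 - t c) (hv j a) (hv j b) (hv j c)
        (by linarith) (by linarith) (by linarith) (by linarith) (by linarith) (by linarith)
        (by linarith) (by linarith) (by linarith) (by linarith)).imp
          (good_double hbc) (good_double hac),
       (D1 (tx := 1 - t a) (ty := 1 - t c) (tz := 1 - t b) (hv j a) (hv j c) (hv j b)
        (by linarith) (by linarith) (by linarith) (by linarith) (by linarith) (by linarith)
        (by linarith) (by linarith) (by linarith) (by linarith)).imp
          (fun h => good_double hbc h.swap) (good_double hab),
       (D1 (tx := 1 - t b) (ty := 1 - t c) (tz := 1 - t a) (hv j b) (hv j c) (hv j a)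
        (by linarith) (by linarith) (by linarith) (by linarith) (by linarith) (by linarith)
        (by linarith) (by linarith) (by linarith) (by linarith)).imp
          (fun h => good_double hac h.swap) (fun h => good_double hab h.swap)⟩
    by_cases hN : ∃ j, 
        (¬ 2 * v j a < -(3 * ((1 - t b) * v j b + (1 - t c) * v j c - t a * v j a))) ∧
        (¬ 2 * v j b < -(3 * ((1 - t a) * v j a + (1 - t c) * v j c - t b * v j b))) ∧
        (¬ 2 * v j c < -(3 * ((1 - t a) * v j a + (1 - t b) * v j b - t c * v j c)))
    · obtain ⟨i, na, nb, nc⟩ := hN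
      have K : 
        (GoodE (v (i+1)) (Err (v (i+1)) t {b, c} {a}) {b, c} {a} ∧
          GoodE (v (i+2)) (Err (v (i+2)) t {b, c} {a}) {b, c} {a}) ∨
        (GoodE (v (i+1)) (Err (v (i+1)) t {a, c} {b}) {a, c} {b} ∧
          GoodE (v (i+2)) (Err (v (i+2)) t {a, c} {b}) {a, c} {b}) ∨
        (GoodE (v (i+1)) (Err (v (i+1)) t {a, b} {c}) {a, b} {c} ∧
          GoodE (v (i+2)) (Err (v (i+2)) t {a, b} {c}) {a, b} {c}) := by
        exact pigeon (G' (i+1)) (G' (i+2))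
      rcases K with K | K | K
      · exact fin2 _ _ i da K.1 K.2 (spec_double (hv i) ht hbc (by linarith) na)
      · exact fin2 _ _ i db K.1 K.2 (spec_double (hv i) ht hac (by linarith) nb)
      · exact fin2 _ _ i dc K.1 K.2 (spec_double (hv i) ht hab (by linarith) nc)
    · push Not at hN
      refine fin {a, b, c} ∅ (by simp) fun j => good_all (hv j) ht hab hac hbc ?_
      have M : ∀ x y z : ℝ, max x (max y z) = max y (max x z) := by
        intro x y z; rw [max_left_comm]
      by_cases ka : 2 * v j a < -(3 * ((1 - t b) * v j b + (1 - t c) * v j c - t a * v j a))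
      · have := all_of_neg (hv j a) ka
        rw [max_comm (v j c), M] at this
        linarith
      by_cases kb : 2 * v j b < -(3 * ((1 - t a) * v j a + (1 - t c) * v j c - t b * v j b))
      · have := all_of_neg (hv j b) kb
        rw [max_comm (v j c)] at this
        linarith
      · have := all_of_neg (hv j c) (hN j (not_lt.1 ka) (not_lt.1 kb))
        linarith
  · push Not at c5 c6
    have G' : ∀ j : Fin 3, GoodE (v j) (Err (v j) t {a} {b, c}) {a} {b, c} ∨
        GoodE (v j) (Err (v j) t {a, b} {c}) {a, b} {c} := fun j =>
      (D2 (hv j a) (hv j b) (hv j c) ta0 tb0 tc0 ta1 tb1 (by linarith) (by linarith)).imp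
        (good_single hbc) (good_double hab)
    have c4' := c4 (by linarith)
    have SA : ∀ i, SpecE (v i) (Err (v i) t {a} {b, c}) {a} {b, c} := fun i =>
      spec_single (hv i) ht hbc (by linarith) (by linarith) (by linarith)
    have SB : ∀ i, SpecE (v i) (Err (v i) t {a, b} {c}) {a, b} {c} := fun i => by
      refine spec_double (hv i) ht hab (by linarith) ?_
      have q1 := mul_nonneg (sub_nonneg.2 ta1) (hv i a)
      have q2 := mul_nonneg (sub_nonneg.2 tb1) (hv i b)
      have q3 := mul_nonneg (show 0 ≤ 2/3 - t c by linarith) (hv i c)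
      nlinarith
    have e10 : (1 : Fin 3) + 1 = 2 := rfl
    have e11 : (1 : Fin 3) + 2 = 0 := rfl
    have e20 : (2 : Fin 3) + 1 = 0 := rfl
    have e21 : (2 : Fin 3) + 2 = 1 := rfl
    rcases G' 0 with g0 | g0 <;> rcases G' 1 with g1 | g1 <;> rcases G' 2 with g2 | g2
    · exact fin2 _ _ 0 sa g1 g2 (SA 0)
    · exact fin2 _ _ 2 sa g0 g1 (SA 2)
    · exact fin2 _ _ 1 sa g2 g0 (SA 1)
    · exact fin2 _ _ 0 dc g1 g2 (SB 0)
    · exact fin2 _ _ 0 sa g1 g2 (SA 0)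
    · exact fin2 _ _ 1 dc g2 g0 (SB 1)
    · exact fin2 _ _ 2 dc g0 g1 (SB 2)
    · exact fin2 _ _ 0 dc g1 g2 (SB 0)

lemma sort3 {ι : Type*} [DecidableEq ι] (t : ι → ℝ) (T : Finset ι) (hT : T.card = 3) :
    ∃ a b c : ι, a ≠ b ∧ a ≠ c ∧ b ≠ c ∧ T = {a, b, c} ∧ t b ≤ t a ∧ t c ≤ t b := by
  obtain ⟨x, y, z, hxy, hxz, hyz, rfl⟩ := Finset.card_eq_three.1 hT
  rcases le_total (t x) (t y) with h1 | h1 <;> rcases le_total (t x) (t z) with h2 | h2 <;>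
    rcases le_total (t y) (t z) with h3 | h3
  · exact ⟨z, y, x, hyz.symm, hxz.symm, hxy.symm, by ext g; simp; tauto, h3, h1⟩
  · exact ⟨y, z, x, hyz, hxy.symm, hxz.symm, by ext g; simp; tauto, h3, h2⟩
  · exact ⟨z, y, x, hyz.symm, hxz.symm, hxy.symm, by ext g; simp; tauto, h3, h1⟩
  · exact ⟨y, x, z, hxy.symm, hyz, hxz, by ext g; simp; tauto, h1, h2⟩
  · exact ⟨z, x, y, hxz.symm, hyz.symm, hxy, by ext g; simp; tauto, h2, h1⟩
  · exact ⟨x, y, z, hxy, hxz, hyz, rfl, h1, h3⟩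
  · exact ⟨x, z, y, hxz, hxy, hyz.symm, by ext g; simp; tauto, h2, h3⟩
  · exact ⟨x, y, z, hxy, hxz, hyz, rfl, h1, h3⟩

lemma step1 {ι : Type*} [Fintype ι] [DecidableEq ι] (hcard : 3 ≤ Fintype.card ι)
    (v : Fin 3 → ι → ℝ) (hv : ∀ j g, 0 ≤ v j g) :
    ∃ (X : Finset ι) (i : Fin 3),
      (∀ j, j ≠ i → GoodE (v j) (∑ g ∈ X, v j g - (∑ g, v j g) / 3) X Xᶜ) ∧
      SpecE (v i) (∑ g ∈ X, v i g - (∑ g, v i g) / 3) X Xᶜ := by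
  obtain ⟨t, ht, hsum, hfrac⟩ := lp_vertex 3 (fun g j => v j g) (fun _ : ι => (1/3 : ℝ))
    (fun _ => by norm_num)
  obtain ⟨T, hFT, hT⟩ := Finset.exists_superset_card_eq hfrac (by simpa using hcard)
  obtain ⟨a, b, c, hab, hac, hbc, hTe, h1, h2⟩ := sort3 t T hT
  obtain ⟨U, D, i, hd, hu, hg, hs⟩ := step1_core v hv t ht a b c hab hac hbc h1 h2
  rw [← hTe] at hu
  set W := univ.filter fun g => t g = 1 ∧ g ∉ T with hW
  have hUX : U ⊆ W ∪ U := Finset.subset_union_right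
  have hDX : D ⊆ (W ∪ U)ᶜ := by
    intro g hgD
    have : g ∈ T := by rw [← hu]; exact mem_union_right _ hgD
    have hgU : g ∉ U := fun h => (Finset.disjoint_left.1 hd h) hgD
    simp [hW, this, hgU]
  have herr : ∀ j, ∑ g ∈ W ∪ U, v j g - (∑ g, v j g) / 3 = Err (v j) t U D := by
    intro j
    have e1 : (∑ g, v j g) / 3 = ∑ g, t g * v j g := by
      rw [hsum j, ← Finset.mul_sum]; ring
    have e2 : ∑ g ∈ W ∪ U, v j g = ∑ g, if g ∈ W ∪ U then v j g else 0 := by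
      rw [Finset.sum_ite_mem, Finset.univ_inter]
    rw [e1, e2, ← Finset.sum_sub_distrib, ← Finset.sum_subset (Finset.subset_univ T), ← hu,
      Finset.sum_union hd, Err, sub_eq_add_neg, ← Finset.sum_neg_distrib]
    · congr 1
      · apply Finset.sum_congr rfl
        intro g hgU
        rw [if_pos (hUX hgU)]; ring
      · apply Finset.sum_congr rfl
        intro g hgD
        rw [if_neg (Finset.mem_compl.1 (hDX hgD))]; ring
    · intro g _ hgT
      have hgU : g ∉ U := fun h => hgT (by rw [← hu]; exact mem_union_left _ h)
      have hgF : t g = 0 ∨ t g = 1 := by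
        by_contra h
        push Not at h
        exact hgT (hFT (by simp [h]))
      rcases hgF with h | h
      · have : g ∉ W ∪ U := by simp [hW, h, hgU]
        rw [if_neg this, h]; simp
      · have : g ∈ W ∪ U := by simp [hW, h, hgT]
        rw [if_pos this, h]; simp
  refine ⟨W ∪ U, i, fun j hj => ?_, ?_⟩
  · rw [herr j]; exact (hg j hj).mono hUX hDX
  · rw [herr i]; exact hs.mono hUX hDX

/-- Choose one item slot from each pair of slots `2k, 2k+1`. -/
def side {ι : Type*} [DecidableEq ι] (S : ℕ → Finset ι) (r : ℕ) (ε : ℕ → Bool) : Finset ι :=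
  (range r).biUnion fun k => S (if ε k then 2 * k else 2 * k + 1)

section Step2
variable {ι : Type*} [DecidableEq ι] (S : ℕ → Finset ι) (r : ℕ) (ε : ℕ → Bool)

lemma side_sum (hS : ∀ m n, m ≠ n → Disjoint (S m) (S n)) (v : ι → ℝ) :
    ∑ g ∈ side S r ε, v g = ∑ k ∈ range r, ∑ g ∈ S (if ε k then 2 * k else 2 * k + 1), v g := by
  rw [side, Finset.sum_biUnion]
  intro a _ b _ hab
  apply hS
  split_ifs <;> omega

lemma slot_subset_side {k : ℕ} (hk : k < r) :
    S (if ε k then 2 * k else 2 * k + 1) ⊆ side S r ε :=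
  Finset.subset_biUnion_of_mem (fun k => S (if ε k then 2 * k else 2 * k + 1)) (by simpa using hk)

lemma side_disjoint (hS : ∀ m n, m ≠ n → Disjoint (S m) (S n)) :
    Disjoint (side S r ε) (side S r fun k => !ε k) := by
  simp only [side, Finset.disjoint_biUnion_left, Finset.disjoint_biUnion_right]
  intro a _ b _
  apply hS
  by_cases hab : a = b
  · subst hab
    by_cases he : ε a = true <;> simp [he]
  · split_ifs <;> omega

lemma side_union :
    side S r ε ∪ side S r (fun k => !ε k) = (range (2 * r)).biUnion S := by
  ext g
  simp only [side, mem_union, mem_biUnion, mem_range]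
  constructor
  · rintro (⟨k, hk, h⟩ | ⟨k, hk, h⟩)
    · exact ⟨_, by split_ifs <;> omega, h⟩
    · exact ⟨_, by split_ifs <;> omega, h⟩
  · rintro ⟨n, hn, h⟩
    rcases Nat.even_or_odd' n with ⟨k, rfl | rfl⟩
    · cases he : ε k
      · right; exact ⟨k, by omega, by simpa [he] using h⟩
      · left; exact ⟨k, by omega, by simpa [he] using h⟩
    · cases he : ε k
      · left; exact ⟨k, by omega, by simpa [he] using h⟩
      · right; exact ⟨k, by omega, by simpa [he] using h⟩

lemma balance (hS : ∀ m n, m ≠ n → Disjoint (S m) (S n)) (hc : ∀ n, (S n).card ≤ 1)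
    (v : Fin 2 → ι → ℝ) (hv : ∀ j g, 0 ≤ v j g) :
    ∃ ε : ℕ → Bool, ∀ j : Fin 2,
      ∑ g ∈ side S r ε, v j g - ∑ g ∈ side S r (fun k => !ε k), v j g ≤ 2 * mx (v j) (side S r ε) ∧
      ∑ g ∈ side S r (fun k => !ε k), v j g - ∑ g ∈ side S r ε, v j g ≤
        2 * mx (v j) (side S r fun k => !ε k) := by
  obtain ⟨y, hy, hsum, hfrac⟩ := lp_vertex 2
    (fun (k : Fin r) j => ∑ g ∈ S (2 * k), v j g - ∑ g ∈ S (2 * k + 1), v j g)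
    (fun _ => (1/2 : ℝ)) (fun _ => by norm_num)
  classical
  let ε : ℕ → Bool := fun k => if h : k < r then decide (1/2 ≤ y ⟨k, h⟩) else true
  have hε : ∀ k : Fin r, ε k = decide (1/2 ≤ y k) := by
    intro k; simp [ε]
  refine ⟨ε, fun j => ?_⟩
  set F := univ.filter fun k => y k ≠ 0 ∧ y k ≠ 1 with hF
  set P := side S r ε with hP
  set Q := side S r (fun k => !ε k) with hQ
  let d : Fin r → ℝ := fun k => ∑ g ∈ S (2 * k), v j g - ∑ g ∈ S (2 * k + 1), v j g
  have hsum' : ∑ k, (2 * y k - 1) * d k = 0 := by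
    have := hsum j
    have e : ∑ k, (2 * y k - 1) * d k = 2 * (∑ k, y k * d k - ∑ k, 1/2 * d k) := by
      rw [← Finset.sum_sub_distrib, Finset.mul_sum]
      apply Finset.sum_congr rfl; intros; ring
    rw [e]; simp only [d]; rw [this]; ring
  have hdiff : ∑ g ∈ P, v j g - ∑ g ∈ Q, v j g =
      ∑ k, (if 1/2 ≤ y k then 2 * (1 - y k) * d k else -(2 * y k * d k)) := by
    rw [hP, hQ, side_sum S r _ hS, side_sum S r _ hS, ← Finset.sum_sub_distrib,
      Finset.sum_range, ← sub_zero (∑ k : Fin r, _), ← hsum', ← Finset.sum_sub_distrib]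
    apply Finset.sum_congr rfl
    intro k _
    rw [hε k]
    by_cases h : 1/2 ≤ y k
    · simp only [h, decide_true, if_true, Bool.not_true, d]; simp; ring
    · simp only [h, decide_false, if_false, Bool.not_false, d]; simp; ring
  have s0 : ∀ n, 0 ≤ ∑ g ∈ S n, v j g := fun n => Finset.sum_nonneg fun g _ => hv j g
  have mP : ∀ k : Fin r, (if 1/2 ≤ y k then ∑ g ∈ S (2 * k), v j g
      else ∑ g ∈ S (2 * k + 1), v j g) ≤ mx (v j) P := by
    intro k
    have h1 := slot_subset_side S r ε k.2
    have h2 := sum_le_mx (v j) h1 (hc _)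
    rw [hε k] at h2
    by_cases h : 1/2 ≤ y k
    · rw [if_pos h]
      simpa only [h, decide_true, if_true, Bool.not_true, Bool.false_eq_true, if_false] using h2
    · rw [if_neg h]
      simpa only [h, decide_false, if_true, Bool.not_false, Bool.false_eq_true, if_false] using h2
  have mQ : ∀ k : Fin r, (if 1/2 ≤ y k then ∑ g ∈ S (2 * k + 1), v j g
      else ∑ g ∈ S (2 * k), v j g) ≤ mx (v j) Q := by
    intro k
    have h1 := slot_subset_side S r (fun k => !ε k) k.2
    have h2 := sum_le_mx (v j) h1 (hc _)
    simp only [hε k] at h2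
    by_cases h : 1/2 ≤ y k
    · rw [if_pos h]
      simpa only [h, decide_true, if_true, Bool.not_true, Bool.false_eq_true, if_false] using h2
    · rw [if_neg h]
      simpa only [h, decide_false, if_true, Bool.not_false, Bool.false_eq_true, if_false] using h2
  have key : ∀ M : ℝ, 0 ≤ M → ∀ f : Fin r → ℝ, (∀ k ∈ F, f k ≤ M) → (∀ k, k ∉ F → f k = 0) →
      ∑ k, f k ≤ 2 * M := by
    intro M hM f h1 h2
    rw [← Finset.sum_subset (Finset.subset_univ F) (fun k _ hk => h2 k hk)]
    refine (Finset.sum_le_card_nsmul F f M h1).trans ?_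
    rw [nsmul_eq_mul]
    have : (F.card : ℝ) ≤ 2 := by exact_mod_cast hfrac
    nlinarith
  have hz : ∀ k, k ∉ F →
      (if 1/2 ≤ y k then 2 * (1 - y k) * d k else -(2 * y k * d k)) = 0 := by
    intro k hk
    have : y k = 0 ∨ y k = 1 := by
      by_contra h; push Not at h; exact hk (by simp [hF, h])
    rcases this with h | h
    · rw [h]; norm_num
    · rw [h]; norm_num
  constructor
  · rw [hdiff]
    refine key _ (mx_nonneg _ _) _ (fun k _ => ?_) hz
    have h1 := mP k
    have a0 := s0 (2 * k)
    have b0 := s0 (2 * k + 1)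
    split_ifs at h1 ⊢ with h
    · refine le_trans ?_ h1
      simp only [d]
      nlinarith [mul_nonneg (sub_nonneg.2 (hy k).2) b0, mul_nonneg (sub_nonneg.2 h) a0]
    · refine le_trans ?_ h1
      simp only [d]
      push Not at h
      nlinarith [mul_nonneg (hy k).1 a0, mul_nonneg (sub_nonneg.2 h.le) b0]
  · rw [← neg_sub, hdiff, ← Finset.sum_neg_distrib]
    refine key _ (mx_nonneg _ _) _ (fun k _ => ?_) (fun k hk => by rw [hz k hk, neg_zero])
    have h1 := mQ k
    have a0 := s0 (2 * k)
    have b0 := s0 (2 * k + 1)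
    split_ifs at h1 ⊢ with h
    · refine le_trans ?_ h1
      simp only [d]
      nlinarith [mul_nonneg (sub_nonneg.2 (hy k).2) a0, mul_nonneg (sub_nonneg.2 h) b0]
    · refine le_trans ?_ h1
      simp only [d]
      push Not at h
      nlinarith [mul_nonneg (hy k).1 b0, mul_nonneg (sub_nonneg.2 h.le) a0]

lemma telescope (p q : ℕ → ℝ) (hp : ∀ k, 0 ≤ p k) (hq : ∀ k, 0 ≤ q k)
    (h : ∀ k, p (k + 1) ≤ q k) (r : ℕ) : ∑ k ∈ range r, (p k - q k) ≤ p 0 := by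
  have : ∀ r, ∑ k ∈ range (r + 1), (p k - q k) ≤ p 0 - q r := by
    intro r
    induction r with
    | zero => simp
    | succ n ih => rw [Finset.sum_range_succ]; linarith [h n]
  cases r with
  | zero => simpa using hp 0
  | succ n => linarith [this n, hq n]

lemma side_diff (hS : ∀ m n, m ≠ n → Disjoint (S m) (S n)) (hc : ∀ n, (S n).card ≤ 1)
    (v : ι → ℝ) (hv : ∀ g, 0 ≤ v g) (hr : 1 ≤ r)
    (hanti : ∀ n, ∑ g ∈ S (n + 1), v g ≤ ∑ g ∈ S n, v g) :
    ∑ g ∈ side S r ε, v g - ∑ g ∈ side S r (fun k => !ε k), v g ≤ mx v (side S r ε) := by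
  have an : Antitone fun n => ∑ g ∈ S n, v g := antitone_nat_of_succ_le hanti
  rw [side_sum S r _ hS, side_sum S r _ hS, ← Finset.sum_sub_distrib]
  refine (telescope (fun k => ∑ g ∈ S (if ε k then 2 * k else 2 * k + 1), v g)
    (fun k => ∑ g ∈ S (if !ε k then 2 * k else 2 * k + 1), v g) 
    (fun k => Finset.sum_nonneg fun g _ => hv g)
    (fun k => Finset.sum_nonneg fun g _ => hv g) ?_ r).trans ?_
  · intro k
    apply an
    split_ifs <;> omega
  · exact sum_le_mx v (slot_subset_side S r ε (by omega)) (hc _)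

lemma side_diff2 (hS : ∀ m n, m ≠ n → Disjoint (S m) (S n)) (hc : ∀ n, (S n).card ≤ 1)
    (v : ι → ℝ) (hv : ∀ g, 0 ≤ v g) (hr : 2 ≤ r)
    (hanti : ∀ n, ∑ g ∈ S (n + 2 + 1), v g ≤ ∑ g ∈ S (n + 2), v g) :
    ∑ g ∈ side S r ε, v g - ∑ g ∈ side S r (fun k => !ε k), v g ≤
      ∑ g ∈ S (if ε 0 then 0 else 1), v g - ∑ g ∈ S (if ε 0 then 1 else 0), v g +
      mx v (side S r ε) := by
  have an : Antitone fun n => ∑ g ∈ S (n + 2), v g := antitone_nat_of_succ_le hanti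
  have an' : ∀ a b, 2 ≤ a → a ≤ b → ∑ g ∈ S b, v g ≤ ∑ g ∈ S a, v g := by
    intro a b ha hab
    obtain ⟨a, rfl⟩ : ∃ a', a = a' + 2 := ⟨a - 2, by omega⟩
    obtain ⟨b, rfl⟩ : ∃ b', b = b' + 2 := ⟨b - 2, by omega⟩
    exact an (show a ≤ b by omega)
  obtain ⟨r, rfl⟩ : ∃ s, r = s + 1 := ⟨r - 1, by omega⟩
  rw [side_sum S _ _ hS, side_sum S _ _ hS, ← Finset.sum_sub_distrib, Finset.sum_range_succ',
    add_comm]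
  apply add_le_add
  · cases ε 0 <;> simp
  refine (telescope (fun k => ∑ g ∈ S (if ε (k+1) then 2 * (k+1) else 2 * (k+1) + 1), v g)
    (fun k => ∑ g ∈ S (if !ε (k+1) then 2 * (k+1) else 2 * (k+1) + 1), v g) 
    (fun k => Finset.sum_nonneg fun g _ => hv g)
    (fun k => Finset.sum_nonneg fun g _ => hv g) ?_ r).trans ?_
  · intro k
    apply an'
    · split_ifs <;> omega
    · split_ifs <;> omega
  · exact sum_le_mx v (slot_subset_side S (r+1) ε (by omega)) (hc _)

end Step2

section Lists
variable {ι : Type*} [DecidableEq ι]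

def slots (L : List ι) (n : ℕ) : Finset ι := (L[n]?).toFinset

lemma mem_slots {L : List ι} {n : ℕ} {g : ι} : g ∈ slots L n ↔ L[n]? = some g := by
  simp [slots, Option.mem_toFinset, Option.mem_def]

lemma slots_disjoint {L : List ι} (hL : L.Nodup) (m n : ℕ) (h : m ≠ n) :
    Disjoint (slots L m) (slots L n) := by
  rw [Finset.disjoint_left]
  intro g h1 h2
  rw [mem_slots] at h1 h2
  obtain ⟨hm, e1⟩ := List.getElem?_eq_some_iff.1 h1
  obtain ⟨hn, e2⟩ := List.getElem?_eq_some_iff.1 h2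
  exact h ((hL.getElem_inj_iff).1 (e1.trans e2.symm))

lemma slots_card (L : List ι) (n : ℕ) : (slots L n).card ≤ 1 := by
  rw [Finset.card_le_one]
  intro a ha b hb
  rw [mem_slots] at ha hb
  exact Option.some.inj (ha.symm.trans hb)

lemma slots_union (L : List ι) (r : ℕ) (hr : L.length ≤ r) :
    (range r).biUnion (slots L) = L.toFinset := by
  ext g
  simp only [mem_biUnion, mem_range, mem_slots, List.mem_toFinset]
  constructor
  · rintro ⟨n, _, h⟩; exact List.mem_of_getElem? h
  · intro h
    obtain ⟨n, hn, e⟩ := List.getElem_of_mem h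
    exact ⟨n, by omega, List.getElem?_eq_some_iff.2 ⟨hn, e⟩⟩

lemma slots_anti (v : ι → ℝ) (hv : ∀ g, 0 ≤ v g) (L : List ι)
    (hL : L.Pairwise fun a b => v b ≤ v a) (n : ℕ) :
    ∑ g ∈ slots L (n + 1), v g ≤ ∑ g ∈ slots L n, v g := by
  by_cases h : n + 1 < L.length
  · have h' : n < L.length := by omega
    simp only [slots, List.getElem?_eq_getElem h, List.getElem?_eq_getElem h']
    simpa using List.pairwise_iff_getElem.1 hL n (n + 1) h' h (by omega)
  · have : slots L (n + 1) = ∅ := by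
      simp only [slots]; rw [List.getElem?_eq_none (by omega)]; rfl
    rw [this]; simpa using Finset.sum_nonneg fun g _ => hv g

lemma exists_sorted_s6 (v : ι → ℝ) (R : Finset ι) :
    ∃ L : List ι, L.Nodup ∧ L.toFinset = R ∧ L.Pairwise fun a b => v b ≤ v a := by
  classical
  have : Std.Total (fun a b : ι => v b ≤ v a) := ⟨fun a b => le_total _ _⟩
  have : IsTrans ι (fun a b : ι => v b ≤ v a) := ⟨fun a b c h1 h2 => le_trans h2 h1⟩
  refine ⟨R.toList.insertionSort (fun a b => v b ≤ v a), ?_, ?_, ?_⟩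
  · exact (List.perm_insertionSort _ _).nodup_iff.2 R.nodup_toList
  · ext g; simp
  · exact List.pairwise_insertionSort _ _

def Bal (v : ι → ℝ) (P Q : Finset ι) : Prop :=
  ∑ g ∈ P, v g - ∑ g ∈ Q, v g ≤ 2 * mx v P ∧ ∑ g ∈ Q, v g - ∑ g ∈ P, v g ≤ 2 * mx v Q

lemma balance_list (v : Fin 3 → ι → ℝ) (hv : ∀ j g, 0 ≤ v j g) (i : Fin 3) (S : ℕ → Finset ι)
    (r : ℕ) (hS : ∀ m n, m ≠ n → Disjoint (S m) (S n)) (hc : ∀ n, (S n).card ≤ 1) :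
    ∃ ε : ℕ → Bool, ∀ j, j ≠ i → Bal (v j) (side S r ε) (side S r fun k => !ε k) := by
  obtain ⟨ε, h⟩ := balance S r hS hc (fun k : Fin 2 => if k = 0 then v (i+1) else v (i+2))
    (by intro k g; split_ifs <;> exact hv _ _)
  refine ⟨ε, fun j hj => ?_⟩
  rcases fin3_other i j hj with rfl | rfl
  · exact h 0
  · exact h 1

lemma stepTwoSorted (v : Fin 3 → ι → ℝ) (hv : ∀ j g, 0 ≤ v j g) (i : Fin 3) (R : Finset ι) :
    ∃ P Q : Finset ι, Disjoint P Q ∧ P ∪ Q = R ∧ (∀ j, j ≠ i → Bal (v j) P Q) ∧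
      ∑ g ∈ P, v i g - ∑ g ∈ Q, v i g ≤ mx (v i) P ∧
      ∑ g ∈ Q, v i g - ∑ g ∈ P, v i g ≤ mx (v i) Q := by
  obtain ⟨L, hn, rfl, hs⟩ := exists_sorted_s6 (v i) R
  have hS := slots_disjoint hn
  have hc := slots_card L
  have ha := slots_anti (v i) (hv i) L hs
  obtain ⟨ε, hε⟩ := balance_list v hv i (slots L) (L.length + 1) hS hc
  have d1 := side_diff (slots L) (L.length + 1) ε hS hc (v i) (hv i) (by omega) ha
  have d2 := side_diff (slots L) (L.length + 1) (fun k => !ε k) hS hc (v i) (hv i) (by omega) ha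
  simp only [Bool.not_not] at d2
  exact ⟨_, _, side_disjoint (slots L) _ ε hS,
    (side_union (slots L) (L.length + 1) ε).trans (slots_union L _ (by omega)), hε, d1, d2⟩

lemma stepTwoPair (v : Fin 3 → ι → ℝ) (hv : ∀ j g, 0 ≤ v j g) (i : Fin 3) (R : Finset ι)
    (y z : ι) (hy : y ∈ R) (hz : z ∈ R) (hyz : y ≠ z) :
    ∃ P Q : Finset ι, Disjoint P Q ∧ P ∪ Q = R ∧ (∀ j, j ≠ i → Bal (v j) P Q) ∧
      y ∈ P ∧ z ∈ Q ∧
      ∑ g ∈ P, v i g - ∑ g ∈ Q, v i g ≤ v i y - v i z + mx (v i) P ∧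
      ∑ g ∈ Q, v i g - ∑ g ∈ P, v i g ≤ v i z - v i y + mx (v i) Q := by
  obtain ⟨L', hn', hR, hs⟩ := exists_sorted_s6 (v i) (R \ {y, z})
  have hmem : ∀ g, g ∈ L' ↔ g ∈ R ∧ g ≠ y ∧ g ≠ z := by
    intro g
    rw [← List.mem_toFinset, hR]; simp
  set L := y :: z :: L' with hL
  have hn : L.Nodup := by
    simp [hL, hmem, hyz, hn']
  have hLR : L.toFinset = R := by
    ext g
    simp only [hL, List.mem_toFinset, List.mem_cons, hmem]
    constructor
    · rintro (rfl | rfl | h)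
      · exact hy
      · exact hz
      · exact h.1
    · intro h
      by_cases h1 : g = y
      · exact Or.inl h1
      by_cases h2 : g = z
      · exact Or.inr (Or.inl h2)
      · exact Or.inr (Or.inr ⟨h, h1, h2⟩)
  have hS := slots_disjoint hn
  have hc := slots_card L
  have ha : ∀ n, ∑ g ∈ slots L (n + 2 + 1), v i g ≤ ∑ g ∈ slots L (n + 2), v i g := 
    fun n => slots_anti (v i) (hv i) L' hs n
  have hl0 : slots L 0 = {y} := rfl
  have hl1 : slots L 1 = {z} := rfl
  obtain ⟨ε, hε⟩ := balance_list v hv i (slots L) (L.length + 2) hS hc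
  have d1 := side_diff2 (slots L) (L.length + 2) ε hS hc (v i) (hv i) (by omega) ha
  have d2 := side_diff2 (slots L) (L.length + 2) (fun k => !ε k) hS hc (v i) (hv i) (by omega) ha
  have m1 := slot_subset_side (slots L) (L.length + 2) ε (k := 0) (by omega)
  have m2 := slot_subset_side (slots L) (L.length + 2) (fun k => !ε k) (k := 0) (by omega)
  simp only [Bool.not_not] at d2
  have dd := side_disjoint (slots L) (L.length + 2) ε hS
  have uu := (side_union (slots L) (L.length + 2) ε).trans (slots_union L _ (by omega))
  rw [hLR] at uu
  rcases he : ε 0 with _ | _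
  · simp [he, hl0, hl1] at d1 d2 m1 m2
    refine ⟨_, _, dd.symm, by rw [union_comm]; exact uu, fun j hj => (hε j hj).symm, m2, m1,
      ?_, ?_⟩ <;> linarith
  · simp [he, hl0, hl1] at d1 d2 m1 m2
    refine ⟨_, _, dd, uu, hε, m1, m2, ?_, ?_⟩ <;> linarith

def Gap [Fintype ι] (v : ι → ℝ) (A B : Finset ι) : Prop :=
  ∑ g ∈ A, v g - ∑ g ∈ B, v g ≤ mx v A + mx v Bᶜ

def Six [Fintype ι] (v : ι → ℝ) (X P Q : Finset ι) : Prop :=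
  (Gap v P X ∧ Gap v Q X) ∧ (Gap v X P ∧ Gap v Q P) ∧ (Gap v X Q ∧ Gap v P Q)

lemma sum_split [Fintype ι] (v : ι → ℝ) {X P Q : Finset ι} (hd : Disjoint P Q)
    (hu : P ∪ Q = Xᶜ) : ∑ g, v g = ∑ g ∈ X, v g + ∑ g ∈ P, v g + ∑ g ∈ Q, v g := by
  rw [add_assoc, ← Finset.sum_union hd, hu, Finset.sum_add_sum_compl]

lemma mx_facts [Fintype ι] (v : ι → ℝ) {X P Q : Finset ι} (hd : Disjoint P Q)
    (hu : P ∪ Q = Xᶜ) : (mx v P ≤ mx v Xᶜ ∧ mx v Q ≤ mx v Xᶜ) ∧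
      (mx v X ≤ mx v Pᶜ ∧ mx v Q ≤ mx v Pᶜ) ∧ (mx v X ≤ mx v Qᶜ ∧ mx v P ≤ mx v Qᶜ) := by
  have hP : P ⊆ Xᶜ := by rw [← hu]; exact subset_union_left
  have hQ : Q ⊆ Xᶜ := by rw [← hu]; exact subset_union_right
  refine ⟨⟨mx_mono v hP, mx_mono v hQ⟩, ⟨mx_mono v ?_, mx_mono v ?_⟩, mx_mono v ?_, mx_mono v ?_⟩
  · rwa [Finset.subset_compl_comm]
  · exact Finset.subset_compl_iff_disjoint_right.2 hd.symm
  · rwa [Finset.subset_compl_comm]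
  · exact Finset.subset_compl_iff_disjoint_right.2 hd

lemma six_good [Fintype ι] (v : ι → ℝ) {X P Q : Finset ι} (hd : Disjoint P Q)
    (hu : P ∪ Q = Xᶜ) (hg : GoodE v (∑ g ∈ X, v g - (∑ g, v g) / 3) X Xᶜ) (hb : Bal v P Q) :
    Six v X P Q := by
  obtain ⟨⟨a1, a2⟩, ⟨a3, a4⟩, a5, a6⟩ := mx_facts v hd hu
  rw [GoodE, sum_split v hd hu] at hg
  obtain ⟨g1, g2⟩ := hg
  obtain ⟨b1, b2⟩ := hb
  refine ⟨⟨?_, ?_⟩, ⟨?_, ?_⟩, ?_, ?_⟩ <;> unfold Gap <;> linarith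

lemma six_A [Fintype ι] (v : ι → ℝ) {X P Q : Finset ι} (hd : Disjoint P Q)
    (hu : P ∪ Q = Xᶜ) (g1 : ∑ g ∈ X, v g - (∑ g, v g) / 3 ≤ mx v X)
    (g2 : -(3 * (∑ g ∈ X, v g - (∑ g, v g) / 3)) ≤ 2 * mx v Xᶜ)
    (b1 : ∑ g ∈ P, v g - ∑ g ∈ Q, v g ≤ mx v P)
    (b2 : ∑ g ∈ Q, v g - ∑ g ∈ P, v g ≤ mx v Q) :
    Six v X P Q := by
  obtain ⟨⟨a1, a2⟩, ⟨a3, a4⟩, a5, a6⟩ := mx_facts v hd hu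
  rw [sum_split v hd hu] at g1 g2
  have := mx_nonneg v P
  have := mx_nonneg v Q
  refine ⟨⟨?_, ?_⟩, ⟨?_, ?_⟩, ?_, ?_⟩ <;> unfold Gap <;> linarith

lemma six_B [Fintype ι] (v : ι → ℝ) (hv : ∀ g, 0 ≤ v g) {X P Q : Finset ι} (hd : Disjoint P Q)
    (hu : P ∪ Q = Xᶜ) {y z : ι} (hy : y ∈ P) (hz : z ∈ Q) (hyz : v z ≤ v y)
    (g1 : ∑ g ∈ X, v g - (∑ g, v g) / 3 ≤ 0)
    (g2 : -(3 * (∑ g ∈ X, v g - (∑ g, v g) / 3)) ≤ 2 * v y + v z)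
    (b1 : ∑ g ∈ P, v g - ∑ g ∈ Q, v g ≤ v y - v z + mx v P)
    (b2 : ∑ g ∈ Q, v g - ∑ g ∈ P, v g ≤ v z - v y + mx v Q) :
    Six v X P Q := by
  obtain ⟨⟨a1, a2⟩, ⟨a3, a4⟩, a5, a6⟩ := mx_facts v hd hu
  rw [sum_split v hd hu] at g1 g2
  have h1 := le_mx v hy
  have h2 := le_mx v hz
  have h3 := hv z
  have h4 := mx_nonneg v X
  refine ⟨⟨?_, ?_⟩, ⟨?_, ?_⟩, ?_, ?_⟩ <;> unfold Gap <;> linarith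

lemma exists_six [Fintype ι] (hcard : 3 ≤ Fintype.card ι) (v : Fin 3 → ι → ℝ)
    (hv : ∀ j g, 0 ≤ v j g) :
    ∃ X P Q : Finset ι, Disjoint P Q ∧ P ∪ Q = Xᶜ ∧ ∀ j, Six (v j) X P Q := by
  obtain ⟨X, i, hg, hs⟩ := step1 hcard v hv
  rcases hs with ⟨h1, h2⟩ | ⟨h1, y, z, hy, hz, hyz, hle, h2⟩
  · obtain ⟨P, Q, hd, hu, hb, b1, b2⟩ := stepTwoSorted v hv i Xᶜ
    refine ⟨X, P, Q, hd, hu, fun j => ?_⟩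
    by_cases hj : j = i
    · subst hj; exact six_A (v j) hd hu h1 h2 b1 b2
    · exact six_good (v j) hd hu (hg j hj) (hb j hj)
  · obtain ⟨P, Q, hd, hu, hb, hyP, hzQ, b1, b2⟩ := stepTwoPair v hv i Xᶜ y z hy hz hyz
    refine ⟨X, P, Q, hd, hu, fun j => ?_⟩
    by_cases hj : j = i
    · subst hj; exact six_B (v j) (hv j) hd hu hyP hzQ hle h1 h2 b1 b2
    · exact six_good (v j) hd hu (hg j hj) (hb j hj)

lemma exists_color [Fintype ι] (hcard : 3 ≤ Fintype.card ι) (v : Fin 3 → ι → ℝ)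
    (hv : ∀ j g, 0 ≤ v j g) :
    ∃ col : ι → Fin 3, ∀ j p q, p ≠ q →
      Gap (v j) (univ.filter fun g => col g = q) (univ.filter fun g => col g = p) := by
  obtain ⟨X, P, Q, hd, hu, h⟩ := exists_six hcard v hv
  let col : ι → Fin 3 := fun g => if g ∈ X then 0 else if g ∈ P then 1 else 2
  have hPX : ∀ g ∈ P, g ∉ X := fun g hg => by
    rw [← Finset.mem_compl, ← hu]; exact mem_union_left _ hg
  have hQX : ∀ g ∈ Q, g ∉ X := fun g hg => by
    rw [← Finset.mem_compl, ← hu]; exact mem_union_right _ hg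
  have hQP : ∀ g ∈ Q, g ∉ P := fun g hg hp => Finset.disjoint_left.1 hd hp hg
  have hXPQ : ∀ g, g ∉ X → g ∉ P → g ∈ Q := fun g h1 h2 => by
    rw [← Finset.mem_compl, ← hu] at h1
    exact (mem_union.1 h1).resolve_left h2
  have e0 : (univ.filter fun g => col g = 0) = X := by
    ext g; simp only [mem_filter, mem_univ, true_and, col]; split_ifs <;> simp_all
  have e1 : (univ.filter fun g => col g = 1) = P := by
    ext g; simp only [mem_filter, mem_univ, true_and, col]
    by_cases h1 : g ∈ X
    · have : g ∉ P := fun h => hPX g h h1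
      simp [h1, this]
    · by_cases h2 : g ∈ P <;> simp [h1, h2]
  have e2 : (univ.filter fun g => col g = 2) = Q := by
    ext g; simp only [mem_filter, mem_univ, true_and, col]
    by_cases h1 : g ∈ X
    · have : g ∉ Q := fun h => hQX g h h1
      simp [h1, this]
    · by_cases h2 : g ∈ P
      · have : g ∉ Q := fun h => hQP g h h2
        simp [h1, h2, this]
      · simp [h1, h2, hXPQ g h1 h2]
  refine ⟨col, fun j p q hpq => ?_⟩
  obtain ⟨⟨a1, a2⟩, ⟨a3, a4⟩, a5, a6⟩ := h j
  fin_cases p <;> fin_cases q <;> simp only [Fin.zero_eta, Fin.mk_one, Fin.reduceFinMk, e0, e1, e2] at hpq ⊢ <;>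
    first | assumption | exact absurd rfl hpq

end Lists

lemma exists_color_fin (m : ℕ) (v : Fin 3 → Fin m → ℝ) (hv : ∀ j g, 0 ≤ v j g) :
    ∃ col : Fin m → Fin 3, ∀ j p q, p ≠ q →
      Gap (v j) (univ.filter fun g => col g = q) (univ.filter fun g => col g = p) := by
  obtain ⟨col, h⟩ := exists_color (ι := Fin m ⊕ Fin 3) (by simp)
    (fun j => Sum.elim (v j) (fun _ => 0)) (by rintro j (g | g) <;> simp [hv])
  refine ⟨fun g => col (Sum.inl g), fun j p q hpq => ?_⟩
  have h1 := h j p q hpq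
  have hs : ∀ p : Fin 3, ∑ g ∈ univ.filter (fun g => col g = p),
      (Sum.elim (v j) (fun _ => 0) : Fin m ⊕ Fin 3 → ℝ) g =
      ∑ g ∈ univ.filter (fun g => col (Sum.inl g) = p), v j g := by
    intro p
    rw [Finset.sum_filter, Finset.sum_filter, Fintype.sum_sum_type]
    simp
  have hm : ∀ (A : Finset (Fin m ⊕ Fin 3)) (B : Finset (Fin m)),
      (∀ g, Sum.inl g ∈ A → g ∈ B) → mx (Sum.elim (v j) (fun _ => 0)) A ≤ mx (v j) B := by
    intro A B hAB
    refine mx_le _ (by rintro (g | g) <;> simp [hv]) (mx_nonneg _ _) ?_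
    rintro (g | g) hg
    · exact le_mx (v j) (hAB g hg)
    · exact mx_nonneg _ _
  unfold Gap at h1 ⊢
  rw [hs, hs] at h1
  refine h1.trans (add_le_add (hm _ _ ?_) (hm _ _ ?_)) <;> intro g hg <;> simpa using hg

lemma ef_of_gap (m : ℕ) (v : Fin m → ℝ) (hv : ∀ g, 0 ≤ v g) (A B : Finset (Fin m))
    (hAB : Disjoint B A) (h : Gap v B A) : ∃ Si Sj : Finset (Fin m),
    Si ⊆ univ ∧ Disjoint Si A ∧ Si.card ≤ 1 ∧ Sj ⊆ B ∧ Sj.card ≤ 1 ∧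
    ∑ g ∈ B \ Sj, v g ≤ ∑ g ∈ A ∪ Si, v g := by
  rcases B.eq_empty_or_nonempty with rfl | hB
  · exact ⟨∅, ∅, by simp, by simp, by simp, by simp, by simp, by
      simpa using Finset.sum_nonneg fun g _ => hv g⟩
  · obtain ⟨b, hb, eb⟩ := mx_exists v hv hB
    have hA : (Aᶜ).Nonempty := ⟨b, Finset.mem_compl.2 (Finset.disjoint_left.1 hAB hb)⟩
    obtain ⟨a, ha, ea⟩ := mx_exists v hv hA
    rw [Finset.mem_compl] at ha
    refine ⟨{a}, {b}, by simp, by simpa using ha, by simp, by simpa using hb, by simp, ?_⟩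
    have h1 : ∑ g ∈ B \ {b}, v g + v b = ∑ g ∈ B, v g := by
      have := Finset.sum_sdiff (f := v) (Finset.singleton_subset_iff.2 hb)
      simpa using this
    have h2 : ∑ g ∈ A ∪ {a}, v g = ∑ g ∈ A, v g + v a := by
      rw [Finset.sum_union (by simpa using ha), Finset.sum_singleton]
    unfold Gap at h
    rw [eb, ea] at h
    linarith

lemma realizable_third (m : ℕ) (v : Fin 3 → Fin m → ℝ) (hv : ∀ j g, 0 ≤ v j g) :
    Realizable v 1 1 (fun _ _ => 1/3) := by
  obtain ⟨col, h⟩ := exists_color_fin m v hv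
  have hdisj : ∀ p q : Fin 3, p ≠ q → Disjoint (univ.filter fun g => col g = p)
      (univ.filter fun g => col g = q) := by
    intro p q hpq
    rw [Finset.disjoint_left]
    intro g h1 h2
    simp only [mem_filter, mem_univ, true_and] at h1 h2
    exact hpq (h1.symm.trans h2)
  refine ⟨3, fun _ => 1/3, fun k i => univ.filter fun g => col g = i + k, fun _ => by norm_num,
    by norm_num, fun k => ⟨fun i => subset_univ _, fun i j hij => hdisj _ _ (by simpa using hij),
      fun g _ => ⟨col g - k, by simp⟩⟩, fun k i j => ?_, fun i g => ?_⟩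
  · by_cases hij : i = j
    · subst hij
      exact ⟨∅, ∅, by simp, by simp, by simp, by simp, by simp, by simp⟩
    · have hne : i + k ≠ j + k := by simpa using hij
      exact ef_of_gap m (v i) (hv i) _ _ (hdisj _ _ hne.symm) (h i _ _ hne)
  · simp only [mem_filter, mem_univ, true_and]
    have : ∀ k : Fin 3, col g = i + k ↔ k = col g - i := by
      intro k; rw [eq_sub_iff_add_eq, add_comm k i, eq_comm]
    simp only [this]
    simp


/-- For three agents and any number of items there is a fractional allocation rule which is
truthful and whose output is always EF^{+1}_{-1}-realizable. -/
theorem exists_truthful_EF11_rule_three_agents (m : ℕ) :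
    ∃ F : (Fin 3 → Fin m → ℝ) → (Fin 3 → Fin m → ℝ),
      (∀ val : Fin 3 → Fin m → ℝ, (∀ i g, 0 ≤ val i g) →
        (∀ i g, 0 ≤ F val i g) ∧ (∀ g, ∑ i, F val i g = 1)) ∧
      (∀ val : Fin 3 → Fin m → ℝ, (∀ i g, 0 ≤ val i g) →
        ∀ i : Fin 3, ∀ v' : Fin m → ℝ, (∀ g, 0 ≤ v' g) →
          ∑ g, val i g * F (Function.update val i v') i g ≤
            ∑ g, val i g * F val i g) ∧
      (∀ val : Fin 3 → Fin m → ℝ, (∀ i g, 0 ≤ val i g) →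
        Realizable val 1 1 (F val)) := by
  refine ⟨fun _ _ _ => 1/3, fun val _ => ⟨fun i g => by norm_num, fun g => by norm_num⟩,
    fun val _ i v' _ => le_refl _, fun val hval => realizable_third m val hval⟩
end

section
/- Let S be a finite set whose cardinality k is divisible by 3, and let P and Q be two partitions of S into k/3 blocks of size 3 each. Then the elements of S can be colored with 3 colors so that within every 3-element block of P and within every 3-element block of Q the three elements receive three pairwise distinct colors. -/
open Finset

theorem edge_coloring_aux {α ι κ : Type*} [DecidableEq α] [Fintype ι] [DecidableEq ι]
    [Fintype κ] [DecidableEq κ] (p : α → ι) (q : α → κ) (d : ℕ) :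
    ∀ T : Finset α, (∀ i, #{x ∈ T | p x = i} = d) → (∀ j, #{x ∈ T | q x = j} = d) →
    ∃ c : α → ℕ, (∀ x ∈ T, c x < d) ∧
      ∀ x ∈ T, ∀ y ∈ T, x ≠ y → (p x = p y ∨ q x = q y) → c x ≠ c y := by
  induction d with
  | zero =>
    intro T hp _
    have hT : ∀ x, x ∉ T := by
      intro x hx
      have h := hp (p x)
      rw [Finset.card_eq_zero] at h
      have : x ∈ ({y ∈ T | p y = p x} : Finset α) := by simp [hx]
      rw [h] at this
      simp at this
    exact ⟨fun _ => 0, fun x hx => (hT x hx).elim, fun x hx => (hT x hx).elim⟩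
  | succ d ih =>
    intro T hp hq
    have cp : ∀ s : Finset ι, #{x ∈ T | p x ∈ s} = #s * (d + 1) := by
      intro s
      rw [Finset.card_eq_sum_card_fiberwise (f := p) (t := s) (fun x hx => by simp at hx; exact hx.2)]
      rw [Finset.sum_const_nat (m := d + 1)]
      intro i hi
      rw [← hp i]
      congr 1
      ext x
      simp only [Finset.mem_filter]
      grind
    have cq : ∀ s : Finset κ, #{x ∈ T | q x ∈ s} = #s * (d + 1) := by
      intro s
      rw [Finset.card_eq_sum_card_fiberwise (f := q) (t := s) (fun x hx => by simp at hx; exact hx.2)]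
      rw [Finset.sum_const_nat (m := d + 1)]
      intro i hi
      rw [← hq i]
      congr 1
      ext x
      simp only [Finset.mem_filter]
      grind
    obtain ⟨f, hf, hft⟩ := (Finset.all_card_le_biUnion_card_iff_exists_injective
      (fun i : ι => ({x ∈ T | p x = i} : Finset α).image q)).1 (by
        intro s
        refine Nat.le_of_mul_le_mul_right ?_ (Nat.succ_pos d)
        rw [Nat.succ_eq_add_one, ← cp, ← cq]
        apply Finset.card_le_card
        intro x hx
        simp only [Finset.mem_filter, Finset.mem_biUnion, Finset.mem_image] at hx ⊢
        exact ⟨hx.1, p x, hx.2, x, ⟨hx.1, rfl⟩, rfl⟩)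
    have hcard : Fintype.card ι = Fintype.card κ := by
      have h1 := cp Finset.univ
      have h2 := cq Finset.univ
      simp only [Finset.mem_univ, Finset.filter_true, Finset.card_univ] at h1 h2
      exact Nat.eq_of_mul_eq_mul_right (Nat.succ_pos d) (h1.symm.trans h2)
    have hsurj : Function.Surjective f := ((Fintype.bijective_iff_injective_and_card f).2 ⟨hf, hcard⟩).2
    simp only [Finset.mem_image, Finset.mem_filter] at hft
    choose e he hef using hft
    have hM : ∀ x, x ∈ T \ Finset.univ.image e ↔ x ∈ T ∧ ∀ i, e i ≠ x := by
      intro x; simp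
    obtain ⟨c, hc1, hc2⟩ := ih (T \ Finset.univ.image e) (by
      intro i
      have : ({x ∈ T \ Finset.univ.image e | p x = i} : Finset α)
          = ({x ∈ T | p x = i} : Finset α).erase (e i) := by
        ext x
        rw [Finset.mem_filter, hM, Finset.mem_erase, Finset.mem_filter]
        grind
      rw [this, Finset.card_erase_of_mem (by simp [he i]), hp]
      rfl) (by
      intro j
      obtain ⟨i, rfl⟩ := hsurj j
      have : ({x ∈ T \ Finset.univ.image e | q x = f i} : Finset α)
          = ({x ∈ T | q x = f i} : Finset α).erase (e i) := by
        ext x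
        rw [Finset.mem_filter, hM, Finset.mem_erase, Finset.mem_filter]
        have := @hf
        constructor
        · grind
        · rintro ⟨h1, h2, h3⟩
          refine ⟨⟨h2, ?_⟩, h3⟩
          rintro k rfl
          rw [hef] at h3
          exact h1 (by rw [hf h3])
      rw [this, Finset.card_erase_of_mem (by simp [he i, hef i]), hq]
      rfl)
    have key : ∀ i k, (p (e i) = p (e k) ∨ q (e i) = q (e k)) → e i = e k := by
      intro i k h
      rw [(he i).2, (he k).2, hef, hef] at h
      rcases h with h | h
      · rw [h]
      · rw [hf h]
    classical
    refine ⟨fun x => if ∃ i, e i = x then d else c x, ?_, ?_⟩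
    · intro x hx
      by_cases h : ∃ i, e i = x
      · simp [h]
      · have := hc1 x ((hM x).2 ⟨hx, fun i hi => h ⟨i, hi⟩⟩)
        simp only [h, if_false]
        omega
    · intro x hx y hy hxy hpq
      by_cases h : ∃ i, e i = x <;> by_cases h' : ∃ i, e i = y
      · obtain ⟨i, rfl⟩ := h
        obtain ⟨k, rfl⟩ := h'
        exact (hxy (key i k hpq)).elim
      · have := hc1 y ((hM y).2 ⟨hy, fun i hi => h' ⟨i, hi⟩⟩)
        simp only [h, h', if_false, if_true]
        omega
      · have := hc1 x ((hM x).2 ⟨hx, fun i hi => h ⟨i, hi⟩⟩)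
        simp only [h, h', if_false, if_true]
        omega
      · simp only [h, h', if_false]
        exact hc2 x ((hM x).2 ⟨hx, fun i hi => h ⟨i, hi⟩⟩) y
          ((hM y).2 ⟨hy, fun i hi => h' ⟨i, hi⟩⟩) hxy hpq

theorem block_fun_aux {α : Type*} [Fintype α] [DecidableEq α] (P : Finset (Finset α))
    (hP3 : ∀ B ∈ P, B.card = 3)
    (hPdisj : ∀ B ∈ P, ∀ C ∈ P, B ≠ C → Disjoint B C)
    (hPcov : ∀ x : α, ∃ B ∈ P, x ∈ B) :
    ∃ p : α → P, (∀ i, #{x ∈ (Finset.univ : Finset α) | p x = i} = 3) ∧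
      ∀ B (hB : B ∈ P), ∀ x ∈ B, p x = ⟨B, hB⟩ := by
  choose b hb hxb using hPcov
  have key : ∀ B (hB : B ∈ P), ∀ x ∈ B, (⟨b x, hb x⟩ : P) = ⟨B, hB⟩ := by
    intro B hB x hx
    by_contra h
    have h' : b x ≠ B := fun h2 => h (Subtype.ext h2)
    exact Finset.disjoint_left.1 (hPdisj _ (hb x) _ hB h') (hxb x) hx
  refine ⟨fun x => ⟨b x, hb x⟩, ?_, key⟩
  rintro ⟨B, hB⟩
  rw [← hP3 B hB]
  congr 1
  ext x
  simp only [Finset.mem_filter, Finset.mem_univ, true_and]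
  constructor
  · intro h
    have h2 : b x = B := congrArg Subtype.val h
    exact h2 ▸ hxb x
  · exact key B hB x

/-- Given two partitions `P` and `Q` of a finite set into blocks of size 3, the elements can
be 3-colored so that within every block of `P` and every block of `Q` the three elements get
pairwise distinct colors. -/
theorem exists_three_coloring_of_two_triple_partitions {α : Type*} [Fintype α]
    [DecidableEq α] (P Q : Finset (Finset α))
    (hP3 : ∀ B ∈ P, B.card = 3) (hQ3 : ∀ B ∈ Q, B.card = 3)
    (hPdisj : ∀ B ∈ P, ∀ C ∈ P, B ≠ C → Disjoint B C)
    (hQdisj : ∀ B ∈ Q, ∀ C ∈ Q, B ≠ C → Disjoint B C)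
    (hPcov : ∀ x : α, ∃ B ∈ P, x ∈ B)
    (hQcov : ∀ x : α, ∃ B ∈ Q, x ∈ B) :
    ∃ c : α → Fin 3,
      (∀ B ∈ P, ∀ x ∈ B, ∀ y ∈ B, x ≠ y → c x ≠ c y) ∧
      (∀ B ∈ Q, ∀ x ∈ B, ∀ y ∈ B, x ≠ y → c x ≠ c y) := by
  obtain ⟨p, hp, hp'⟩ := block_fun_aux P hP3 hPdisj hPcov
  obtain ⟨q, hq, hq'⟩ := block_fun_aux Q hQ3 hQdisj hQcov
  obtain ⟨c, hc1, hc2⟩ := edge_coloring_aux p q 3 Finset.univ hp hq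
  refine ⟨fun x => ⟨c x, hc1 x (Finset.mem_univ x)⟩, ?_, ?_⟩
  · intro B hB x hx y hy hxy h
    exact hc2 x (Finset.mem_univ x) y (Finset.mem_univ y) hxy
      (Or.inl ((hp' B hB x hx).trans (hp' B hB y hy).symm)) (congrArg Fin.val h)
  · intro B hB x hx y hy hxy h
    exact hc2 x (Finset.mem_univ x) y (Finset.mem_univ y) hxy
      (Or.inr ((hq' B hB x hx).trans (hq' B hB y hy).symm)) (congrArg Fin.val h)
end

section
/- Let (A_1,A_2,A_3) and (A'_1,A'_2,A'_3) be allocations of two disjoint finite sets of indivisible items among the same three agents with additive valuations. If either (i) (A_1,A_2,A_3) is EF1 and (A'_1,A'_2,A'_3) is EF^{+1}_{-0}, or (ii) (A_1,A_2,A_3) is envy-free and (A'_1,A'_2,A'_3) is EF^{+1}_{-1}, then the combined allocation (A_1 ∪ A'_1, A_2 ∪ A'_2, A_3 ∪ A'_3) is EF^{+1}_{-1}. Moreover, if one of the two conditions holds for a particular agent i, then the combined allocation is EF^{+1}_{-1} for agent i. -/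
open Finset

/-- The allocation `A` of the items `M` is EF^{+u}_{-w} for the particular agent `i`. -/
def EFpmFor {ι : Type*} [DecidableEq ι] {n : ℕ} (M : Finset ι) (v : Fin n → ι → ℝ)
    (A : Fin n → Finset ι) (u w : ℕ) (i : Fin n) : Prop :=
  ∀ j : Fin n, ∃ Si Sj : Finset ι,
    Si ⊆ M ∧ Disjoint Si (A i) ∧ Si.card ≤ u ∧
    Sj ⊆ A j ∧ Sj.card ≤ w ∧
    ∑ g ∈ A j \ Sj, v i g ≤ ∑ g ∈ A i ∪ Si, v i g

theorem combine_pair {ι : Type*} [DecidableEq ι] (f : ι → ℝ)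
    (A A' : Fin 3 → Finset ι) (hdisj : ∀ i j, Disjoint (A i) (A' j)) (i j : Fin 3)
    (S T T' : Finset ι) (hS : S ⊆ A' 0 ∪ A' 1 ∪ A' 2) (hSd : Disjoint S (A' i))
    (hSc : S.card ≤ 1) (hT : T ⊆ A j) (hT' : T' ⊆ A' j) (hc : T.card + T'.card ≤ 1)
    (h : ∑ g ∈ A j \ T, f g ≤ ∑ g ∈ A i, f g)
    (h' : ∑ g ∈ A' j \ T', f g ≤ ∑ g ∈ A' i ∪ S, f g) :
    ∃ Si Sj : Finset ι,
      Si ⊆ (A 0 ∪ A 1 ∪ A 2) ∪ (A' 0 ∪ A' 1 ∪ A' 2) ∧ Disjoint Si (A i ∪ A' i) ∧ Si.card ≤ 1 ∧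
      Sj ⊆ A j ∪ A' j ∧ Sj.card ≤ 1 ∧
      ∑ g ∈ (A j ∪ A' j) \ Sj, f g ≤ ∑ g ∈ (A i ∪ A' i) ∪ Si, f g := by
  have hM : Disjoint (A i) (A' 0 ∪ A' 1 ∪ A' 2) := by
    simp only [Finset.disjoint_union_right]
    exact ⟨⟨hdisj i 0, hdisj i 1⟩, hdisj i 2⟩
  have hAS : Disjoint (A i) S := hM.mono_right hS
  refine ⟨S, T ∪ T', hS.trans Finset.subset_union_right,
    Finset.disjoint_union_right.2 ⟨hAS.symm, hSd⟩, hSc,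
    Finset.union_subset_union hT hT', (Finset.card_union_le _ _).trans hc, ?_⟩
  have e1 : (A j ∪ A' j) \ (T ∪ T') = (A j \ T) ∪ (A' j \ T') := by
    have hd := Finset.disjoint_left.1 (hdisj j j)
    ext x
    have h1 := @hT x
    have h2 := @hT' x
    have h3 := @hd x
    simp only [Finset.mem_sdiff, Finset.mem_union]
    tauto
  rw [e1, Finset.union_assoc, Finset.sum_union, Finset.sum_union]
  · exact add_le_add h h'
  · exact Finset.disjoint_union_right.2 ⟨hdisj i i, hAS⟩
  · exact (hdisj j j).mono Finset.sdiff_subset Finset.sdiff_subset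

/-- Combining an allocation `A` of a set of items with an allocation `A'` of a disjoint set
of items (three agents): if `A` is EF1 and `A'` is EF^{+1}_{-0}, or `A` is envy-free and
`A'` is EF^{+1}_{-1}, the combined allocation is EF^{+1}_{-1}; and likewise for any single
agent `i` for whom one of the two conditions holds. -/
theorem combine_allocations_EF11 {ι : Type*} [DecidableEq ι]
    (v : Fin 3 → ι → ℝ) (hv : ∀ i g, 0 ≤ v i g)
    (A A' : Fin 3 → Finset ι)
    (hAdisj : ∀ i j, i ≠ j → Disjoint (A i) (A j))
    (hA'disj : ∀ i j, i ≠ j → Disjoint (A' i) (A' j))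
    (hdisj : ∀ i j, Disjoint (A i) (A' j)) :
    ((EFpm (A 0 ∪ A 1 ∪ A 2) v A 0 1 ∧ EFpm (A' 0 ∪ A' 1 ∪ A' 2) v A' 1 0) →
      EFpm ((A 0 ∪ A 1 ∪ A 2) ∪ (A' 0 ∪ A' 1 ∪ A' 2)) v (fun i => A i ∪ A' i) 1 1) ∧
    (((∀ i j : Fin 3, ∑ g ∈ A j, v i g ≤ ∑ g ∈ A i, v i g) ∧
        EFpm (A' 0 ∪ A' 1 ∪ A' 2) v A' 1 1) →
      EFpm ((A 0 ∪ A 1 ∪ A 2) ∪ (A' 0 ∪ A' 1 ∪ A' 2)) v (fun i => A i ∪ A' i) 1 1) ∧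
    (∀ i : Fin 3,
      ((EFpmFor (A 0 ∪ A 1 ∪ A 2) v A 0 1 i ∧ EFpmFor (A' 0 ∪ A' 1 ∪ A' 2) v A' 1 0 i) ∨
        ((∀ j : Fin 3, ∑ g ∈ A j, v i g ≤ ∑ g ∈ A i, v i g) ∧
          EFpmFor (A' 0 ∪ A' 1 ∪ A' 2) v A' 1 1 i)) →
      EFpmFor ((A 0 ∪ A 1 ∪ A 2) ∪ (A' 0 ∪ A' 1 ∪ A' 2)) v (fun i => A i ∪ A' i) 1 1 i) := by
  have key : ∀ i : Fin 3,
      ((EFpmFor (A 0 ∪ A 1 ∪ A 2) v A 0 1 i ∧ EFpmFor (A' 0 ∪ A' 1 ∪ A' 2) v A' 1 0 i) ∨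
        ((∀ j : Fin 3, ∑ g ∈ A j, v i g ≤ ∑ g ∈ A i, v i g) ∧
          EFpmFor (A' 0 ∪ A' 1 ∪ A' 2) v A' 1 1 i)) →
      EFpmFor ((A 0 ∪ A 1 ∪ A 2) ∪ (A' 0 ∪ A' 1 ∪ A' 2)) v (fun i => A i ∪ A' i) 1 1 i := by
    rintro i (⟨h1, h2⟩ | ⟨h1, h2⟩) j
    · obtain ⟨S, T, _, _, hS0, hT, hTc, h⟩ := h1 j
      obtain ⟨S', T', hS', hSd', hSc', hT', hTc', h'⟩ := h2 j
      have hSe : S = ∅ := Finset.card_eq_zero.1 (by omega)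
      subst hSe
      rw [Finset.union_empty] at h
      exact combine_pair (v i) A A' hdisj i j S' T T' hS' hSd' hSc' hT hT' (by omega) h h'
    · obtain ⟨S', T', hS', hSd', hSc', hT', hTc', h'⟩ := h2 j
      exact combine_pair (v i) A A' hdisj i j S' ∅ T' hS' hSd' hSc' (Finset.empty_subset _) hT'
        (by simpa using hTc') (by simpa using h1 j) h'
  exact ⟨fun h i => key i (Or.inl ⟨h.1 i, h.2 i⟩), fun h i => key i (Or.inr ⟨h.1 i, h.2 i⟩), key⟩
end

section
/- For any n agents with additive valuations over a finite set M of indivisible items, there exists a finite probability distribution over allocations, each of which is EF^{+(n-1)^2}_{-(n-1)}, under which every item is allocated to every agent with probability exactly 1/n; that is, the equal-division fractional allocation is EF^{+(n-1)^2}_{-(n-1)}-realizable. -/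
open Finset

/-- Basic feasible solutions: a nonnegative solution of a linear system can be chosen with support
at most the number of equations. -/
lemma basic_solution {J C : Type*} [Fintype J] [DecidableEq J] [Fintype C]
    (L : (J → ℝ) →ₗ[ℝ] (C → ℝ)) (b : C → ℝ) (h : ∃ x : J → ℝ, (∀ j, 0 ≤ x j) ∧ L x = b) :
    ∃ x : J → ℝ, (∀ j, 0 ≤ x j) ∧ L x = b ∧
      (univ.filter (fun j => x j ≠ 0)).card ≤ Fintype.card C := by
  classical
  by_contra hcon
  push Not at hcon
  have key : ∀ N : ℕ, ∀ x : J → ℝ, (∀ j, 0 ≤ x j) → L x = b →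
      (univ.filter (fun j => x j ≠ 0)).card = N → False := by
    intro N
    induction N using Nat.strong_induction_on with
    | _ N ih =>
      intro x hx hL hN
      have hlt := hcon x hx hL
      set T := univ.filter (fun j => x j ≠ 0) with hT
      -- a kernel direction supported on `T`
      have hdir : ∃ d : J → ℝ, d ≠ 0 ∧ L d = 0 ∧ ∀ j, x j = 0 → d j = 0 := by
        let E : (T → ℝ) →ₗ[ℝ] (J → ℝ) :=
          Function.ExtendByZero.linearMap ℝ (Subtype.val : T → J)
        have hk : LinearMap.ker (L ∘ₗ E) ≠ ⊥ := by
          apply LinearMap.ker_ne_bot_of_finrank_lt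
          simpa using hlt
        obtain ⟨y, hy, hy0⟩ := (Submodule.ne_bot_iff _).1 hk
        refine ⟨E y, ?_, by simpa using hy, ?_⟩
        · intro h0
          apply hy0
          funext t
          have h1 : Function.extend (Subtype.val : T → J) y 0 t.1 = 0 := congrFun h0 t.1
          rwa [Subtype.val_injective.extend_apply] at h1
        · intro j hj
          have : ¬ ∃ t : T, t.1 = j := by
            rintro ⟨t, rfl⟩
            have := t.2
            simp only [hT, mem_filter] at this
            exact this.2 hj
          change Function.extend (Subtype.val : T → J) y 0 j = 0
          rw [Function.extend_apply' _ _ _ this]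
          rfl
      have hdir2 : ∃ d : J → ℝ, (∃ j, d j < 0) ∧ L d = 0 ∧ ∀ j, x j = 0 → d j = 0 := by
        obtain ⟨d, hd, hLd, hs⟩ := hdir
        obtain ⟨j, hj⟩ := Function.ne_iff.1 hd
        rcases lt_or_gt_of_ne hj with hj | hj
        · exact ⟨d, ⟨j, hj⟩, hLd, hs⟩
        · refine ⟨-d, ⟨j, by simpa using hj⟩, by simp [hLd], ?_⟩
          intro j hj
          simp [hs j hj]
      obtain ⟨d, ⟨j0, hj0⟩, hLd, hs⟩ := hdir2
      obtain ⟨j1, hj1, hmin⟩ := (univ.filter (fun j => d j < 0)).exists_min_image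
        (fun j => x j / (-d j)) ⟨j0, by simpa using hj0⟩
      have hd1 : d j1 < 0 := by simpa using hj1
      set t := x j1 / (-d j1) with ht
      have ht0 : 0 ≤ t := div_nonneg (hx _) (by linarith)
      refine ih _ ?_ (x + t • d) ?_ ?_ rfl
      · rw [← hN]
        apply card_lt_card
        rw [Finset.ssubset_iff_of_subset]
        · refine ⟨j1, ?_, ?_⟩
          · simp only [hT, mem_filter, mem_univ, true_and]
            intro h0
            have := hs _ h0
            linarith
          · have : x j1 + t * d j1 = 0 := by
              rw [ht]
              have hne : d j1 ≠ 0 := hd1.ne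
              rw [div_neg, neg_mul, div_mul_cancel₀ _ hne, add_neg_cancel]
            simp [this]
        · intro j hj
          simp only [hT, mem_filter, mem_univ, true_and] at hj ⊢
          intro h0
          apply hj
          simp [h0, hs j h0]
      · intro j
        simp only [Pi.add_apply, Pi.smul_apply, smul_eq_mul]
        rcases lt_or_ge (d j) 0 with hj | hj
        · have := hmin j (by simpa using hj)
          rw [le_div_iff₀ (by linarith)] at this
          linarith
        · have := hx j
          positivity
      · simp [hL, hLd]
  obtain ⟨x, hx, hL⟩ := h
  exact key _ x hx hL rfl

/-- Balanced distribution of at most `n (n-1)` items. -/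
lemma balanced (n m : ℕ) (hn : 1 ≤ n) (F : Finset (Fin m)) (hF : F.card ≤ n * (n - 1)) :
    ∃ e : Fin m → Fin n, ∀ k, (F.filter (fun g => e g = k)).card ≤ n - 1 ∧
      (F.filter (fun g => e g ≠ k)).card ≤ (n - 1) ^ 2 := by
  classical
  let r : Fin m → ℕ := fun g => if h : g ∈ F then (F.equivFin ⟨g, h⟩).1 else 0
  refine ⟨fun g => ⟨r g % n, Nat.mod_lt _ hn⟩, fun k => ?_⟩
  have hcount : (F.filter (fun g => (⟨r g % n, Nat.mod_lt _ hn⟩ : Fin n) = k)).card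
      = Nat.count (· ≡ k.1 [MOD n]) F.card := by
    rw [Nat.count_eq_card_filter_range]
    apply card_bij (fun g _ => r g)
    · intro g hg
      simp only [mem_filter] at hg
      simp only [mem_filter, mem_range]
      refine ⟨by simp [r, hg.1], ?_⟩
      have := congrArg Fin.val hg.2
      simp only at this
      rw [Nat.ModEq, this, Nat.mod_eq_of_lt k.2]
    · intro a ha b hb hab
      simp only [mem_filter] at ha hb
      simp only [r, ha.1, hb.1, dif_pos] at hab
      have := F.equivFin.injective (Fin.ext hab)
      simpa using this
    · intro q hq
      simp only [mem_filter, mem_range] at hq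
      refine ⟨(F.equivFin.symm ⟨q, hq.1⟩).1, ?_, by simp [r]⟩
      simp only [mem_filter]
      refine ⟨by simp, Fin.ext ?_⟩
      have := hq.2
      rw [Nat.ModEq, Nat.mod_eq_of_lt k.2] at this
      simpa [r] using this
  have hsum := card_filter_add_card_filter_not (s := F)
    (fun g => (⟨r g % n, Nat.mod_lt _ hn⟩ : Fin n) = k)
  rw [Nat.count_modEq_card _ hn] at hcount
  have hdm := Nat.div_add_mod F.card n
  have hml := Nat.mod_lt F.card hn
  simp only [ne_eq]
  generalize (F.filter (fun g => (⟨r g % n, Nat.mod_lt _ hn⟩ : Fin n) = k)).card = X at *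
  generalize (F.filter (fun g => ¬ (⟨r g % n, Nat.mod_lt _ hn⟩ : Fin n) = k)).card = Y at *
  generalize F.card = f at *
  generalize f / n = q at *
  generalize f % n = s at *
  obtain ⟨a, rfl⟩ : ∃ a, n = a + 1 := ⟨n - 1, by omega⟩
  simp only [Nat.add_sub_cancel] at *
  have hqa : q ≤ a := by
    by_contra hc
    push Not at hc
    nlinarith
  rcases hqa.lt_or_eq with h | h
  · have hX1 : X ≤ q + 1 := by rw [hcount]; split_ifs <;> omega
    have hX2 : q ≤ X := by rw [hcount]; omega
    refine ⟨by omega, ?_⟩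
    obtain ⟨c, rfl⟩ : ∃ c, a = q + 1 + c := ⟨a - q - 1, by omega⟩
    nlinarith
  · subst h
    have hs : s = 0 := by nlinarith
    subst hs
    simp at hcount
    subst hcount
    exact ⟨le_rfl, by nlinarith⟩

/-- A consensus division with few fractional items. -/
lemma consensus (n m : ℕ) (hn : 1 ≤ n) (v : Fin n → Fin m → ℝ) :
    ∃ x : Fin m → Fin n → ℝ, (∀ g k, 0 ≤ x g k) ∧ (∀ g, ∑ k, x g k = 1) ∧
      (∀ i k, ∑ g, v i g * x g k = (∑ g, v i g) / n) ∧
      (univ.filter (fun g => ∀ k, x g k ≠ 1)).card ≤ n * (n - 1) := by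
  classical
  let k0 : Fin n := ⟨0, hn⟩
  have hn0 : (n : ℝ) ≠ 0 := by positivity
  let L : (Fin m × Fin n → ℝ) →ₗ[ℝ] (Fin m ⊕ (Fin n × {k : Fin n // k ≠ k0}) → ℝ) :=
    { toFun := fun x => Sum.elim (fun g => ∑ k, x (g, k))
        (fun p => ∑ g, v p.1 g * x (g, p.2.1))
      map_add' := by
        intro x y
        funext c
        rcases c with g | p <;> simp [mul_add, sum_add_distrib]
      map_smul' := by
        intro a x
        funext c
        rcases c with g | p
        · simp [mul_sum]
        · simp only [Sum.elim_inr, Pi.smul_apply, smul_eq_mul, RingHom.id_apply, mul_sum]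
          exact sum_congr rfl fun g _ => by ring }
  obtain ⟨x, hx, hL, hcard⟩ := basic_solution L
    (Sum.elim (fun _ => 1) (fun p => (∑ g, v p.1 g) / n))
    ⟨fun _ => 1 / n, fun _ => by positivity, by
      funext c
      rcases c with g | p
      · simp [L, hn0]
      · simp [L, ← sum_mul, div_eq_mul_inv]⟩
  have hrow : ∀ g, ∑ k, x (g, k) = 1 := fun g => congrFun hL (Sum.inl g)
  have hcol : ∀ i k, k ≠ k0 → ∑ g, v i g * x (g, k) = (∑ g, v i g) / n :=
    fun i k hk => congrFun hL (Sum.inr (i, ⟨k, hk⟩))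
  refine ⟨fun g k => x (g, k), fun g k => hx _, hrow, ?_, ?_⟩
  · intro i k
    by_cases hk : k = k0
    · subst hk
      have htot : ∑ k, ∑ g, v i g * x (g, k) = ∑ g, v i g := by
        rw [sum_comm]
        exact sum_congr rfl fun g _ => by rw [← mul_sum, hrow, mul_one]
      rw [← add_sum_erase _ _ (mem_univ k0), sum_congr rfl
        (fun k hk => hcol i k (ne_of_mem_erase hk))] at htot
      simp only [sum_const, card_erase_of_mem (mem_univ k0), card_univ, Fintype.card_fin,
        nsmul_eq_mul, Nat.cast_sub hn, Nat.cast_one] at htot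
      field_simp at htot ⊢
      linarith
    · exact hcol i k hk
  · set F := univ.filter (fun g : Fin m => ∀ k, x (g, k) ≠ 1) with hF
    have hC : Fintype.card (Fin m ⊕ (Fin n × {k : Fin n // k ≠ k0})) = m + n * (n - 1) := by
      simp [Fintype.card_subtype_compl]
    rw [hC] at hcard
    have hfib : (univ.filter (fun j => x j ≠ 0)).card
        = ∑ g : Fin m, (univ.filter (fun k => x (g, k) ≠ 0)).card := by
      simp only [card_filter, Fintype.sum_prod_type]
    have hge : ∀ g : Fin m, 1 + (if g ∈ F then 1 else 0) ≤
        (univ.filter (fun k => x (g, k) ≠ 0)).card := by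
      intro g
      have hsupp : ∑ k ∈ univ.filter (fun k => x (g, k) ≠ 0), x (g, k) = 1 := by
        rw [sum_filter_ne_zero, hrow]
      have hpos : 0 < (univ.filter (fun k => x (g, k) ≠ 0)).card := by
        rw [card_pos, nonempty_iff_ne_empty]
        intro h
        rw [h] at hsupp
        simp at hsupp
      split_ifs with hg
      · by_contra hc
        have h1 : (univ.filter (fun k => x (g, k) ≠ 0)).card = 1 := by omega
        obtain ⟨k, hk⟩ := card_eq_one.1 h1
        rw [hk, sum_singleton] at hsupp
        simp only [hF, mem_filter] at hg
        exact hg.2 k hsupp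
      · omega
    have hle := sum_le_sum (s := univ) fun g _ => hge g
    rw [← hfib, sum_add_distrib] at hle
    simp only [sum_const, card_univ, Fintype.card_fin, smul_eq_mul, mul_one, sum_boole,
      filter_univ_mem, Nat.cast_id] at hle
    omega

/-- For any `n` agents with additive valuations, the equal-division fractional allocation is
EF^{+(n-1)²}_{-(n-1)}-realizable: some finite distribution over EF^{+(n-1)²}_{-(n-1)}
allocations gives every item to every agent with probability exactly `1/n`. -/
theorem equal_division_EFpm_realizable (n m : ℕ) (hn : 1 ≤ n)
    (v : Fin n → Fin m → ℝ) (hv : ∀ i g, 0 ≤ v i g) :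
    ∃ (K : ℕ) (p : Fin K → ℝ) (A : Fin K → Fin n → Finset (Fin m)),
      (∀ k, 0 ≤ p k) ∧ (∑ k, p k = 1) ∧
      (∀ k, IsPartition Finset.univ (A k)) ∧
      (∀ k, EFpm Finset.univ v (A k) ((n - 1) ^ 2) (n - 1)) ∧
      (∀ i g, ∑ k, (if g ∈ A k i then p k else 0) = 1 / n) := by
  classical
  have : NeZero n := ⟨by omega⟩
  have hn0 : (n : ℝ) ≠ 0 := by positivity
  obtain ⟨x, hx, hrow, hcol, hcard⟩ := consensus n m hn v
  set F := univ.filter (fun g : Fin m => ∀ k, x g k ≠ 1) with hF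
  obtain ⟨e, he⟩ := balanced n m hn F hcard
  have hint : ∀ g, ∃ k, g ∉ F → x g k = 1 := by
    intro g
    by_cases hg : g ∈ F
    · exact ⟨⟨0, hn⟩, fun h => absurd hg h⟩
    · simp only [hF, mem_filter, mem_univ, true_and] at hg
      push Not at hg
      obtain ⟨k, hk⟩ := hg
      exact ⟨k, fun _ => hk⟩
  choose a ha using hint
  have hle1 : ∀ g k, x g k ≤ 1 := by
    intro g k
    rw [← hrow g]
    exact single_le_sum (fun k _ => hx g k) (mem_univ k)
  have hzero : ∀ g, g ∉ F → ∀ k, k ≠ a g → x g k = 0 := by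
    intro g hg k hk
    have h := hrow g
    rw [← add_sum_erase _ _ (mem_univ (a g)), ha g hg] at h
    have h2 := single_le_sum (f := fun k => x g k) (fun k _ => hx g k)
      (mem_erase.2 ⟨hk, mem_univ k⟩)
    linarith [hx g k]
  let c : Fin m → Fin n := fun g => if g ∈ F then e g else a g
  have main : ∀ i j k : Fin n,
      ∑ g ∈ (univ.filter (fun g => c g = k)) \ (F.filter (fun g => e g = k)), v i g ≤
      ∑ g ∈ (univ.filter (fun g => c g = j)) ∪ (F.filter (fun g => e g ≠ j)), v i g := by
    intro i j k
    have h1 : ∑ g ∈ (univ.filter (fun g => c g = k)) \ (F.filter (fun g => e g = k)), v i g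
        ≤ ∑ g, v i g * x g k := by
      refine le_trans (le_of_eq ?_) (sum_le_sum_of_subset_of_nonneg (subset_univ
        ((univ.filter (fun g => c g = k)) \ (F.filter (fun g => e g = k))))
        (fun g _ _ => mul_nonneg (hv i g) (hx g k)))
      refine sum_congr rfl fun g hg => ?_
      simp only [mem_sdiff, mem_filter, mem_univ, true_and, c] at hg
      by_cases hgF : g ∈ F
      · simp [hgF] at hg
      · simp only [hgF, if_false] at hg
        rw [← hg.1, ha g hgF, mul_one]
    have h2 : ∑ g, v i g * x g j ≤
        ∑ g ∈ (univ.filter (fun g => c g = j)) ∪ (F.filter (fun g => e g ≠ j)), v i g := by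
      rw [← sum_subset (subset_univ
        ((univ.filter (fun g => c g = j)) ∪ (F.filter (fun g => e g ≠ j))))]
      · exact sum_le_sum fun g _ => mul_le_of_le_one_right (hv i g) (hle1 g j)
      · intro g _ hg
        simp only [mem_union, mem_filter, mem_univ, true_and, c, not_or] at hg
        by_cases hgF : g ∈ F
        · simp [hgF] at hg
        · simp only [hgF, if_false] at hg
          rw [hzero g hgF j (Ne.symm hg.1), mul_zero]
    rw [hcol] at h1 h2
    exact h1.trans h2
  refine ⟨n, fun _ => 1 / n, fun t i => univ.filter (fun g => c g = i + t),
    fun _ => by positivity, by simp [hn0], ?_, ?_, ?_⟩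
  · intro t
    refine ⟨fun i => subset_univ _, ?_, ?_⟩
    · intro i j hij
      rw [disjoint_left]
      intro g h1 h2
      simp only [mem_filter, mem_univ, true_and] at h1 h2
      exact hij (add_right_cancel (h1.symm.trans h2))
    · intro g _
      exact ⟨c g - t, by simp⟩
  · intro t i j
    refine ⟨F.filter (fun g => e g ≠ i + t), F.filter (fun g => e g = j + t), subset_univ _,
      ?_, (he _).2, ?_, (he _).1, main i (i + t) (j + t)⟩
    · rw [disjoint_left]
      intro g h1 h2
      simp only [mem_filter, mem_univ, true_and, c] at h1 h2
      rw [if_pos h1.1] at h2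
      exact h1.2 h2
    · intro g h
      simp only [mem_filter, mem_univ, true_and, c] at h ⊢
      rw [if_pos h.1, h.2]
  · intro i g
    have : ∀ t : Fin n, (g ∈ univ.filter (fun g => c g = i + t)) ↔ t = c g - i := by
      intro t
      simp only [mem_filter, mem_univ, true_and]
      rw [eq_sub_iff_add_eq, add_comm t i, eq_comm]
    simp only [this]
    simp
end

section
/- Given n agents with additive valuations v_1,…,v_n over a finite set M of m items, there exists a fractional partition (x_{jg}) for j ∈ {1,…,n} and g ∈ M with 0 ≤ x_{jg} ≤ 1 and ∑_{j=1}^n x_{jg} = 1 for every item g, such that ∑_{g ∈ M} v_i(g)·x_{jg} = v_i(M)/n for every pair of indices i, j ∈ {1,…,n}, and the number of items g for which some x_{jg} lies strictly between 0 and 1 is at most n(n-1). -/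
open Finset

/-- Feasibility of a fractional partition. -/
def FeasPart {ι : Type*} [Fintype ι] {n : ℕ} (v : Fin n → ι → ℝ) (x : Fin n → ι → ℝ) : Prop :=
  (∀ j g, 0 ≤ x j g) ∧ (∀ g, ∑ j, x j g = 1) ∧
    (∀ i j : Fin n, ∑ g, v i g * x j g = (∑ g, v i g) / n)

theorem exists_kernel_dir {ι : Type*} [Fintype ι] [DecidableEq ι]
    (n : ℕ) (hn : 1 ≤ n) (v : Fin n → ι → ℝ) (x : Fin n → ι → ℝ)
    (hc : Fintype.card ι + n * (n - 1) < (univ.filter (fun p : Fin n × ι => x p.1 p.2 ≠ 0)).card) :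
    ∃ y : Fin n → ι → ℝ, y ≠ 0 ∧ (∀ g, ∑ j, y j g = 0) ∧
      (∀ i j : Fin n, ∑ g, v i g * y j g = 0) ∧ (∀ j g, x j g = 0 → y j g = 0) := by
  let j0 : Fin n := ⟨0, hn⟩
  let L : (Fin n → ι → ℝ) →ₗ[ℝ]
      ((ι → ℝ) × ((Fin n × {j : Fin n // j ≠ j0}) → ℝ) ×
        ({p : Fin n × ι // x p.1 p.2 = 0} → ℝ)) :=
    { toFun := fun y => (fun g => ∑ j, y j g, fun q => ∑ g, v q.1 g * y q.2 g,
        fun p => y p.1.1 p.1.2)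
      map_add' := by
        intro a b
        ext <;> simp [Finset.sum_add_distrib, mul_add]
      map_smul' := by
        intro c a
        ext <;> simp [Finset.mul_sum, mul_left_comm] }
  have hk : LinearMap.ker L ≠ ⊥ := by
    apply LinearMap.ker_ne_bot_of_finrank_lt
    have h1 : Fintype.card {p : Fin n × ι // x p.1 p.2 = 0} +
        (univ.filter (fun p : Fin n × ι => x p.1 p.2 ≠ 0)).card = n * Fintype.card ι := by
      rw [Fintype.card_subtype, Finset.card_filter_add_card_filter_not]
      simp
    have h2 : Fintype.card {j : Fin n // j ≠ j0} = n - 1 := by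
      simp [Fintype.card_subtype_compl]
    simp only [Module.finrank_prod, Module.finrank_fintype_fun_eq_card, Module.finrank_pi_fintype,
      Fintype.card_prod, Fintype.card_fin, h2, sum_const, card_univ, smul_eq_mul]
    omega
  obtain ⟨y, hy, hy0⟩ := (Submodule.ne_bot_iff _).1 hk
  have hy' : L y = 0 := hy
  have e1 : ∀ g, ∑ j, y j g = 0 := fun g => congrFun (congrArg Prod.fst hy') g
  have e2 : ∀ i j, j ≠ j0 → ∑ g, v i g * y j g = 0 := fun i j hj =>
    congrFun (congrArg (fun z => z.2.1) hy') (i, ⟨j, hj⟩)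
  have e3 : ∀ j g, x j g = 0 → y j g = 0 := fun j g h =>
    congrFun (congrArg (fun z => z.2.2) hy') ⟨(j, g), h⟩
  refine ⟨y, hy0, e1, ?_, e3⟩
  intro i j
  by_cases hj : j = j0
  · rw [hj]
    have : ∑ j, ∑ g, v i g * y j g = 0 := by
      rw [Finset.sum_comm]
      simp [← Finset.mul_sum, e1]
    rwa [Finset.sum_eq_single j0 (fun b _ hb => e2 i b hb) (by simp)] at this
  · exact e2 i j hj

theorem exists_smaller_support {ι : Type*} [Fintype ι] [DecidableEq ι]
    (n : ℕ) (hn : 1 ≤ n) (v : Fin n → ι → ℝ) (x : Fin n → ι → ℝ) (hx : FeasPart v x)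
    (hc : Fintype.card ι + n * (n - 1) < (univ.filter (fun p : Fin n × ι => x p.1 p.2 ≠ 0)).card) :
    ∃ x' : Fin n → ι → ℝ, FeasPart v x' ∧
      (univ.filter (fun p : Fin n × ι => x' p.1 p.2 ≠ 0)).card <
      (univ.filter (fun p : Fin n × ι => x p.1 p.2 ≠ 0)).card := by
  obtain ⟨y, hy0, h1, h2, h3⟩ := exists_kernel_dir n hn v x hc
  obtain ⟨f1, f2, f3⟩ := hx
  have hne : (univ.filter (fun p : Fin n × ι => y p.1 p.2 < 0)).Nonempty := by
    by_contra hcon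
    rw [Finset.not_nonempty_iff_eq_empty, Finset.filter_eq_empty_iff] at hcon
    apply hy0
    ext j g
    have := (Finset.sum_eq_zero_iff_of_nonneg
      (fun j _ => not_lt.1 (hcon (x := (j, g)) (mem_univ _)))).1 (h1 g)
    exact this j (mem_univ _)
  obtain ⟨p, hp, hmin⟩ := Finset.exists_min_image _ (fun p => x p.1 p.2 / (- y p.1 p.2)) hne
  have hpn : y p.1 p.2 < 0 := (Finset.mem_filter.1 hp).2
  set t := x p.1 p.2 / (- y p.1 p.2) with ht
  have ht0 : 0 ≤ t := div_nonneg (f1 _ _) (by linarith)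
  have htp : x p.1 p.2 + t * y p.1 p.2 = 0 := by
    rw [ht]; field_simp [hpn.ne]; ring
  refine ⟨fun j g => x j g + t * y j g, ⟨?_, ?_, ?_⟩, ?_⟩
  · intro j g
    by_cases h : y j g < 0
    · have := hmin (j, g) (by simp [h])
      simp only at this
      rw [le_div_iff₀ (by linarith)] at this
      linarith
    · have := mul_nonneg ht0 (not_lt.1 h)
      have := f1 j g
      linarith
  · intro g
    rw [Finset.sum_add_distrib, ← Finset.mul_sum, h1, f2]; simp
  · intro i j
    simp only [mul_add, Finset.sum_add_distrib, f3]
    simp only [mul_left_comm _ t, ← Finset.mul_sum, h2]; simp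
  · apply Finset.card_lt_card
    rw [Finset.ssubset_iff_of_subset]
    · refine ⟨p, ?_, ?_⟩
      · simp only [mem_filter, mem_univ, true_and]
        exact fun h => hpn.ne (h3 _ _ h)
      · simp [htp]
    · intro q
      simp only [mem_filter, mem_univ, true_and]
      intro h hq
      apply h
      rw [hq, h3 _ _ hq]; simp

/-- For `n ≥ 1` agents with additive valuations over a finite item set, there is a
fractional partition of the items into `n` shares such that every agent values every share
exactly `1/n` of the total, and at most `n(n-1)` items are fractionally allocated. -/
theorem exists_balanced_fractional_partition {ι : Type*} [Fintype ι] [DecidableEq ι]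
    (n : ℕ) (hn : 1 ≤ n) (v : Fin n → ι → ℝ) (hv : ∀ i g, 0 ≤ v i g) :
    ∃ x : Fin n → ι → ℝ,
      (∀ j g, 0 ≤ x j g ∧ x j g ≤ 1) ∧
      (∀ g, ∑ j, x j g = 1) ∧
      (∀ i j : Fin n, ∑ g, v i g * x j g = (∑ g, v i g) / n) ∧
      ({g : ι | ∃ j, 0 < x j g ∧ x j g < 1}.ncard ≤ n * (n - 1)) := by
  have hn0 : (n : ℝ) ≠ 0 := by positivity
  have key : ∀ k (x : Fin n → ι → ℝ), FeasPart v x →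
      (univ.filter (fun p : Fin n × ι => x p.1 p.2 ≠ 0)).card = k →
      ∃ x : Fin n → ι → ℝ, FeasPart v x ∧
      (univ.filter (fun p : Fin n × ι => x p.1 p.2 ≠ 0)).card ≤ Fintype.card ι + n * (n - 1) := by
    intro k
    induction k using Nat.strong_induction_on with
    | _ k ih =>
      intro x hx hk
      by_cases hc : (univ.filter (fun p : Fin n × ι => x p.1 p.2 ≠ 0)).card ≤
          Fintype.card ι + n * (n - 1)
      · exact ⟨x, hx, hc⟩
      · obtain ⟨x', hx', hlt⟩ := exists_smaller_support n hn v x hx (not_le.1 hc)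
        exact ih _ (hk ▸ hlt) x' hx' rfl
  obtain ⟨x, ⟨f1, f2, f3⟩, hc⟩ := key _ (fun _ _ => 1 / n)
    ⟨fun _ _ => by positivity, fun g => by simp [hn0], fun i j => by
      rw [← Finset.sum_mul]; ring⟩ rfl
  refine ⟨x, fun j g => ⟨f1 j g, ?_⟩, f2, f3, ?_⟩
  · rw [← f2 g]
    exact Finset.single_le_sum (f := fun j => x j g) (fun j _ => f1 j g) (mem_univ j)
  · classical
    have hset : {g : ι | ∃ j, 0 < x j g ∧ x j g < 1} =
        ((univ.filter (fun g => ∃ j, 0 < x j g ∧ x j g < 1) : Finset ι) : Set ι) := by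
      ext; simp
    rw [hset, Set.ncard_coe_finset]
    have hcard : (univ.filter (fun p : Fin n × ι => x p.1 p.2 ≠ 0)).card =
        ∑ g, (univ.filter (fun j : Fin n => x j g ≠ 0)).card := by
      simp only [Finset.card_filter, Fintype.sum_prod_type]
      rw [Finset.sum_comm]
    have hle : ∑ g : ι, (1 + if (∃ j, 0 < x j g ∧ x j g < 1) then 1 else 0) ≤
        ∑ g, (univ.filter (fun j : Fin n => x j g ≠ 0)).card := by
      apply Finset.sum_le_sum
      intro g _
      split_ifs with h
      · obtain ⟨j, hj0, hj1⟩ := h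
        by_contra hlt
        have hle1 : (univ.filter (fun j : Fin n => x j g ≠ 0)).card ≤ 1 := by omega
        rw [Finset.card_le_one] at hle1
        have := Finset.sum_eq_single (f := fun j => x j g) (s := univ) j (by
          intro b _ hb
          by_contra hb0
          exact hb (hle1 b (by simpa using hb0) j (by simpa using hj0.ne'))) (by simp)
        have := f2 g
        linarith
      · have : 0 < (univ.filter (fun j : Fin n => x j g ≠ 0)).card := by
          rw [Finset.card_pos]
          obtain ⟨j, _, hj⟩ := Finset.exists_ne_zero_of_sum_ne_zero
            (s := univ) (f := fun j => x j g) (by rw [f2 g]; exact one_ne_zero)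
          exact ⟨j, by simpa using hj⟩
        omega
    rw [Finset.sum_add_distrib, ← Finset.card_filter] at hle
    simp only [sum_const, card_univ, smul_eq_mul, mul_one] at hle
    omega
end

section
/- For any n agents with additive valuations over a finite set M of indivisible items, there exists a finite probability distribution over allocations such that every allocation (A_1,…,A_n) in its support satisfies both PROP1 and v_i(A_i) ≥ (1/n)·MMS_i for every agent i, and under which every item is allocated to every agent with probability exactly 1/n. -/
open Finset

/-- The maximin share of an additive valuation `v` over `n` bundles: the maximum, over all
ordered partitions of the items (encoded by assignments `f` of items to bundles), of the
minimum bundle value. -/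
noncomputable def mms (n : ℕ) {m : ℕ} (v : Fin m → ℝ) : ℝ :=
  ⨆ f : Fin m → Fin n, ⨅ t : Fin n, ∑ g ∈ Finset.univ.filter (fun g => f g = t), v g

/-- The allocation `A` is PROP1 for agent `i`: either agent `i` already gets a proportional
share, or adding some single item `g ∉ A i` to her bundle yields at least `vᵢ(M)/n`. -/
def Prop1For {n m : ℕ} (v : Fin n → Fin m → ℝ) (A : Fin n → Finset (Fin m))
    (i : Fin n) : Prop :=
  ((∑ g', v i g') / n ≤ ∑ g ∈ A i, v i g) ∨
    ∃ g, g ∉ A i ∧ (∑ g', v i g') / n ≤ ∑ g' ∈ insert g (A i), v i g'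

lemma exists_sorted_s12 {T n : ℕ} (w : Fin T × Fin n → ℝ) :
    ∃ e : Fin T × Fin n ≃ Fin T × Fin n,
      (∀ t t' a a', t < t' → w (e (t', a')) ≤ w (e (t, a))) ∧
      (∀ t a a', a ≤ a' → w (e (t, a')) ≤ w (e (t, a))) := by
  let f : Fin (T * n) → ℝ := fun x => - w (finProdFinEquiv.symm x)
  have hf := Tuple.monotone_sort f
  refine ⟨(finProdFinEquiv.trans (Tuple.sort f)).trans finProdFinEquiv.symm, ?_, ?_⟩
  · intro t t' a a' h
    have h1 : finProdFinEquiv (t, a) ≤ finProdFinEquiv (t', a') := by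
      rw [Fin.le_def]
      simp only [finProdFinEquiv_apply_val]
      have h2 : (t : ℕ) + 1 ≤ t' := h
      have h3 := Nat.mul_le_mul_left n h2
      have := a.2
      nlinarith
    have := hf h1
    simpa [f] using this
  · intro t a a' h
    have h1 : finProdFinEquiv (t, a) ≤ finProdFinEquiv (t, a') := by
      rw [Fin.le_def]
      simp only [finProdFinEquiv_apply_val]
      have h2 : (a : ℕ) ≤ a' := h
      omega
    have := hf h1
    simpa [f] using this

lemma sum_hi_le {m : ℕ} (h x : Fin (m + 1) → ℝ) (hx : ∀ t, 0 ≤ x t)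
    (hs : ∀ t : Fin m, h t.succ ≤ x t.castSucc) : ∑ t, h t ≤ ∑ t, x t + h 0 := by
  rw [Fin.sum_univ_succ h, Fin.sum_univ_castSucc x]
  have := Finset.sum_le_sum (s := univ) (fun t _ => hs t)
  have := hx (Fin.last m)
  linarith

lemma prop1_choice (m : ℕ) : ∀ (h x : Fin (m + 1) → ℝ) (P : Fin (m + 1) → Prop),
    (∀ t, 0 ≤ x t) → (∀ t : Fin m, h t.succ ≤ x t.castSucc) → (∀ t, P t → x t = h t) →
    (∑ t, h t ≤ ∑ t, x t) ∨ ∃ s, ¬ P s ∧ ∑ t, h t ≤ ∑ t, x t + h s := by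
  induction m with
  | zero =>
    intro h x P hx hs hP
    by_cases h0 : P 0
    · left; simp [hP 0 h0]
    · exact Or.inr ⟨0, h0, sum_hi_le h x hx hs⟩
  | succ m ih =>
    intro h x P hx hs hP
    by_cases h0 : P 0
    · rw [Fin.sum_univ_succ h, Fin.sum_univ_succ x, hP 0 h0]
      rcases ih (fun t => h t.succ) (fun t => x t.succ) (fun t => P t.succ) (fun t => hx _)
        (fun t => hs t.succ) (fun t => hP _) with h1 | ⟨s, h1, h2⟩
      · left; linarith
      · right; exact ⟨s.succ, h1, by linarith⟩
    · exact Or.inr ⟨0, h0, sum_hi_le h x hx hs⟩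

lemma mms_numeric {m k : ℕ} (u : Fin (m + 1) → Fin (k + 1) → ℝ) (hu : ∀ t a, 0 ≤ u t a)
    (h1 : ∀ t t' a a', t < t' → u t' a' ≤ u t a) (h2 : ∀ t a a', a ≤ a' → u t a' ≤ u t a)
    (c : Fin (m + 1) → Fin (k + 1)) :
    u 0 (Fin.last k) + ∑ t : Fin m, ∑ a, u t.succ a ≤ (k + 1) * ∑ t, u t (c t) := by
  have key : ∀ t : Fin m, ∑ a, u t.succ a ≤
      u t.succ (c t.succ) + k * u t.castSucc (c t.castSucc) := by
    intro t
    rw [Fin.sum_univ_castSucc]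
    have : ∑ a : Fin k, u t.succ a.castSucc ≤ ∑ a : Fin k, u t.castSucc (c t.castSucc) :=
      Finset.sum_le_sum (fun a _ => h1 _ _ _ _ Fin.castSucc_lt_succ)
    simp at this
    have := h2 t.succ (c t.succ) (Fin.last k) (Fin.le_last _)
    linarith
  have hs := Finset.sum_le_sum (s := univ) (fun t _ => key t)
  rw [Finset.sum_add_distrib, ← Finset.mul_sum] at hs
  have e1 := Fin.sum_univ_succ (fun t => u t (c t))
  have e2 := Fin.sum_univ_castSucc (fun t => u t (c t))
  have h0 := h2 0 (c 0) (Fin.last k) (Fin.le_last _)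
  have hl := mul_nonneg (Nat.cast_nonneg (α := ℝ) k) (hu (Fin.last m) (c (Fin.last m)))
  have : (k : ℝ) * ∑ t, u t (c t) = k * ∑ t : Fin m, u t.castSucc (c t.castSucc)
    + k * u (Fin.last m) (c (Fin.last m)) := by rw [e2]; ring
  linarith

lemma mms_bound {m k : ℕ} (v : Fin m → ℝ) (w : Fin (m + 1) × Fin (k + 1) → ℝ)
    (hw : ∀ x, 0 ≤ w x)
    (J : Fin m → Fin (m + 1) × Fin (k + 1)) (hJ : Function.Injective J)
    (hwJ : ∀ g, w (J g) = v g) (hw0 : ∀ x ∉ Set.range J, w x = 0)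
    (e : Fin (m + 1) × Fin (k + 1) ≃ Fin (m + 1) × Fin (k + 1)) :
    mms (k + 1) v ≤ w (e (0, Fin.last k)) + ∑ t : Fin m, ∑ a, w (e (t.succ, a)) := by
  unfold mms
  refine ciSup_le fun f => ?_
  let F : Fin (m + 1) × Fin (k + 1) → Fin (k + 1) := Function.extend J f (fun _ => 0)
  have hF : ∀ g, F (J g) = f g := fun g => hJ.extend_apply _ _ _
  have hns : ¬ Function.Surjective (fun a : Fin k => F (e (0, a.castSucc))) := by
    intro h
    have := Fintype.card_le_of_surjective _ h
    simp at this
  simp only [Function.Surjective, not_forall, not_exists] at hns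
  obtain ⟨b, hb⟩ := hns
  refine (ciInf_le (Set.finite_range _).bddBelow b).trans ?_
  rw [Finset.sum_filter]
  have e1 : ∑ g, (if f g = b then v g else 0) = ∑ x, (if F x = b then w x else 0) := by
    refine Fintype.sum_of_injective J hJ _ _ ?_ ?_
    · intro x hx; simp [hw0 x hx]
    · intro g; rw [hF, hwJ]
  rw [e1, ← Equiv.sum_comp e, Fintype.sum_prod_type, Fin.sum_univ_succ]
  refine add_le_add ?_ (Finset.sum_le_sum fun t _ => Finset.sum_le_sum fun a _ => ?_)
  · rw [Fin.sum_univ_castSucc, Finset.sum_eq_zero, zero_add]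
    · split_ifs
      · exact le_rfl
      · exact hw _
    · intro a _; rw [if_neg (hb a)]
  · split_ifs
    · exact le_rfl
    · exact hw _

lemma agent_lemma {m k : ℕ} (v : Fin m → ℝ) (hv : ∀ g, 0 ≤ v g)
    (J : Fin m → Fin (m + 1) × Fin (k + 1)) (hJ : Function.Injective J) :
    ∃ e : Fin (m + 1) × Fin (k + 1) ≃ Fin (m + 1) × Fin (k + 1),
      ∀ (A : Finset (Fin m)) (c : Fin (m + 1) → Fin (k + 1)),
        (∀ g, g ∈ A ↔ c (e.symm (J g)).1 = (e.symm (J g)).2) →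
        (((∑ g', v g') / ((k + 1 : ℕ) : ℝ) ≤ ∑ g ∈ A, v g) ∨
          ∃ g, g ∉ A ∧ (∑ g', v g') / ((k + 1 : ℕ) : ℝ) ≤ ∑ g' ∈ insert g A, v g') ∧
        mms (k + 1) v / ((k + 1 : ℕ) : ℝ) ≤ ∑ g ∈ A, v g := by
  let w : Fin (m + 1) × Fin (k + 1) → ℝ := Function.extend J v (fun _ => 0)
  have hwJ : ∀ g, w (J g) = v g := fun g => hJ.extend_apply _ _ _
  have hw0 : ∀ x ∉ Set.range J, w x = 0 := fun x hx =>
    Function.extend_apply' _ _ _ hx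
  have hw : ∀ x, 0 ≤ w x := by
    intro x
    by_cases hx : x ∈ Set.range J
    · obtain ⟨g, rfl⟩ := hx; rw [hwJ]; exact hv g
    · rw [hw0 x hx]
  obtain ⟨e, he1, he2⟩ := exists_sorted_s12 w
  refine ⟨e, fun A c hA => ?_⟩
  have hsum : ∑ g ∈ A, v g = ∑ t, w (e (t, c t)) := by
    have e1 : ∑ g, (if g ∈ A then v g else 0)
        = ∑ x, (if c (e.symm x).1 = (e.symm x).2 then w x else 0) := by
      refine Fintype.sum_of_injective J hJ _ _ ?_ ?_
      · intro x hx; simp [hw0 x hx]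
      · intro g; simp only [hA, hwJ]
    rw [Finset.sum_ite_mem, Finset.univ_inter] at e1
    rw [e1, ← Equiv.sum_comp e, Fintype.sum_prod_type]
    simp
  have htot : ∑ g, v g = ∑ t, ∑ a, w (e (t, a)) := by
    have e1 : ∑ g, v g = ∑ x, w x :=
      Fintype.sum_of_injective J hJ _ _ hw0 (fun g => (hwJ g).symm)
    rw [e1, ← Equiv.sum_comp e, Fintype.sum_prod_type]
  have hk : (0 : ℝ) < ((k + 1 : ℕ) : ℝ) := by positivity
  have hhi : ∑ g, v g ≤ ((k + 1 : ℕ) : ℝ) * ∑ t, w (e (t, 0)) := by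
    rw [htot, Finset.mul_sum]
    refine Finset.sum_le_sum fun t _ => ?_
    have := Finset.sum_le_sum (s := univ) (fun (a : Fin (k + 1)) _ => he2 t 0 a (Fin.zero_le _))
    simpa using this
  constructor
  · have hch := prop1_choice m (fun t => w (e (t, 0))) (fun t => w (e (t, c t)))
      (fun t => c t = 0) (fun t => hw _) (fun t => he1 _ _ _ _ Fin.castSucc_lt_succ)
      (fun t ht => by simp only [ht])
    rw [div_le_iff₀ hk]
    rcases hch with h | ⟨s, hs, h⟩
    · left
      rw [hsum]
      nlinarith
    · by_cases hr : e (s, 0) ∈ Set.range J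
      · right
        obtain ⟨g, hg⟩ := hr
        have hgA : g ∉ A := by
          rw [hA, hg]; simpa using hs
        refine ⟨g, hgA, ?_⟩
        rw [Finset.sum_insert hgA, hsum, div_le_iff₀ hk, ← hwJ, hg]
        nlinarith
      · left
        simp only [hw0 _ hr] at h
        rw [hsum]
        nlinarith
  · rw [div_le_iff₀ hk, hsum]
    have h1 := mms_bound v w hw J hJ hwJ hw0 e
    have h2 := mms_numeric (fun t a => w (e (t, a))) (fun t a => hw _) he1 he2 c
    push_cast
    linarith

lemma decomposition {T k : ℕ}
    (e : Fin (k + 1) → (Fin T × Fin (k + 1) ≃ Fin T × Fin (k + 1))) :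
    ∃ w : Equiv.Perm (Fin T × Fin (k + 1)) → ℝ, (∀ σ, 0 ≤ w σ) ∧ ∑ σ, w σ = 1 ∧
      ∀ t i x, ∑ σ, (if σ (t, i) = x then w σ else 0)
        = if ((e i).symm x).1 = t then 1 / ((k + 1 : ℕ) : ℝ) else 0 := by
  let M : Matrix (Fin T × Fin (k + 1)) (Fin T × Fin (k + 1)) ℝ := fun r x =>
    if ((e r.2).symm x).1 = r.1 then 1 / ((k + 1 : ℕ) : ℝ) else 0
  have hk : (((k + 1 : ℕ) : ℝ)) ≠ 0 := by positivity
  have hM : M ∈ doublyStochastic ℝ (Fin T × Fin (k + 1)) := by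
    rw [mem_doublyStochastic_iff_sum]
    refine ⟨?_, ?_, ?_⟩
    · intro r x; simp only [M]; split_ifs <;> positivity
    · rintro ⟨t, i⟩
      simp only [M]
      rw [← Equiv.sum_comp (e i), Fintype.sum_prod_type_right]
      simp only [Equiv.symm_apply_apply, Finset.sum_ite_eq', Finset.mem_univ, if_true,
        Finset.sum_const, Finset.card_univ, Fintype.card_fin, nsmul_eq_mul]
      field_simp
    · intro x
      simp only [M]
      rw [Fintype.sum_prod_type_right]
      simp only [Finset.sum_ite_eq, Finset.mem_univ, if_true,
        Finset.sum_const, Finset.card_univ, Fintype.card_fin, nsmul_eq_mul]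
      field_simp
  obtain ⟨w, h0, h1, h2⟩ := exists_eq_sum_perm_of_mem_doublyStochastic hM
  refine ⟨w, h0, h1, fun t i x => ?_⟩
  have h3 := congrFun (congrFun h2 (t, i)) x
  rw [Matrix.sum_apply] at h3
  simp only [M] at h3
  rw [← h3]
  refine Finset.sum_congr rfl fun σ _ => ?_
  simp [Matrix.smul_apply, Equiv.Perm.permMatrix, PEquiv.toMatrix_apply, eq_comm]

/-- For any `n` agents with additive valuations there is a finite distribution over
allocations, each simultaneously PROP1 and `1/n`-MMS, whose marginals give every item to
every agent with probability exactly `1/n`. -/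
theorem equal_division_PROP1_and_MMS_realizable (n m : ℕ) (hn : 1 ≤ n)
    (v : Fin n → Fin m → ℝ) (hv : ∀ i g, 0 ≤ v i g) :
    ∃ (K : ℕ) (p : Fin K → ℝ) (A : Fin K → Fin n → Finset (Fin m)),
      (∀ k, 0 ≤ p k) ∧ (∑ k, p k = 1) ∧
      (∀ k, IsPartition Finset.univ (A k)) ∧
      (∀ k, ∀ i, Prop1For v (A k) i) ∧
      (∀ k, ∀ i, mms n (v i) / n ≤ ∑ g ∈ A k i, v i g) ∧
      (∀ i g, ∑ k, (if g ∈ A k i then p k else 0) = 1 / n) := by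
  obtain ⟨k, rfl⟩ : ∃ k, n = k + 1 := ⟨n - 1, by omega⟩
  let J : Fin m → Fin (m + 1) × Fin (k + 1) := fun g => (g.castSucc, 0)
  have hJ : Function.Injective J := by
    intro a b h
    simpa [J] using h
  choose e he using fun i => agent_lemma (k := k) (v i) (hv i) J hJ
  obtain ⟨w, hw0, hw1, hw⟩ := decomposition e
  -- permutations in the support respect the block structure
  have hsupp : ∀ σ, 0 < w σ → ∀ t i, ((e i).symm (σ (t, i))).1 = t := by
    intro σ hσ t i
    by_contra hne
    have h := hw t i (σ (t, i))
    rw [if_neg hne, Finset.sum_eq_zero_iff_of_nonneg] at h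
    · have := h σ (Finset.mem_univ _)
      simp at this
      linarith
    · intro τ _
      split_ifs
      · exact hw0 τ
      · exact le_rfl
  let S := {σ : Equiv.Perm (Fin (m + 1) × Fin (k + 1)) // 0 < w σ}
  let q : S ≃ Fin (Fintype.card S) := Fintype.equivFin S
  let B : Equiv.Perm (Fin (m + 1) × Fin (k + 1)) → Fin (k + 1) → Finset (Fin m) := fun σ i =>
    Finset.univ.filter (fun g => (σ.symm (J g)).2 = i)
  have hS : ∀ f : Equiv.Perm (Fin (m + 1) × Fin (k + 1)) → ℝ, (∀ σ, w σ = 0 → f σ = 0) →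
      ∑ j, f (q.symm j).1 = ∑ σ, f σ := by
    intro f hf
    rw [Equiv.sum_comp q.symm (fun s : S => f s.1)]
    refine Fintype.sum_of_injective (fun s : S => s.1) Subtype.val_injective _ _ ?_ (fun _ => rfl)
    intro σ hσ
    apply hf
    by_contra hne
    exact hσ ⟨⟨σ, lt_of_le_of_ne (hw0 σ) (Ne.symm hne)⟩, rfl⟩
  have hB : ∀ σ, 0 < w σ → ∀ i g, g ∈ B σ i ↔ σ (((e i).symm (J g)).1, i) = J g := by
    intro σ hσ i g
    simp only [B, Finset.mem_filter, Finset.mem_univ, true_and]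
    constructor
    · intro h
      have h1 : σ ((σ.symm (J g)).1, i) = J g := by
        rw [← h]; simp
      have h2 := hsupp σ hσ (σ.symm (J g)).1 i
      rw [h1] at h2
      rw [h2, h1]
    · intro h
      rw [← h]; simp
  have hfair : ∀ σ, 0 < w σ → ∀ i, _ := fun σ hσ i =>
    he i (B σ i) (fun t => ((e i).symm (σ (t, i))).2) (by
      intro g
      rw [hB σ hσ i g]
      constructor
      · intro h
        simp only [h]
      · intro h
        apply (e i).symm.injective
        exact Prod.ext (hsupp σ hσ _ i) h)
  refine ⟨Fintype.card S, fun j => w (q.symm j).1, fun j => B (q.symm j).1, ?_, ?_, ?_, ?_, ?_, ?_⟩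
  · intro j; exact hw0 _
  · rw [hS w (fun _ h => h), hw1]
  · intro j
    refine ⟨fun i => Finset.subset_univ _, ?_, ?_⟩
    · intro a b hab
      rw [Finset.disjoint_left]
      intro g hg hg'
      simp only [B, Finset.mem_filter, Finset.mem_univ, true_and] at hg hg'
      exact hab (hg.symm.trans hg')
    · intro g _
      exact ⟨((q.symm j).1.symm (J g)).2, by simp [B]⟩
  · intro j i
    exact (hfair _ (q.symm j).2 i).1
  · intro j i
    exact (hfair _ (q.symm j).2 i).2
  · intro i g
    rw [hS (fun σ => if g ∈ B σ i then w σ else 0) (fun σ h => by simp [h])]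
    have h := hw ((e i).symm (J g)).1 i (J g)
    rw [if_pos rfl] at h
    rw [← h]
    refine Finset.sum_congr rfl fun σ _ => ?_
    rcases (hw0 σ).eq_or_lt with h0 | h0
    · simp [← h0]
    · simp only [hB σ h0 i g]
end

section
/- Let p = 1, q = 1/50, r = 0. For all positive integers u and v, with m = 200(u+v) items and two agents whose additive valuations assign each item a value in {p, q, r}, there is no fractional allocation rule F on such profiles that is truthful and such that, for every profile, the fractional allocation F(v_1,v_2) can be realized as a finite probability distribution (matching the marginal probabilities x_{ig} of F(v_1,v_2)) over allocations each of which is both Pareto-optimal among integral allocations and EF^{+u}_{-v}. -/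
open Finset

/-- The allocation `A` is Pareto-optimal among integral allocations. -/
def ParetoOptimal {n m : ℕ} (v : Fin n → Fin m → ℝ) (A : Fin n → Finset (Fin m)) : Prop :=
  ¬ ∃ B : Fin n → Finset (Fin m), IsPartition Finset.univ B ∧
      (∀ i, ∑ g ∈ A i, v i g ≤ ∑ g ∈ B i, v i g) ∧
      (∃ i, ∑ g ∈ A i, v i g < ∑ g ∈ B i, v i g)

/-- A valuation is tri-valued with values `1`, `1/50`, `0`. -/
def TriValued {m : ℕ} (w : Fin m → ℝ) : Prop :=
  ∀ g, w g = 1 ∨ w g = 1 / 50 ∨ w g = 0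

/-- Valuation with value `α` on `X` and `β` off `X`. -/
noncomputable def twoVal {m : ℕ} (X : Finset (Fin m)) (α β : ℝ) : Fin m → ℝ :=
  fun g => if g ∈ X then α else β

lemma twoVal_sum {m : ℕ} (X : Finset (Fin m)) (α β : ℝ) (f : Fin m → ℝ) :
    ∑ g, twoVal X α β g * f g = α * ∑ g ∈ X, f g + β * ∑ g ∈ Xᶜ, f g := by
  rw [← Finset.sum_add_sum_compl X, Finset.mul_sum, Finset.mul_sum]
  congr 1
  · refine Finset.sum_congr rfl fun g hg => ?_
    simp [twoVal, hg]
  · refine Finset.sum_congr rfl fun g hg => ?_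
    rw [Finset.mem_compl] at hg
    simp [twoVal, hg]

lemma twoVal_bundle {m : ℕ} (X S : Finset (Fin m)) (α β : ℝ) :
    ∑ g ∈ S, twoVal X α β g = α * ((S ∩ X).card : ℝ) + β * ((S ∩ Xᶜ).card : ℝ) := by
  have h : ∑ g ∈ S, twoVal X α β g = ∑ g, twoVal X α β g * (if g ∈ S then 1 else 0) := by
    simp
  rw [h, twoVal_sum]
  congr 2
  · rw [Finset.inter_comm]; simp
  · rw [Finset.inter_comm]; simp [← Finset.filter_mem_eq_inter]

lemma part_compl {m : ℕ} {A : Fin 2 → Finset (Fin m)} (h : IsPartition Finset.univ A) :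
    A 1 = (A 0)ᶜ := by
  ext g
  rw [Finset.mem_compl]
  constructor
  · intro h1 h0
    exact Finset.disjoint_left.mp (h.2.1 0 1 (by decide)) h0 h1
  · intro h0
    obtain ⟨i, hi⟩ := h.2.2 g (Finset.mem_univ g)
    fin_cases i
    · exact absurd hi h0
    · exact hi

lemma ef_bound {m : ℕ} {v : Fin 2 → Fin m → ℝ} {A : Fin 2 → Finset (Fin m)} {u w : ℕ}
    (h : EFpm Finset.univ v A u w) (i j : Fin 2) (h1 : ∀ g, v i g ≤ 1) :
    ∑ g ∈ A j, v i g ≤ ∑ g ∈ A i, v i g + (u + w : ℝ) := by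
  obtain ⟨Si, Sj, -, hd, hu, hs, hw, hle⟩ := h i j
  rw [Finset.sum_union hd.symm] at hle
  have e := Finset.sum_sdiff (f := v i) hs
  have b : ∀ S : Finset (Fin m), ∑ g ∈ S, v i g ≤ S.card := fun S => by
    have := Finset.sum_le_card_nsmul S (v i) 1 (fun g _ => h1 g)
    simpa using this
  have b1 := b Si
  have b2 := b Sj
  have hu' : (Si.card : ℝ) ≤ u := by exact_mod_cast hu
  have hw' : (Sj.card : ℝ) ≤ w := by exact_mod_cast hw
  linarith

lemma compl_partition {m : ℕ} (S : Finset (Fin m)) :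
    IsPartition Finset.univ ![S, Sᶜ] := by
  refine ⟨fun i => Finset.subset_univ _, ?_, ?_⟩
  · intro i j hij
    fin_cases i <;> fin_cases j <;> simp_all [disjoint_compl_right, disjoint_compl_left]
  · intro g _
    by_cases hg : g ∈ S
    · exact ⟨0, by simpa using hg⟩
    · exact ⟨1, by simpa using hg⟩

lemma po_swap {m : ℕ} {v : Fin 2 → Fin m → ℝ} {A : Fin 2 → Finset (Fin m)}
    (hp : IsPartition Finset.univ A) (h : ParetoOptimal v A) {g k : Fin m}
    (hk : k ∈ A 0) (hg : g ∉ A 0) (a : v 0 k ≤ v 0 g) (b : v 1 g ≤ v 1 k)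
    (c : v 0 k < v 0 g ∨ v 1 g < v 1 k) : False := by
  apply h
  have hgk : g ∉ (A 0).erase k := fun h => hg (Finset.mem_of_mem_erase h)
  have e0 : ∑ x ∈ insert g ((A 0).erase k), v 0 x = ∑ x ∈ A 0, v 0 x + v 0 g - v 0 k := by
    rw [Finset.sum_insert hgk, ← Finset.add_sum_erase _ _ hk]; ring
  have e1 : ∑ x ∈ (insert g ((A 0).erase k))ᶜ, v 1 x
      = ∑ x ∈ A 1, v 1 x + v 1 k - v 1 g := by
    have t1 := Finset.sum_add_sum_compl (insert g ((A 0).erase k)) (v 1)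
    have t2 := Finset.sum_add_sum_compl (A 0) (v 1)
    have t3 := Finset.add_sum_erase _ (v 1) hk
    rw [Finset.sum_insert hgk] at t1
    rw [part_compl hp]
    linarith
  refine ⟨![insert g ((A 0).erase k), (insert g ((A 0).erase k))ᶜ], compl_partition _, ?_, ?_⟩
  · rw [Fin.forall_fin_two]
    simp only [Matrix.cons_val_zero, Matrix.cons_val_one]
    rw [e0, e1]
    constructor <;> linarith
  · rw [Fin.exists_fin_two]
    simp only [Matrix.cons_val_zero, Matrix.cons_val_one]
    rw [e0, e1]
    rcases c with c | c
    · left; linarith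
    · right; linarith

lemma po_give {m : ℕ} {v : Fin 2 → Fin m → ℝ} {A : Fin 2 → Finset (Fin m)}
    (hp : IsPartition Finset.univ A) (h : ParetoOptimal v A) {k : Fin m}
    (hk : k ∈ A 0) (a : v 0 k = 0) (b : 0 < v 1 k) : False := by
  apply h
  have e0 := Finset.add_sum_erase _ (v 0) hk
  have e1 : ∑ x ∈ ((A 0).erase k)ᶜ, v 1 x = ∑ x ∈ A 1, v 1 x + v 1 k := by
    have t1 := Finset.sum_add_sum_compl ((A 0).erase k) (v 1)
    have t2 := Finset.sum_add_sum_compl (A 0) (v 1)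
    have t3 := Finset.add_sum_erase _ (v 1) hk
    rw [part_compl hp]
    linarith
  refine ⟨![(A 0).erase k, ((A 0).erase k)ᶜ], compl_partition _, ?_, ?_⟩
  · rw [Fin.forall_fin_two]
    simp only [Matrix.cons_val_zero, Matrix.cons_val_one]
    rw [e1]
    constructor <;> linarith
  · refine ⟨1, ?_⟩
    simp only [Matrix.cons_val_one, Matrix.cons_val_zero]
    rw [e1]
    linarith

/-- Linear inequalities on the counts of agent `0` pass to the expectation. -/
lemma avg_le {m K : ℕ} (X : Finset (Fin m)) (p : Fin K → ℝ) (A : Fin K → Fin 2 → Finset (Fin m))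
    (hp : ∀ k, 0 ≤ p k) (h1 : ∑ k, p k = 1) (f : Fin m → ℝ)
    (hf : ∀ g, ∑ k, (if g ∈ A k 0 then p k else 0) = f g) (α β c : ℝ)
    (h : ∀ k, α * ((A k 0 ∩ X).card : ℝ) + β * ((A k 0 ∩ Xᶜ).card : ℝ) ≤ c) :
    α * ∑ g ∈ X, f g + β * ∑ g ∈ Xᶜ, f g ≤ c := by
  have key : ∑ g, twoVal X α β g * f g = ∑ k, p k * ∑ g ∈ A k 0, twoVal X α β g := by
    simp_rw [← hf, Finset.mul_sum]
    rw [Finset.sum_comm]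
    refine Finset.sum_congr rfl fun k _ => ?_
    rw [← Finset.sum_filter_add_sum_filter_not Finset.univ (fun g => g ∈ A k 0)]
    rw [Finset.sum_eq_zero (s := Finset.univ.filter (fun g => g ∉ A k 0)), add_zero]
    · rw [Finset.sum_filter, ← Finset.sum_filter, Finset.filter_univ_mem]
      refine Finset.sum_congr rfl fun g hg => ?_
      rw [if_pos hg, mul_comm]
    · intro g hg
      simp only [Finset.mem_filter] at hg
      simp [hg.2]
  rw [← twoVal_sum, key]
  calc ∑ k, p k * ∑ g ∈ A k 0, twoVal X α β g ≤ ∑ k, p k * c := by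
        refine Finset.sum_le_sum fun k _ => mul_le_mul_of_nonneg_left ?_ (hp k)
        rw [twoVal_bundle]; exact h k
    _ = c := by rw [← Finset.sum_mul, h1, one_mul]

lemma twoVal_tri {m : ℕ} (X : Finset (Fin m)) {α β : ℝ} (ha : α = 1 ∨ α = 1 / 50 ∨ α = 0)
    (hb : β = 1 ∨ β = 1 / 50 ∨ β = 0) : TriValued (twoVal X α β) := by
  intro g
  unfold twoVal
  split_ifs
  · exact ha
  · exact hb

lemma tri_bounds {m : ℕ} {v : Fin m → ℝ} (h : TriValued v) (g : Fin m) :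
    0 ≤ v g ∧ v g ≤ 1 := by
  rcases h g with h | h | h <;> rw [h] <;> norm_num

lemma card_split {m N : ℕ} (X S : Finset (Fin m)) (hX : X.card = N) :
    ((S ∩ X).card : ℝ) + ((Sᶜ ∩ X).card : ℝ) = N := by
  have h : (S ∩ X).card + (Sᶜ ∩ X).card = N := by
    rw [← hX, Finset.inter_comm S, Finset.inter_comm Sᶜ, ← Finset.sdiff_eq_inter_compl]
    exact Finset.card_inter_add_card_sdiff X S
  exact_mod_cast h

/-- EF bounds in terms of the counts of agent `0`. -/
lemma ef_counts {m N : ℕ} (X : Finset (Fin m)) (hX : X.card = N) (hY : Xᶜ.card = N)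
    {α β γ δ : ℝ} {A : Fin 2 → Finset (Fin m)} {u w : ℕ}
    (h0 : TriValued (twoVal X α β)) (h1 : TriValued (twoVal X γ δ))
    (hp : IsPartition Finset.univ A)
    (h : EFpm Finset.univ ![twoVal X α β, twoVal X γ δ] A u w) :
    (α * (N : ℝ) + β * N - (u + w)
      ≤ 2 * (α * ((A 0 ∩ X).card : ℝ) + β * ((A 0 ∩ Xᶜ).card : ℝ))) ∧
    (2 * (γ * ((A 0 ∩ X).card : ℝ) + δ * ((A 0 ∩ Xᶜ).card : ℝ))
      ≤ γ * (N : ℝ) + δ * N + (u + w)) := by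
  have e0 := ef_bound h 0 1 (fun g => (tri_bounds h0 g).2)
  have e1 := ef_bound h 1 0 (fun g => (tri_bounds h1 g).2)
  simp only [Matrix.cons_val_zero, Matrix.cons_val_one] at e0 e1
  rw [part_compl hp, twoVal_bundle, twoVal_bundle] at e0 e1
  have c1 := card_split X (A 0) hX
  have c2 := card_split Xᶜ (A 0) hY
  have c1' : (((A 0)ᶜ ∩ X).card : ℝ) = N - ((A 0 ∩ X).card : ℝ) := by linarith
  have c2' : (((A 0)ᶜ ∩ Xᶜ).card : ℝ) = N - ((A 0 ∩ Xᶜ).card : ℝ) := by linarith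
  rw [c1', c2'] at e0 e1
  constructor <;> linarith


/-- With `p = 1`, `q = 1/50`, `r = 0`: for all positive `u, v` and `m = 200(u+v)` items and
two agents with tri-valued additive valuations, there is no truthful fractional allocation
rule whose output is always realizable as a finite probability distribution over allocations
each of which is Pareto-optimal (among integral allocations) and EF^{+u}_{-v}. -/
theorem no_truthful_PO_EFpm_trivalued (u w : ℕ) (hu : 0 < u) (hw : 0 < w) :
    ¬ ∃ F : (Fin 2 → Fin (200 * (u + w)) → ℝ) → (Fin 2 → Fin (200 * (u + w)) → ℝ),
      -- F outputs fractional allocations on tri-valued profiles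
      (∀ val : Fin 2 → Fin (200 * (u + w)) → ℝ, (∀ i, TriValued (val i)) →
        (∀ i g, 0 ≤ F val i g) ∧ (∀ g, ∑ i, F val i g = 1)) ∧
      -- F is truthful (in expectation) on tri-valued profiles
      (∀ val : Fin 2 → Fin (200 * (u + w)) → ℝ, (∀ i, TriValued (val i)) →
        ∀ i : Fin 2, ∀ v' : Fin (200 * (u + w)) → ℝ, TriValued v' →
          ∑ g, val i g * F (Function.update val i v') i g ≤
            ∑ g, val i g * F val i g) ∧
      -- the output of F is realizable over Pareto-optimal EF^{+u}_{-w} allocations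
      (∀ val : Fin 2 → Fin (200 * (u + w)) → ℝ, (∀ i, TriValued (val i)) →
        ∃ (K : ℕ) (p : Fin K → ℝ) (A : Fin K → Fin 2 → Finset (Fin (200 * (u + w)))),
          (∀ k, 0 ≤ p k) ∧ (∑ k, p k = 1) ∧
          (∀ k, IsPartition Finset.univ (A k)) ∧
          (∀ k, ParetoOptimal val (A k)) ∧
          (∀ k, EFpm Finset.univ val (A k) u w) ∧
          (∀ i g, ∑ k, (if g ∈ A k i then p k else 0) = F val i g)) := by
  rintro ⟨F, hF, hT, hR⟩
  obtain ⟨X, hX, hY⟩ : ∃ X : Finset (Fin (200 * (u + w))),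
      X.card = 100 * (u + w) ∧ Xᶜ.card = 100 * (u + w) := by
    obtain ⟨X, -, hX⟩ := Finset.exists_subset_card_eq
      (s := (Finset.univ : Finset (Fin (200 * (u + w))))) (n := 100 * (u + w))
      (by rw [Finset.card_univ, Fintype.card_fin]; omega)
    refine ⟨X, hX, ?_⟩
    rw [Finset.card_compl, Fintype.card_fin, hX]; omega
  set s : ℝ := (u + w : ℝ) with hs
  have hspos : 0 < s := by
    have : (0 : ℝ) < u := by exact_mod_cast hu
    have : (0 : ℝ) < w := by exact_mod_cast hw
    linarith
  have hN : ((100 * (u + w) : ℕ) : ℝ) = 100 * s := by push_cast; rfl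
  have tA : TriValued (twoVal X 1 0) := twoVal_tri X (by norm_num) (by norm_num)
  have tB : TriValued (twoVal X 1 (1 / 50)) := twoVal_tri X (by norm_num) (by norm_num)
  have tB' : TriValued (twoVal X (1 / 50) 1) := twoVal_tri X (by norm_num) (by norm_num)
  have tC : TriValued (twoVal X 1 1) := twoVal_tri X (by norm_num) (by norm_num)
  have pr : ∀ {P Q : Fin (200 * (u + w)) → ℝ}, TriValued P → TriValued Q →
      ∀ i, TriValued ((![P, Q] : Fin 2 → Fin (200 * (u + w)) → ℝ) i) := by
    intro P Q hP hQ i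
    fin_cases i
    · exact hP
    · exact hQ
  -- expected numbers of items of each kind given to agent 0
  have t0 : ∀ {α β : ℝ} {P Q : Fin (200 * (u + w)) → ℝ}, TriValued (twoVal X α β) →
      TriValued P → TriValued Q →
      α * ∑ g ∈ X, F ![P, Q] 0 g + β * ∑ g ∈ Xᶜ, F ![P, Q] 0 g ≤
      α * ∑ g ∈ X, F ![twoVal X α β, Q] 0 g + β * ∑ g ∈ Xᶜ, F ![twoVal X α β, Q] 0 g := by
    intro α β P Q h hP hQ
    have := hT ![twoVal X α β, Q] (pr h hQ) 0 P hP
    have e : Function.update ![twoVal X α β, Q] 0 P = ![P, Q] := by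
      ext i g; fin_cases i <;> simp
    rw [e] at this
    simp only [Matrix.cons_val_zero] at this
    rwa [twoVal_sum, twoVal_sum] at this
  have t1 : ∀ {α β : ℝ} {P Q : Fin (200 * (u + w)) → ℝ}, TriValued (twoVal X α β) →
      TriValued P → TriValued Q →
      α * ∑ g ∈ X, F ![P, twoVal X α β] 0 g + β * ∑ g ∈ Xᶜ, F ![P, twoVal X α β] 0 g ≤
      α * ∑ g ∈ X, F ![P, Q] 0 g + β * ∑ g ∈ Xᶜ, F ![P, Q] 0 g := by
    intro α β P Q h hP hQ
    have := hT ![P, twoVal X α β] (pr hP h) 1 Q hQ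
    have e : Function.update ![P, twoVal X α β] 1 Q = ![P, Q] := by
      ext i g; fin_cases i <;> simp
    rw [e] at this
    simp only [Matrix.cons_val_one, Matrix.cons_val_zero] at this
    have f1 : ∀ {R : Fin (200 * (u + w)) → ℝ}, TriValued R → ∀ g,
        F ![P, R] 1 g = 1 - F ![P, R] 0 g := by
      intro R hR g
      have := (hF ![P, R] (pr hP hR)).2 g
      rw [Fin.sum_univ_two] at this
      linarith
    simp only [f1 h, f1 hQ] at this
    rw [twoVal_sum, twoVal_sum] at this
    simp only [Finset.sum_sub_distrib] at this
    linarith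
  have nonneg : ∀ {P Q : Fin (200 * (u + w)) → ℝ}, TriValued P → TriValued Q →
      ∀ S : Finset (Fin (200 * (u + w))), 0 ≤ ∑ g ∈ S, F ![P, Q] 0 g := by
    intro P Q hP hQ S
    exact Finset.sum_nonneg fun g _ => (hF _ (pr hP hQ)).1 0 g
  -- profile (A,B)
  have AB : 1 * ∑ g ∈ X, F ![twoVal X 1 0, twoVal X 1 (1 / 50)] 0 g
      + 1 * ∑ g ∈ Xᶜ, F ![twoVal X 1 0, twoVal X 1 (1 / 50)] 0 g ≤ 51.5 * s := by
    obtain ⟨K, p, A, hp, h1, hP, hPO, hEF, hm⟩ := hR _ (pr tA tB)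
    refine avg_le X p A hp h1 _ (hm 0) _ _ _ fun k => ?_
    have e := (ef_counts X hX hY tA tB (hP k) (hEF k)).2
    have z : (A k 0 ∩ Xᶜ).card = 0 := by
      rw [Finset.card_eq_zero, Finset.eq_empty_iff_forall_notMem]
      intro g hg
      rw [Finset.mem_inter, Finset.mem_compl] at hg
      refine po_give (hP k) (hPO k) hg.1 ?_ ?_ <;> simp [twoVal, hg.2]
    rw [hN, z, ← hs] at e
    rw [z]
    push_cast at e ⊢
    linarith
  -- profile (B,C)
  have BC : 0 * ∑ g ∈ X, F ![twoVal X 1 (1 / 50), twoVal X 1 1] 0 g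
      + 1 * ∑ g ∈ Xᶜ, F ![twoVal X 1 (1 / 50), twoVal X 1 1] 0 g ≤ 0.5 * s := by
    obtain ⟨K, p, A, hp, h1, hP, hPO, hEF, hm⟩ := hR _ (pr tB tC)
    refine avg_le X p A hp h1 _ (hm 0) _ _ _ fun k => ?_
    have e := (ef_counts X hX hY tB tC (hP k) (hEF k)).2
    rw [hN, ← hs] at e
    by_cases hsub : X ⊆ A k 0
    · rw [Finset.inter_eq_right.mpr hsub, hX, hN] at e
      linarith
    · obtain ⟨g, hgX, hgA⟩ := Finset.not_subset.mp hsub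
      have z : (A k 0 ∩ Xᶜ).card = 0 := by
        rw [Finset.card_eq_zero, Finset.eq_empty_iff_forall_notMem]
        intro x hx
        rw [Finset.mem_inter, Finset.mem_compl] at hx
        refine po_swap (hP k) (hPO k) hx.1 hgA ?_ ?_ (Or.inl ?_) <;>
          simp [twoVal, hx.2, hgX] <;> norm_num
      rw [z]
      push_cast
      linarith
  -- profile (C, Bprime)
  have CB : (-1) * ∑ g ∈ X, F ![twoVal X 1 1, twoVal X (1 / 50) 1] 0 g
      + 0 * ∑ g ∈ Xᶜ, F ![twoVal X 1 1, twoVal X (1 / 50) 1] 0 g ≤ -(99.5 * s) := by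
    obtain ⟨K, p, A, hp, h1, hP, hPO, hEF, hm⟩ := hR _ (pr tC tB')
    refine avg_le X p A hp h1 _ (hm 0) _ _ _ fun k => ?_
    have e := (ef_counts X hX hY tC tB' (hP k) (hEF k)).1
    rw [hN, ← hs] at e
    by_cases hsub : X ⊆ A k 0
    · rw [Finset.inter_eq_right.mpr hsub, hX, hN]
      linarith
    · obtain ⟨g, hgX, hgA⟩ := Finset.not_subset.mp hsub
      have z : (A k 0 ∩ Xᶜ).card = 0 := by
        rw [Finset.card_eq_zero, Finset.eq_empty_iff_forall_notMem]
        intro x hx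
        rw [Finset.mem_inter, Finset.mem_compl] at hx
        refine po_swap (hP k) (hPO k) hx.1 hgA ?_ ?_ (Or.inr ?_) <;>
          simp [twoVal, hx.2, hgX] <;> norm_num
      rw [z] at e
      push_cast at e
      linarith
  have i1 := t1 tC tA tB
  have i2 := t0 tA tB tC
  have i3 := t1 tB' tB tC
  have i4 := t0 tB tC tB'
  have n1 := nonneg tA tC Xᶜ
  have n2 := nonneg tB tB' X
  have n3 := nonneg tB tB' Xᶜ
  have n4 := nonneg tC tB' Xᶜ
  linarith
end
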